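/- Let f : ℝ² → ℝ² be a C^∞ map with f(0)=0 of the form f = (x, x²y + y⁴ + Σ_{i+j≥5} a_{ij} x^i y^j). Then a_{05} ≠ 0 if and only if f is A-equivalent to (x,y) ↦ (x, x²y + y⁴ + εy⁵) for some ε ∈ {1,−1}, and a_{05} = 0 if and only if f is A-equivalent to (x,y) ↦ (x, x²y + y⁴). Moreover, for all real c and d, the maps (x,y) ↦ (x, x²y + y⁴ + cxy⁴ + dy⁵) and (x,y) ↦ (x, x²y + y⁴ + dy⁵) have A⁵-equivalent 5-jets at the origin. -/

import Mathlib

open Filter Topology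

noncomputable section

/-- Directional derivative of a scalar function. -/
def dop (v : ℝ × ℝ) (g : ℝ × ℝ → ℝ) : ℝ × ℝ → ℝ :=
  fun p => fderiv ℝ g p v

/-- Partial derivative operator in the first coordinate. -/
def pdx : (ℝ × ℝ → ℝ) → ℝ × ℝ → ℝ := dop (1, 0)

/-- Partial derivative operator in the second coordinate. -/
def pdy : (ℝ × ℝ → ℝ) → ℝ × ℝ → ℝ := dop (0, 1)

/-- Taylor coefficient `a_{ij} = ∂_x^i ∂_y^j g(0,0) / (i! j!)` of `g` at the origin. -/
def tcoeff (g : ℝ × ℝ → ℝ) (i j : ℕ) : ℝ :=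
  (pdx^[i] (pdy^[j] g)) 0 / (Nat.factorial i * Nat.factorial j)

/-- The Jacobian determinant `λ_f` of a map `f : ℝ² → ℝ²`. -/
def jacDet (f : ℝ × ℝ → ℝ × ℝ) (p : ℝ × ℝ) : ℝ :=
  (fderiv ℝ f p (1, 0)).1 * (fderiv ℝ f p (0, 1)).2 -
    (fderiv ℝ f p (1, 0)).2 * (fderiv ℝ f p (0, 1)).1

/-- `f` has corank one at `0` : the derivative of `f` at `0` has rank one. -/
def CorankOne (f : ℝ × ℝ → ℝ × ℝ) : Prop :=
  LinearMap.rank ((fderiv ℝ f 0).toLinearMap) = 1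

/-- `η` is a null vector field for `f` near `0`. -/
def IsNullVF (f η : ℝ × ℝ → ℝ × ℝ) : Prop :=
  η 0 ≠ 0 ∧ ∃ U ∈ 𝓝 (0 : ℝ × ℝ),
    ContDiffOn ℝ (⊤ : ℕ∞) η U ∧ ∀ p ∈ U, jacDet f p = 0 → fderiv ℝ f p (η p) = 0

/-- The derivative `(ηg)(p) = Dg(p)(η(p))` of `g` along the vector field `η`. -/
def etaD (η : ℝ × ℝ → ℝ × ℝ) (g : ℝ × ℝ → ℝ) : ℝ × ℝ → ℝ :=
  fun p => fderiv ℝ g p (η p)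

/-- The iterated derivative `η^k g` along the vector field `η`. -/
def etaIter (η : ℝ × ℝ → ℝ × ℝ) : ℕ → (ℝ × ℝ → ℝ) → ℝ × ℝ → ℝ
  | 0, g => g
  | k + 1, g => etaD η (etaIter η k g)

/-- The Hessian matrix of second partial derivatives of `g` at `0`. -/
def hess (g : ℝ × ℝ → ℝ) : Matrix (Fin 2) (Fin 2) ℝ :=
  !![pdx (pdx g) 0, pdx (pdy g) 0; pdy (pdx g) 0, pdy (pdy g) 0]

/-- `A^r`-equivalence of the `r`-jets at `0` of two map-germs `(ℝ²,0) → (ℝ²,0)`. -/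
def JetEquiv (r : ℕ) (f g : ℝ × ℝ → ℝ × ℝ) : Prop :=
  ∃ φ ψ : ℝ × ℝ → ℝ × ℝ,
    ContDiff ℝ (⊤ : ℕ∞) φ ∧ ContDiff ℝ (⊤ : ℕ∞) ψ ∧ φ 0 = 0 ∧ ψ 0 = 0 ∧
    Function.Bijective (⇑(fderiv ℝ φ 0)) ∧ Function.Bijective (⇑(fderiv ℝ ψ 0)) ∧
    ∀ i ≤ r, iteratedFDeriv ℝ i (ψ ∘ f ∘ φ) 0 = iteratedFDeriv ℝ i g 0

/-- `A`-equivalence of two map-germs `(ℝ²,0) → (ℝ²,0)`. -/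
def AEquiv (f g : ℝ × ℝ → ℝ × ℝ) : Prop :=
  ∃ φ ψ : ℝ × ℝ → ℝ × ℝ,
    ContDiff ℝ (⊤ : ℕ∞) φ ∧ ContDiff ℝ (⊤ : ℕ∞) ψ ∧ φ 0 = 0 ∧ ψ 0 = 0 ∧
    Function.Bijective (⇑(fderiv ℝ φ 0)) ∧ Function.Bijective (⇑(fderiv ℝ ψ 0)) ∧
    ∀ᶠ p in 𝓝 (0 : ℝ × ℝ), ψ (f (φ p)) = g p

/-- `f` has the form `(x, g(x,y))` where `g` is `C^∞` and the Taylor coefficients of `g`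
of total degree `< N` at the origin are prescribed by `P`. -/
def HasForm (f : ℝ × ℝ → ℝ × ℝ) (g : ℝ × ℝ → ℝ) (N : ℕ) (P : ℕ → ℕ → ℝ) : Prop :=
  ContDiff ℝ (⊤ : ℕ∞) g ∧ (∀ p, f p = (p.1, g p)) ∧
    ∀ i j, i + j < N → tcoeff g i j = P i j

lemma sm_extend {E F : Type} [NormedAddCommGroup E] [NormedSpace ℝ E] [FiniteDimensional ℝ E]
    [NormedAddCommGroup F] [NormedSpace ℝ F] (f : E → F) (U : Set E) (hU : U ∈ 𝓝 (0 : E))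
    (hf : ∀ x ∈ U, ContDiffAt ℝ (⊤ : ℕ∞) f x) :
    ∃ g : E → F, ContDiff ℝ (⊤ : ℕ∞) g ∧ ∀ᶠ p in 𝓝 (0 : E), g p = f p := by
  obtain ⟨r, hr, hrU⟩ := Metric.nhds_basis_closedBall.mem_iff.1 hU
  let b : ContDiffBump (0 : E) := ⟨r / 2, r, by positivity, by linarith⟩
  refine ⟨fun x => b x • f x, ?_, ?_⟩
  · rw [contDiff_iff_contDiffAt]
    intro x
    by_cases hx : x ∈ Metric.closedBall (0 : E) r
    · exact (b.contDiff.contDiffAt).smul (hf x (hrU hx))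
    · have : (fun x => b x • f x) =ᶠ[𝓝 x] fun _ => (0 : F) := by
        have ho : (Metric.closedBall (0 : E) r)ᶜ ∈ 𝓝 x :=
          Metric.isClosed_closedBall.isOpen_compl.mem_nhds hx
        filter_upwards [ho] with y hy
        have : b y = 0 := by
          apply b.zero_of_le_dist
          simp only [Set.mem_compl_iff, Metric.mem_closedBall, not_le] at hy
          exact hy.le
        simp [this]
      exact contDiffAt_const.congr_of_eventuallyEq this
  · filter_upwards [b.eventuallyEq_one] with x hx
    simp [hx]

lemma inv_germ {E : Type} [NormedAddCommGroup E] [NormedSpace ℝ E] [FiniteDimensional ℝ E]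
    (T : E → E) (hT : ContDiff ℝ (⊤ : ℕ∞) T) (h0 : T 0 = 0)
    (hb : Function.Bijective (⇑(fderiv ℝ T 0))) :
    ∃ K : E → E, ContDiff ℝ (⊤ : ℕ∞) K ∧ K 0 = 0 ∧ Function.Bijective (⇑(fderiv ℝ K 0)) ∧
      (∀ᶠ p in 𝓝 (0 : E), K (T p) = p) ∧ (∀ᶠ p in 𝓝 (0 : E), T (K p) = p) := by
  have hc : CompleteSpace E := FiniteDimensional.complete ℝ E
  let L0 : E ≃ₗ[ℝ] E := LinearEquiv.ofBijective (fderiv ℝ T 0).toLinearMap hb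
  let L : E ≃L[ℝ] E := L0.toContinuousLinearEquiv
  have hL : (L : E →L[ℝ] E) = fderiv ℝ T 0 := by ext; rfl
  have hd : HasFDerivAt T (L : E →L[ℝ] E) 0 := by
    rw [hL]; exact (hT.differentiable (by simp) 0).hasFDerivAt
  have hTa : ContDiffAt ℝ (⊤ : ℕ∞) T 0 := hT.contDiffAt
  have hn : ((⊤ : ℕ∞) : WithTop ℕ∞) ≠ 0 := by simp
  let e := hTa.toOpenPartialHomeomorph T hd hn
  have he : ∀ x, e x = T x := fun x => rfl
  have h0s : (0 : E) ∈ e.source := hTa.mem_toOpenPartialHomeomorph_source hd hn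
  have h0t : (0 : E) ∈ e.target := by
    have := e.map_source h0s; rwa [he, h0] at this
  have hs0 : e.symm 0 = 0 := by
    have := e.left_inv h0s; rwa [he, h0] at this
  -- invertible derivative nearby
  have hinv : ∀ᶠ x in 𝓝 (0 : E), fderiv ℝ T x ∈ Set.range ((↑) : (E ≃L[ℝ] E) → (E →L[ℝ] E)) := by
    have hcf : ContinuousAt (fderiv ℝ T) 0 :=
      (hT.continuous_fderiv (by simp)).continuousAt
    exact hcf.eventually (by rw [← hL]; exact ContinuousLinearEquiv.nhds L)
  have hsym : ContinuousAt e.symm 0 := e.symm.continuousAt h0t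
  have hinv' : ∀ᶠ y in 𝓝 (0 : E), fderiv ℝ T (e.symm y) ∈
      Set.range ((↑) : (E ≃L[ℝ] E) → (E →L[ℝ] E)) := by
    rw [← hs0] at hinv
    exact hsym.tendsto.eventually hinv
  have htn : ∀ᶠ y in 𝓝 (0 : E), y ∈ e.target := e.open_target.mem_nhds h0t
  obtain ⟨K, hK, hKe⟩ := sm_extend (F := E) e.symm {y | y ∈ e.target ∧ fderiv ℝ T (e.symm y) ∈
      Set.range ((↑) : (E ≃L[ℝ] E) → (E →L[ℝ] E))} (htn.and hinv') (by
    rintro y ⟨hy, M, hM⟩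
    refine e.contDiffAt_symm (f₀' := M) hy ?_ ?_
    · rw [hM]; exact (hT.differentiable (by simp) _).hasFDerivAt
    · exact hT.contDiffAt)
  have hK0 : K 0 = 0 := by rw [hKe.self_of_nhds, hs0]
  have h1 : ∀ᶠ p in 𝓝 (0 : E), K (T p) = p := by
    have hTc : Tendsto T (𝓝 0) (𝓝 0) := by
      have := hT.continuous.tendsto 0; rwa [h0] at this
    filter_upwards [hTc.eventually hKe, e.open_source.mem_nhds h0s] with p hp hps
    rw [hp]; exact e.left_inv hps
  have h2 : ∀ᶠ p in 𝓝 (0 : E), T (K p) = p := by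
    filter_upwards [hKe, htn] with p hp hpt
    rw [hp]; exact e.right_inv hpt
  refine ⟨K, hK, hK0, ?_, h1, h2⟩
  have hcomp : ∀ᶠ p in 𝓝 (0 : E), (K ∘ T) p = id p := h1
  have hcomp2 : ∀ᶠ p in 𝓝 (0 : E), (T ∘ K) p = id p := h2
  have hKd : DifferentiableAt ℝ K 0 := hK.differentiable (by simp) 0
  have hTd : DifferentiableAt ℝ T 0 := hT.differentiable (by simp) 0
  have e1 : (fderiv ℝ K 0).comp (fderiv ℝ T 0) = ContinuousLinearMap.id ℝ E := by
    have := EventuallyEq.fderiv_eq (𝕜 := ℝ) hcomp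
    rw [fderiv_comp 0 (by rwa [h0]) hTd, h0, fderiv_id] at this
    exact this
  have e2 : (fderiv ℝ T 0).comp (fderiv ℝ K 0) = ContinuousLinearMap.id ℝ E := by
    have := EventuallyEq.fderiv_eq (𝕜 := ℝ) hcomp2
    rw [fderiv_comp 0 (by rwa [hK0]) hKd, hK0, fderiv_id] at this
    exact this
  refine Function.bijective_iff_has_inverse.2 ⟨fderiv ℝ T 0, ?_, ?_⟩
  · intro x; exact congrArg (fun l : E →L[ℝ] E => l x) e2
  · intro x; exact congrArg (fun l : E →L[ℝ] E => l x) e1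

/-- Symmetric form of equivalence. -/
def Eqv (f g : ℝ × ℝ → ℝ × ℝ) : Prop :=
  ∃ T S : ℝ × ℝ → ℝ × ℝ,
    ContDiff ℝ (⊤ : ℕ∞) T ∧ ContDiff ℝ (⊤ : ℕ∞) S ∧ T 0 = 0 ∧ S 0 = 0 ∧
    Function.Bijective (⇑(fderiv ℝ T 0)) ∧ Function.Bijective (⇑(fderiv ℝ S 0)) ∧
    ∀ᶠ p in 𝓝 (0 : ℝ × ℝ), S (f p) = g (T p)

lemma tendsto_zero_of_smooth {E F : Type} [NormedAddCommGroup E] [NormedSpace ℝ E]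
    [NormedAddCommGroup F] [NormedSpace ℝ F] {T : E → F}
    (hT : ContDiff ℝ (⊤ : ℕ∞) T) (h0 : T 0 = 0) : Tendsto T (𝓝 0) (𝓝 0) := by
  have := hT.continuous.tendsto 0; rwa [h0] at this

lemma bij_comp {E : Type} [NormedAddCommGroup E] [NormedSpace ℝ E] {S T : E → E}
    (hS : ContDiff ℝ (⊤ : ℕ∞) S) (hT : ContDiff ℝ (⊤ : ℕ∞) T) (h0 : T 0 = 0)
    (bS : Function.Bijective (⇑(fderiv ℝ S 0))) (bT : Function.Bijective (⇑(fderiv ℝ T 0))) :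
    Function.Bijective (⇑(fderiv ℝ (S ∘ T) 0)) := by
  rw [fderiv_comp 0 (hS.differentiable (by simp) _) (hT.differentiable (by simp) _), h0]
  exact bS.comp bT

lemma Eqv.trans {f g h : ℝ × ℝ → ℝ × ℝ} (h1 : Eqv f g) (h2 : Eqv g h) : Eqv f h := by
  obtain ⟨T, S, hT, hS, T0, S0, bT, bS, e⟩ := h1
  obtain ⟨T', S', hT', hS', T0', S0', bT', bS', e'⟩ := h2
  refine ⟨T' ∘ T, S' ∘ S, hT'.comp hT, hS'.comp hS, by simp [T0, T0'], by simp [S0, S0'],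
    bij_comp hT' hT T0 bT' bT, bij_comp hS' hS S0 bS' bS, ?_⟩
  filter_upwards [e, (tendsto_zero_of_smooth hT T0).eventually e'] with p hp hp'
  simp only [Function.comp]
  rw [hp, hp']

lemma Eqv.symm {f g : ℝ × ℝ → ℝ × ℝ} (hf : ContDiff ℝ (⊤ : ℕ∞) f) (f0 : f 0 = 0)
    (h1 : Eqv f g) : Eqv g f := by
  obtain ⟨T, S, hT, hS, T0, S0, bT, bS, e⟩ := h1
  obtain ⟨T', hT', T0', bT', i1, i2⟩ := inv_germ T hT T0 bT
  obtain ⟨S', hS', S0', bS', j1, j2⟩ := inv_germ S hS S0 bS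
  refine ⟨T', S', hT', hS', T0', S0', bT', bS', ?_⟩
  have hfT : Tendsto (f ∘ T') (𝓝 0) (𝓝 0) :=
    tendsto_zero_of_smooth (hf.comp hT') (by simp [T0', f0])
  filter_upwards [(tendsto_zero_of_smooth hT' T0').eventually e, i2, hfT.eventually j1]
    with p h1 h2 h3
  rw [h2] at h1
  rw [← h1]; exact h3

lemma Eqv.toAEquiv {f g : ℝ × ℝ → ℝ × ℝ} (h1 : Eqv f g) : AEquiv f g := by
  obtain ⟨T, S, hT, hS, T0, S0, bT, bS, e⟩ := h1
  obtain ⟨T', hT', T0', bT', i1, i2⟩ := inv_germ T hT T0 bT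
  refine ⟨T', S, hT', hS, T0', S0, bT', bS, ?_⟩
  filter_upwards [(tendsto_zero_of_smooth hT' T0').eventually e, i2] with p h1 h2
  rw [h1, h2]

lemma AEquiv.toEqv {f g : ℝ × ℝ → ℝ × ℝ} (h1 : AEquiv f g) : Eqv f g := by
  obtain ⟨T, S, hT, hS, T0, S0, bT, bS, e⟩ := h1
  obtain ⟨T', hT', T0', bT', i1, i2⟩ := inv_germ T hT T0 bT
  refine ⟨T', S, hT', hS, T0', S0, bT', bS, ?_⟩
  filter_upwards [(tendsto_zero_of_smooth hT' T0').eventually e, i2] with p h1 h2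
  rw [h2] at h1
  exact h1

set_option linter.unusedSectionVars false
section flat
variable {E F G : Type} [NormedAddCommGroup E] [NormedSpace ℝ E]
    [NormedAddCommGroup F] [NormedSpace ℝ F] [NormedAddCommGroup G] [NormedSpace ℝ G]

/-- `h = O(‖p‖^n)` at the origin. -/
def OO (n : ℕ) (h : E → F) : Prop :=
  ∃ C : ℝ, 0 ≤ C ∧ ∃ r : ℝ, 0 < r ∧ ∀ p, ‖p‖ ≤ r → ‖h p‖ ≤ C * ‖p‖ ^ n

/-- Smooth and flat at the origin. -/
def Flat (h : E → F) : Prop := ContDiff ℝ (⊤ : ℕ∞) h ∧ ∀ n, OO n h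

lemma OO.hasFDerivAt {h : E → F} {n : ℕ} (hn : 2 ≤ n) (H : OO n h) :
    HasFDerivAt h (0 : E →L[ℝ] F) 0 := by
  obtain ⟨C, hC, r, hr, hb⟩ := H
  have : h =O[𝓝 0] fun p => ‖p - 0‖ ^ n := by
    refine Asymptotics.IsBigO.of_bound C ?_
    filter_upwards [Metric.closedBall_mem_nhds (0 : E) hr] with p hp
    simp only [Metric.mem_closedBall, dist_zero_right] at hp
    simpa using hb p hp
  exact this.hasFDerivAt (by omega)

lemma OO.zero {h : E → F} {n : ℕ} (hn : 1 ≤ n) (H : OO n h) : h 0 = 0 := by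
  obtain ⟨C, hC, r, hr, hb⟩ := H
  have := hb 0 (by simpa using hr.le)
  rw [norm_zero, zero_pow (by omega), mul_zero] at this
  simpa using this

lemma Flat.zero {h : E → F} (H : Flat h) : h 0 = 0 := (H.2 1).zero le_rfl

lemma Flat.hasFDerivAt {h : E → F} (H : Flat h) : HasFDerivAt h (0 : E →L[ℝ] F) 0 :=
  (H.2 2).hasFDerivAt le_rfl

lemma OO.mono {h : E → F} {m n : ℕ} (hmn : m ≤ n) (H : OO n h) : OO m h := by
  obtain ⟨C, hC, r, hr, hb⟩ := H
  refine ⟨C, hC, min r 1, by positivity, fun p hp => (hb p (hp.trans (min_le_left _ _))).trans ?_⟩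
  refine mul_le_mul_of_nonneg_left ?_ hC
  exact pow_le_pow_of_le_one (norm_nonneg _) (hp.trans (min_le_right _ _)) hmn

lemma OO.of_le {h : E → F} {k : E → G} {n : ℕ} (H : OO n h) (M r : ℝ) (hr : 0 < r)
    (hk : ∀ p, ‖p‖ ≤ r → ‖k p‖ ≤ M * ‖h p‖) : OO n k := by
  obtain ⟨C, hC, r', hr', hb⟩ := H
  refine ⟨|M| * C, by positivity, min r r', by positivity, fun p hp => ?_⟩
  calc ‖k p‖ ≤ M * ‖h p‖ := hk p (hp.trans (min_le_left _ _))
    _ ≤ |M| * ‖h p‖ := by gcongr; exact le_abs_self M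
    _ ≤ |M| * (C * ‖p‖ ^ n) := by gcongr; exact hb p (hp.trans (min_le_right _ _))
    _ = _ := by ring

lemma OO.add {h k : E → F} {n : ℕ} (H : OO n h) (K : OO n k) : OO n (fun p => h p + k p) := by
  obtain ⟨C, hC, r, hr, hb⟩ := H
  obtain ⟨C', hC', r', hr', hb'⟩ := K
  refine ⟨C + C', by positivity, min r r', by positivity, fun p hp => ?_⟩
  calc ‖h p + k p‖ ≤ ‖h p‖ + ‖k p‖ := norm_add_le _ _
    _ ≤ C * ‖p‖ ^ n + C' * ‖p‖ ^ n :=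
      add_le_add (hb p (hp.trans (min_le_left _ _))) (hb' p (hp.trans (min_le_right _ _)))
    _ = _ := by ring

lemma cont_bound {a : E → F} (ha : Continuous a) : ∃ M r : ℝ, 0 < r ∧ 0 ≤ M ∧
    ∀ p, ‖p‖ ≤ r → ‖a p‖ ≤ M := by
  have : ∀ᶠ p in 𝓝 (0 : E), ‖a p‖ < ‖a 0‖ + 1 :=
    (ha.norm.continuousAt (x := (0:E))).eventually (gt_mem_nhds (by linarith))
  obtain ⟨r, hr, hrU⟩ := Metric.nhds_basis_closedBall.mem_iff.1 this
  refine ⟨‖a 0‖ + 1, r, hr, by positivity, fun p hp => ?_⟩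
  exact (hrU (by simpa using hp : p ∈ Metric.closedBall 0 r) : ‖a p‖ < ‖a 0‖ + 1).le

lemma Flat.add {h k : E → F} (H : Flat h) (K : Flat k) : Flat (fun p => h p + k p) :=
  ⟨H.1.add K.1, fun n => (H.2 n).add (K.2 n)⟩

lemma Flat.neg {h : E → F} (H : Flat h) : Flat (fun p => - h p) :=
  ⟨H.1.neg, fun n => (H.2 n).of_le 1 1 one_pos (by simp)⟩

lemma Flat.sub {h k : E → F} (H : Flat h) (K : Flat k) : Flat (fun p => h p - k p) := by
  simpa [sub_eq_add_neg] using H.add K.neg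

lemma Flat.smul {h : E → F} (H : Flat h) {a : E → ℝ} (ha : ContDiff ℝ (⊤ : ℕ∞) a) :
    Flat (fun p => a p • h p) := by
  refine ⟨ha.smul H.1, fun n => ?_⟩
  obtain ⟨M, r, hr, hM, hb⟩ := cont_bound ha.continuous
  refine (H.2 n).of_le M r hr fun p hp => ?_
  rw [norm_smul]
  gcongr
  exact hb p hp

lemma Flat.mul {h : E → ℝ} (H : Flat h) {a : E → ℝ} (ha : ContDiff ℝ (⊤ : ℕ∞) a) :
    Flat (fun p => a p * h p) := H.smul ha

lemma Flat.smulRight {h : E → F} (H : Flat h) {a : E → (E →L[ℝ] ℝ)}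
    (ha : ContDiff ℝ (⊤ : ℕ∞) a) : Flat (fun p => (a p).smulRight (h p)) := by
  refine ⟨ha.smulRight H.1, fun n => ?_⟩
  obtain ⟨M, r, hr, hM, hb⟩ := cont_bound ha.continuous
  refine (H.2 n).of_le M r hr fun p hp => ?_
  rw [ContinuousLinearMap.norm_smulRight_apply]
  gcongr
  exact hb p hp

lemma Flat.congr {h k : E → F} (H : Flat h) (hk : ContDiff ℝ (⊤ : ℕ∞) k)
    (he : ∀ᶠ p in 𝓝 (0 : E), k p = h p) : Flat k := by
  refine ⟨hk, fun n => ?_⟩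
  obtain ⟨r, hr, hrU⟩ := Metric.nhds_basis_closedBall.mem_iff.1 he
  refine (H.2 n).of_le 1 r hr fun p hp => ?_
  have : k p = h p := hrU (by simpa using hp : p ∈ Metric.closedBall 0 r)
  rw [this, one_mul]

/-- Composition on the right with a smooth map preserving the origin. -/
lemma Flat.comp {h : E → F} (H : Flat h) {T : G → E} (hT : ContDiff ℝ (⊤ : ℕ∞) T)
    (h0 : T 0 = 0) : Flat (fun p => h (T p)) := by
  refine ⟨H.1.comp hT, fun n => ?_⟩
  obtain ⟨C, hC, r, hr, hb⟩ := H.2 n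
  have hTa : ContDiffAt ℝ 1 T 0 := hT.contDiffAt.of_le (by exact_mod_cast le_top)
  obtain ⟨K, t, ht, hK⟩ := hTa.exists_lipschitzOnWith
  obtain ⟨s, hs, hsU⟩ := Metric.nhds_basis_closedBall.mem_iff.1 ht
  refine ⟨C * K ^ n, by positivity, min s (r / (K + 1)), by positivity, fun p hp => ?_⟩
  have hp1 : p ∈ t := hsU (by simpa using hp.trans (min_le_left _ _))
  have h0t : (0 : G) ∈ t := mem_of_mem_nhds ht
  have hl : ‖T p‖ ≤ K * ‖p‖ := by
    have := hK.dist_le_mul p hp1 0 h0t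
    simpa [h0, dist_zero_right] using this
  have hp2 : ‖p‖ * (K + 1) ≤ r := by
    have := hp.trans (min_le_right _ _)
    rwa [le_div_iff₀ (by positivity)] at this
  have : ‖T p‖ ≤ r := by nlinarith [norm_nonneg p]
  calc ‖h (T p)‖ ≤ C * ‖T p‖ ^ n := hb _ this
    _ ≤ C * (K * ‖p‖) ^ n := by gcongr
    _ = _ := by ring

lemma Flat.fd {h : E → F} (H : Flat h) : Flat (fderiv ℝ h) := by
  have hsm : ContDiff ℝ (⊤ : ℕ∞) (fderiv ℝ h) := H.1.fderiv_right (by simp)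
  refine ⟨hsm, fun n0 => ?_⟩
  suffices H' : OO (n0 + 1) (fderiv ℝ h) from H'.mono (by omega)
  set n := n0 + 1 with hn
  obtain ⟨C, hC, r, hr, hb⟩ := H.2 (2 * n)
  have h1 : ContDiffAt ℝ 1 (fderiv ℝ h) 0 :=
    hsm.contDiffAt.of_le (by exact_mod_cast le_top)
  obtain ⟨K, t, ht, hK⟩ := h1.exists_lipschitzOnWith
  obtain ⟨s, hs, hsU⟩ := Metric.nhds_basis_closedBall.mem_iff.1 ht
  refine ⟨K + C * (4 ^ n + 1), by positivity, min (min (s / 2) (r / 2)) 1, by positivity,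
    fun p hp => ?_⟩
  have hps : ‖p‖ ≤ s / 2 := hp.trans ((min_le_left _ _).trans (min_le_left _ _))
  have hpr : ‖p‖ ≤ r / 2 := hp.trans ((min_le_left _ _).trans (min_le_right _ _))
  have hp1 : ‖p‖ ≤ 1 := hp.trans (min_le_right _ _)
  rcases eq_or_ne p 0 with rfl | hp0
  · rw [H.hasFDerivAt.fderiv]; simp [hn]
  have hpp : 0 < ‖p‖ := norm_pos_iff.2 hp0
  set σ := ‖p‖ ^ n with hσ
  have hσ0 : 0 < σ := by positivity
  have hσp : σ ≤ ‖p‖ := by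
    rw [hσ, hn, pow_succ]
    exact mul_le_of_le_one_left hpp.le (pow_le_one₀ hpp.le hp1)
  apply ContinuousLinearMap.opNorm_le_of_unit_norm (by positivity)
  intro v hv
  have key : ‖h (p + σ • v) - h p - fderiv ℝ h p (p + σ • v - p)‖ ≤ (K * σ) * ‖p + σ • v - p‖ := by
    have hcv : Convex ℝ (Metric.closedBall p σ) := convex_closedBall _ _
    refine hcv.norm_image_sub_le_of_norm_hasFDerivWithin_le' (f' := fderiv ℝ h)
      (fun x _ => (H.1.differentiable (by simp) x).hasFDerivAt.hasFDerivWithinAt) ?_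
      (Metric.mem_closedBall_self hσ0.le) ?_
    · intro x hx
      have hx' : ‖x - p‖ ≤ σ := by simpa [dist_eq_norm] using hx
      have hxs : ‖x‖ ≤ s := by
        calc ‖x‖ = ‖(x - p) + p‖ := by simp
          _ ≤ ‖x - p‖ + ‖p‖ := norm_add_le _ _
          _ ≤ s := by linarith
      have := hK.dist_le_mul x (hsU (by simpa using hxs)) p (hsU (by simp; linarith))
      rw [dist_eq_norm, dist_eq_norm] at this
      exact this.trans (by gcongr)
    · simp [dist_eq_norm, norm_smul, hv, abs_of_pos hσ0]
  have e1 : p + σ • v - p = σ • v := by simp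
  rw [e1] at key
  have nσ : ‖σ • v‖ = σ := by simp [norm_smul, hv, abs_of_pos hσ0]
  rw [nσ, map_smul] at key
  have hq : ‖p + σ • v‖ ≤ 2 * ‖p‖ := by
    calc _ ≤ ‖p‖ + ‖σ • v‖ := norm_add_le _ _
      _ ≤ _ := by rw [nσ]; linarith
  have b1 : ‖h (p + σ • v)‖ ≤ C * (4 ^ n * (σ * σ)) := by
    calc _ ≤ C * ‖p + σ • v‖ ^ (2 * n) := hb _ (by linarith)
      _ ≤ C * (2 * ‖p‖) ^ (2 * n) := by gcongr
      _ = _ := by rw [hσ, mul_pow, pow_mul, pow_mul ‖p‖, ← pow_mul, ← pow_mul, pow_mul 2]; ring_nf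
  have b2 : ‖h p‖ ≤ C * (σ * σ) := by
    calc _ ≤ C * ‖p‖ ^ (2 * n) := hb _ (by linarith)
      _ = _ := by rw [hσ]; ring_nf
  have b3 : σ * ‖fderiv ℝ h p v‖ ≤ K * σ * σ + (C * (4 ^ n * (σ * σ)) + C * (σ * σ)) := by
    have : ∀ a b : F, ‖b‖ ≤ ‖a‖ + ‖a - b‖ := fun a b => by
      calc ‖b‖ = ‖a - (a - b)‖ := by simp
        _ ≤ _ := norm_sub_le _ _
    calc σ * ‖fderiv ℝ h p v‖ = ‖σ • fderiv ℝ h p v‖ := by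
          rw [norm_smul, Real.norm_of_nonneg hσ0.le]
      _ ≤ ‖h (p + σ • v) - h p‖ + ‖h (p + σ • v) - h p - σ • fderiv ℝ h p v‖ := by
          exact this _ _
      _ ≤ (‖h (p + σ • v)‖ + ‖h p‖) + K * σ * σ := add_le_add (norm_sub_le _ _) key
      _ ≤ _ := by linarith
  have : σ * ‖fderiv ℝ h p v‖ ≤ σ * ((K + C * (4 ^ n + 1)) * σ) := by
    refine b3.trans (le_of_eq ?_); ring
  exact le_of_mul_le_mul_left this hσ0

/-- quotients of flat functions by powers of `q` -/
def KK (q : E → ℝ) (w : E → F) : Prop :=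
  w 0 = 0 ∧ (∀ p, p ≠ 0 → ContDiffAt ℝ (⊤ : ℕ∞) w p) ∧
    ∃ (j : ℕ) (h : E → F), Flat h ∧ ∀ p, q p ^ j • w p = h p

lemma KK.fd {q : E → ℝ} (hq : ContDiff ℝ (⊤ : ℕ∞) q) {w : E → F} (hw : KK q w)
    (hO : OO 2 w) : KK q (fderiv ℝ w) := by
  obtain ⟨w0, hs, j, h, hh, he⟩ := hw
  have hd0 : fderiv ℝ w 0 = 0 := (hO.hasFDerivAt le_rfl).fderiv
  refine ⟨hd0, fun p hp => (hs p hp).fderiv_right (by simp), j + 1,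
    fun p => q p • fderiv ℝ h p - (j : ℝ) • (fderiv ℝ q p).smulRight (h p), ?_, ?_⟩
  · refine Flat.sub (hh.fd.smul hq) ?_
    exact Flat.smul (hh.smulRight (hq.fderiv_right (by simp))) contDiff_const
  · intro p
    rcases eq_or_ne p 0 with rfl | hp
    · simp [hd0, hh.hasFDerivAt.fderiv, hh.zero]
    have hfe : h = fun p => q p ^ j • w p := by funext p; exact (he p).symm
    have hwd : DifferentiableAt ℝ w p := (hs p hp).differentiableAt (by simp)
    have hqd : HasFDerivAt q (fderiv ℝ q p) p := (hq.differentiable (by simp) p).hasFDerivAt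
    have : HasFDerivAt h (q p ^ j • fderiv ℝ w p +
        ((j * q p ^ (j - 1)) • fderiv ℝ q p).smulRight (w p)) p := by
      rw [hfe]
      have := (hqd.pow j).smul hwd.hasFDerivAt
      rw [nsmul_eq_mul] at this
      exact this
    beta_reduce
    rw [this.fderiv, ← he p]
    ext v
    simp only [ContinuousLinearMap.smul_apply, ContinuousLinearMap.sub_apply,
      ContinuousLinearMap.add_apply, ContinuousLinearMap.smulRight_apply, smul_add, smul_smul,
      smul_eq_mul]
    rcases j with _ | j
    · simp
    · have : q p * ((↑(j + 1) * q p ^ (j + 1 - 1)) * (fderiv ℝ q p) v) =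
          (↑(j + 1) * ((fderiv ℝ q p) v * q p ^ (j + 1))) := by
        simp [pow_succ]; ring
      rw [this]
      rw [pow_succ _ (j+1), mul_comm (q p ^ (j+1)) (q p)]
      abel

lemma KK.smooth {q : E → ℝ} (hq : ContDiff ℝ (⊤ : ℕ∞) q)
    (bd : ∀ (F : Type) [NormedAddCommGroup F] [NormedSpace ℝ F] (w : E → F), KK q w → ∀ n, OO n w)
    {w : E → F} (hw : KK q w) : Flat w := by
  refine ⟨?_, bd F w hw⟩
  have : ∀ (n : ℕ) (F : Type) [NormedAddCommGroup F] [NormedSpace ℝ F] (w : E → F), KK q w →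
      ContDiff ℝ n w := by
    intro n
    induction n with
    | zero =>
      intro F _ _ w hw
      have hO := bd F w hw 2
      rw [Nat.cast_zero, contDiff_zero, continuous_iff_continuousAt]
      intro p
      rcases eq_or_ne p 0 with rfl | hp
      · exact (hO.hasFDerivAt le_rfl).continuousAt
      · exact (hw.2.1 p hp).continuousAt
    | succ n ih =>
      intro F _ _ w hw
      have hO := bd F w hw 2
      rw [Nat.cast_succ, contDiff_succ_iff_fderiv]
      refine ⟨fun p => ?_, by simp, ih _ _ (hw.fd hq hO)⟩
      rcases eq_or_ne p 0 with rfl | hp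
      · exact (hO.hasFDerivAt le_rfl).differentiableAt
      · exact (hw.2.1 p hp).differentiableAt (by simp)
  exact contDiff_infty.2 fun n => this n F w hw

/-- division of a flat function by a function with a Łojasiewicz lower bound -/
lemma Flat.div {q : E → ℝ} (hq : ContDiff ℝ (⊤ : ℕ∞) q) (M : ℕ) (c r : ℝ) (hc : 0 < c) (hr : 0 < r)
    (hlow : ∀ p, ‖p‖ ≤ r → c * ‖p‖ ^ M ≤ |q p|) (hne : ∀ p, p ≠ 0 → q p ≠ 0) {h : E → F}
    (hh : Flat h) : Flat (fun p => (q p)⁻¹ • h p) := by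
  refine KK.smooth hq ?_ (?_ : KK q _)
  · intro F _ _ w ⟨w0, _, j, h, hh, he⟩ n
    obtain ⟨C, hC, r', hr', hb⟩ := hh.2 (n + M * j)
    refine ⟨C / c ^ j, by positivity, min r r', by positivity, fun p hp => ?_⟩
    rcases eq_or_ne p 0 with rfl | hp0
    · rw [w0]; simp; positivity
    have hpp : 0 < ‖p‖ := norm_pos_iff.2 hp0
    have h1 := hb p (hp.trans (min_le_right _ _))
    rw [← he p, norm_smul, norm_pow, Real.norm_eq_abs, pow_add, pow_mul] at h1
    have h2 := hlow p (hp.trans (min_le_left _ _))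
    have h3 : (c * ‖p‖ ^ M) ^ j * ‖w p‖ ≤ C * (‖p‖ ^ n * (‖p‖ ^ M) ^ j) :=
      le_trans (by gcongr) h1
    rw [mul_pow] at h3
    rw [div_mul_eq_mul_div, le_div_iff₀ (by positivity)]
    have hP : 0 < (‖p‖ ^ M) ^ j := by positivity
    nlinarith
  · refine ⟨by simp [hh.zero], fun p hp => ?_, 1, h, hh, fun p => ?_⟩
    · exact (hq.contDiffAt.inv (hne p hp)).smul hh.1.contDiffAt
    · rcases eq_or_ne p 0 with rfl | hp0
      · simp [hh.zero]
      · simp [smul_smul, hne p hp0]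

end flat

lemma param_int_smooth {E : Type} [NormedAddCommGroup E] [NormedSpace ℝ E] [FiniteDimensional ℝ E] :
    ∀ (n : ℕ) (F : Type) [NormedAddCommGroup F] [NormedSpace ℝ F] [CompleteSpace F] (K : E × ℝ → F),
      ContDiff ℝ (⊤ : ℕ∞) K → ContDiff ℝ n (fun e => ∫ τ in (0:ℝ)..1, K (e, τ)) := by
  intro n
  have hder : ∀ (F : Type) [NormedAddCommGroup F] [NormedSpace ℝ F] [CompleteSpace F]
      (K : E × ℝ → F), ContDiff ℝ (⊤ : ℕ∞) K → ∀ e, HasFDerivAt (fun e => ∫ τ in (0:ℝ)..1, K (e, τ))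
      (∫ τ in (0:ℝ)..1, (fderiv ℝ K (e, τ)).comp (ContinuousLinearMap.inl ℝ E ℝ)) e := by
    intro F _ _ _ K hK e
    have hfc : Continuous (fun p : E × ℝ => (fderiv ℝ K p).comp (ContinuousLinearMap.inl ℝ E ℝ)) :=
      (hK.continuous_fderiv (by simp)).clm_comp continuous_const
    have hcomp : IsCompact (Metric.closedBall e 1 ×ˢ Set.Icc (0:ℝ) 1) :=
      (isCompact_closedBall e 1).prod isCompact_Icc
    obtain ⟨M, hM⟩ := hcomp.exists_bound_of_continuousOn hfc.continuousOn
    refine intervalIntegral.hasFDerivAt_integral_of_dominated_of_fderiv_le (bound := fun _ => M)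
      (F' := fun e τ => (fderiv ℝ K (e, τ)).comp (ContinuousLinearMap.inl ℝ E ℝ))
      (Metric.ball_mem_nhds e one_pos) ?_ ?_ ?_ ?_ ?_ ?_
    · refine Eventually.of_forall fun x => Continuous.aestronglyMeasurable ?_
      exact hK.continuous.comp (by fun_prop)
    · exact Continuous.intervalIntegrable (hK.continuous.comp (by fun_prop)) _ _
    · exact Continuous.aestronglyMeasurable (hfc.comp (by fun_prop : Continuous fun τ : ℝ => (e, τ)))
    · refine Eventually.of_forall fun τ hτ x hx => ?_
      rw [Set.uIoc_of_le zero_le_one] at hτ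
      exact hM (x, τ) ⟨Metric.ball_subset_closedBall hx, hτ.1.le, hτ.2⟩
    · exact intervalIntegrable_const
    · refine Eventually.of_forall fun τ hτ x hx => ?_
      have h1 : HasFDerivAt K (fderiv ℝ K (x, τ)) (x, τ) := (hK.differentiable (by simp) _).hasFDerivAt
      exact h1.comp x (hasFDerivAt_prodMk_left x τ)
  induction n with
  | zero =>
    intro F _ _ _ K hK
    rw [Nat.cast_zero, contDiff_zero, continuous_iff_continuousAt]
    exact fun e => (hder F K hK e).continuousAt
  | succ n ih =>
    intro F _ _ _ K hK
    rw [Nat.cast_succ, contDiff_succ_iff_fderiv]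
    refine ⟨fun e => (hder F K hK e).differentiableAt, by simp, ?_⟩
    have : fderiv ℝ (fun e => ∫ τ in (0:ℝ)..1, K (e, τ)) =
        fun e => ∫ τ in (0:ℝ)..1, (fderiv ℝ K (e, τ)).comp (ContinuousLinearMap.inl ℝ E ℝ) :=
      funext fun e => (hder F K hK e).fderiv
    rw [this]
    exact ih _ (fun p => (fderiv ℝ K p).comp (ContinuousLinearMap.inl ℝ E ℝ))
      ((hK.fderiv_right (by simp)).clm_comp contDiff_const)

lemma pdy_smooth {k : ℝ × ℝ → ℝ} (hk : ContDiff ℝ (⊤ : ℕ∞) k) : ContDiff ℝ (⊤ : ℕ∞) (pdy k) :=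
  (hk.fderiv_right (by simp)).clm_apply contDiff_const
lemma pdx_smooth {k : ℝ × ℝ → ℝ} (hk : ContDiff ℝ (⊤ : ℕ∞) k) : ContDiff ℝ (⊤ : ℕ∞) (pdx k) :=
  (hk.fderiv_right (by simp)).clm_apply contDiff_const

lemma hasDerivAt_pdy {k : ℝ × ℝ → ℝ} (hk : ContDiff ℝ (⊤ : ℕ∞) k) (x y : ℝ) :
    HasDerivAt (fun y => k (x, y)) (pdy k (x, y)) y := by
  have h1 : HasFDerivAt k (fderiv ℝ k (x, y)) (x, y) := (hk.differentiable (by simp) _).hasFDerivAt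
  have h2 : HasDerivAt (fun y : ℝ => (x, y)) ((0 : ℝ), (1 : ℝ)) y :=
    (hasDerivAt_const y x).prodMk (hasDerivAt_id y)
  exact h1.comp_hasDerivAt y h2

lemma hasDerivAt_pdx {k : ℝ × ℝ → ℝ} (hk : ContDiff ℝ (⊤ : ℕ∞) k) (x y : ℝ) :
    HasDerivAt (fun x => k (x, y)) (pdx k (x, y)) x := by
  have h1 : HasFDerivAt k (fderiv ℝ k (x, y)) (x, y) := (hk.differentiable (by simp) _).hasFDerivAt
  have h2 : HasDerivAt (fun x : ℝ => (x, y)) ((1 : ℝ), (0 : ℝ)) x :=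
    (hasDerivAt_id x).prodMk (hasDerivAt_const x y)
  exact h1.comp_hasDerivAt x h2

lemma taylor2 {k : ℝ × ℝ → ℝ} (hk : ContDiff ℝ (⊤ : ℕ∞) k) :
    ∃ Q : ℝ × ℝ × ℝ → ℝ, ContDiff ℝ (⊤ : ℕ∞) Q ∧
      ∀ x y c, k (x, y) = k (x, c) + (y - c) * pdy k (x, c) + (y - c) ^ 2 * Q (x, y, c) := by
  let K : (ℝ × ℝ × ℝ) × ℝ → ℝ := fun p =>
    (1 - p.2) * pdy (pdy k) (p.1.1, p.1.2.2 + p.2 * (p.1.2.1 - p.1.2.2))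
  have hK : ContDiff ℝ (⊤ : ℕ∞) K := by
    refine ContDiff.mul (by fun_prop) ?_
    exact (pdy_smooth (pdy_smooth hk)).comp (by fun_prop)
  refine ⟨fun e => ∫ τ in (0:ℝ)..1, K (e, τ), contDiff_infty.2 fun n => param_int_smooth n ℝ K hK, ?_⟩
  intro x y c
  have hd : ∀ τ ∈ Set.uIcc (0:ℝ) 1, HasDerivAt
      (fun τ => (1 - τ) * ((y - c) * pdy k (x, c + τ * (y - c))) + k (x, c + τ * (y - c)))
      ((y - c) ^ 2 * K ((x, y, c), τ)) τ := by
    intro τ _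
    have hl : HasDerivAt (fun τ : ℝ => c + τ * (y - c)) (y - c) τ := by
      simpa using ((hasDerivAt_id τ).mul_const (y - c)).const_add c
    have h1 := (hasDerivAt_pdy hk x (c + τ * (y - c))).comp τ hl
    have h2 := (hasDerivAt_pdy (pdy_smooth hk) x (c + τ * (y - c))).comp τ hl
    have h3 : HasDerivAt (fun τ : ℝ => 1 - τ) (-1) τ := by
      simpa using (hasDerivAt_id τ).const_sub 1
    have := (h3.mul (h2.const_mul (y - c))).add h1
    refine HasDerivAt.congr_deriv this ?_
    simp only [K, Function.comp]
    ring
  have hi := intervalIntegral.integral_eq_sub_of_hasDerivAt hd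
    (Continuous.intervalIntegrable (continuous_const.mul (hK.continuous.comp (by fun_prop))) _ _)
  rw [intervalIntegral.integral_const_mul] at hi
  rw [hi]; simp; ring

/-- real cube root -/
def cb (x : ℝ) : ℝ := if 0 ≤ x then x ^ (1 / 3 : ℝ) else - (-x) ^ (1 / 3 : ℝ)

lemma cb_pow (x : ℝ) : cb x ^ 3 = x := by
  have key : ∀ x : ℝ, 0 ≤ x → (x ^ (1 / 3 : ℝ)) ^ 3 = x := by
    intro x hx
    rw [← Real.rpow_natCast, ← Real.rpow_mul hx]; norm_num
  unfold cb
  split_ifs with h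
  · exact key x h
  · have := key (-x) (by linarith)
    rw [neg_pow]; rw [this]; ring

lemma pow3_inj {a b : ℝ} (h : a ^ 3 = b ^ 3) : a = b := (Odd.strictMono_pow (by decide : Odd 3)).injective h

lemma cb_cube (t : ℝ) : cb (t ^ 3) = t := pow3_inj (cb_pow _)

lemma cb_smoothAt {x : ℝ} (hx : x ≠ 0) : ContDiffAt ℝ (⊤ : ℕ∞) cb x := by
  rcases lt_or_gt_of_ne hx with h | h
  · have : cb =ᶠ[𝓝 x] fun x => - (-x) ^ (1 / 3 : ℝ) := by
      filter_upwards [Iio_mem_nhds h] with y hy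
      simp only [cb]; rw [if_neg (not_le.2 hy)]
    refine ContDiffAt.congr_of_eventuallyEq ?_ this
    exact (contDiffAt_id.neg.rpow_const_of_ne (by simpa using hx)).neg
  · have : cb =ᶠ[𝓝 x] fun x => x ^ (1 / 3 : ℝ) := by
      filter_upwards [Ioi_mem_nhds h] with y hy
      simp only [cb]; rw [if_pos (le_of_lt hy)]
    exact ContDiffAt.congr_of_eventuallyEq (contDiffAt_id.rpow_const_of_ne hx) this

/-- cusp equation -/
def cuspP (p : ℝ × ℝ) : ℝ := p.1 ^ 2 + 4 * p.2 ^ 3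

/-- the branch of the cusp -/
def cuspY (x : ℝ) : ℝ := - cb (x / 2) ^ 2

lemma cuspY_eq (x : ℝ) : 4 * cuspY x ^ 3 = - x ^ 2 := by
  have : cuspY x ^ 3 = - (cb (x / 2) ^ 3) ^ 2 := by unfold cuspY; ring
  rw [this, cb_pow]; ring

lemma cuspP_eq (x y : ℝ) : cuspP (x, y) =
    (y - cuspY x) * (4 * (y ^ 2 + y * cuspY x + cuspY x ^ 2)) := by
  have := cuspY_eq x
  simp only [cuspP]; linear_combination this

lemma cuspP_smooth : ContDiff ℝ (⊤ : ℕ∞) cuspP := by unfold cuspP; fun_prop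

lemma pdy_cuspP (p : ℝ × ℝ) : fderiv ℝ cuspP p (0, 1) = 12 * p.2 ^ 2 := by
  have h := hasDerivAt_pdy cuspP_smooth p.1 p.2
  have h2 : HasDerivAt (fun y : ℝ => p.1 ^ 2 + 4 * y ^ 3) (4 * (3 * p.2 ^ 2)) p.2 := by
    simpa using ((hasDerivAt_pow 3 p.2).const_mul 4).const_add (p.1 ^ 2)
  have := h.unique h2
  simp only [pdy, dop] at this
  rw [this]; ring

lemma cusp_quad_low {x y : ℝ} (h1 : ‖((x, y) : ℝ × ℝ)‖ ≤ 1) :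
    ‖((x, y) : ℝ × ℝ)‖ ^ 4 / 16 ≤ y ^ 2 + cuspY x ^ 2 := by
  set g := cuspY x with hg
  have hgx := cuspY_eq x
  rw [← hg] at hgx
  rw [Prod.norm_def] at h1 ⊢
  simp only [Real.norm_eq_abs] at h1 ⊢
  have hx1 : |x| ≤ 1 := (le_max_left _ _).trans h1
  have hy1 : |y| ≤ 1 := (le_max_right _ _).trans h1
  have hx2 : x ^ 2 ≤ 1 := by rw [← sq_abs]; nlinarith [abs_nonneg x]
  have hg6 : g ^ 6 = x ^ 4 / 16 := by
    have : (4 * g ^ 3) ^ 2 = (- x ^ 2) ^ 2 := by rw [hgx]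
    nlinarith
  have hg2 : g ^ 2 ≤ 1 := by
    by_contra h
    push Not at h
    have : 1 < g ^ 6 := by nlinarith [sq_nonneg (g^2), sq_nonneg (g^2 - 1)]
    nlinarith [sq_nonneg x]
  rcases le_total |x| |y| with h | h
  · rw [max_eq_right h]
    have : |y| ^ 4 = y ^ 4 := by rw [show (4:ℕ) = 2 * 2 from rfl, pow_mul, sq_abs, ← pow_mul]
    rw [this]
    have hy2 : y ^ 2 ≤ 1 := by rw [← sq_abs]; nlinarith [abs_nonneg y]
    nlinarith [sq_nonneg y, sq_nonneg g]
  · rw [max_eq_left h]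
    have : |x| ^ 4 = x ^ 4 := by rw [show (4:ℕ) = 2 * 2 from rfl, pow_mul, sq_abs, ← pow_mul]
    rw [this, ← hg6]
    have : g ^ 6 ≤ g ^ 2 := by nlinarith [sq_nonneg g, sq_nonneg (g^2)]
    nlinarith [sq_nonneg y]

lemma cusp_bd_aux (F : Type) [NormedAddCommGroup F] [NormedSpace ℝ F] :
    ∀ (j : ℕ) (w h : ℝ × ℝ → F), w 0 = 0 → (∀ p, p ≠ 0 → ContDiffAt ℝ (⊤ : ℕ∞) w p) →
      Flat h → (∀ p, cuspP p ^ j • w p = h p) → ∀ n, OO n w := by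
  intro j
  induction j with
  | zero =>
    intro w h w0 ws hh he n
    have : w = h := by funext p; simpa using he p
    rw [this]; exact hh.2 n
  | succ j ih =>
    intro w h w0 ws hh he n
    let w' : ℝ × ℝ → F := fun p => (((j + 1 : ℕ) : ℝ) * (12 * p.2 ^ 2)) • w p + cuspP p • fderiv ℝ w p (0, 1)
    have hv : Flat (fun p => fderiv ℝ h p (0, 1)) := by
      refine ⟨hh.fd.1.clm_apply contDiff_const, fun n => (hh.fd.2 n).of_le 1 1 one_pos fun p _ => ?_⟩
      calc _ ≤ ‖fderiv ℝ h p‖ * ‖((0, 1) : ℝ × ℝ)‖ := ContinuousLinearMap.le_opNorm _ _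
        _ = _ := by simp [Prod.norm_def]
    have hw' : ∀ p, cuspP p ^ j • w' p = fderiv ℝ h p (0, 1) := by
      intro p
      rcases eq_or_ne p 0 with rfl | hp
      · simp [w', w0, cuspP, hh.hasFDerivAt.fderiv]
      have hfe : h = fun p => cuspP p ^ (j + 1) • w p := by funext p; exact (he p).symm
      have hwd : DifferentiableAt ℝ w p := (ws p hp).differentiableAt (by simp)
      have hqd : HasFDerivAt cuspP (fderiv ℝ cuspP p) p :=
        (cuspP_smooth.differentiable (by simp) p).hasFDerivAt
      have := (hqd.pow (j + 1)).smul hwd.hasFDerivAt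
      have h2 := this.fderiv
      have h2' : fderiv ℝ h p = fderiv ℝ (fun p => cuspP p ^ (j + 1) • w p) p := by rw [← hfe]
      rw [h2']
      erw [h2]
      simp only [add_apply, smul_apply, ContinuousLinearMap.smulRight_apply, pdy_cuspP, w',
        smul_add, smul_smul, nsmul_eq_mul, smul_eq_mul, add_tsub_cancel_right]
      rw [add_comm, pow_succ]
      congr 2
      ring
    have hO := ih w' _ (by simp [w', w0, cuspP]) (by
      intro p hp
      refine ContDiffAt.add (ContDiffAt.smul (by fun_prop) (ws p hp)) ?_
      exact cuspP_smooth.contDiffAt.smul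
        (((ws p hp).fderiv_right (m := (⊤ : ℕ∞)) (by simp)).clm_apply contDiffAt_const)) hv hw' (3 * (n + 4))
    obtain ⟨C, hC, r, hr, hb⟩ := hO
    refine ⟨32 * C, by positivity, min 1 (min r (r ^ 2)), by positivity, ?_⟩
    rintro ⟨x, y⟩ hp
    rcases eq_or_ne ((x, y) : ℝ × ℝ) 0 with h0 | h0
    · rw [h0, w0]; simp; positivity
    set ρ := ‖((x, y) : ℝ × ℝ)‖ with hρ
    have hρ0 : 0 < ρ := norm_pos_iff.2 h0
    have hρ1 : ρ ≤ 1 := hp.trans (min_le_left _ _)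
    have hρr : ρ ≤ r := hp.trans ((min_le_right _ _).trans (min_le_left _ _))
    have hρr2 : ρ ≤ r ^ 2 := hp.trans ((min_le_right _ _).trans (min_le_right _ _))
    have hlow := cusp_quad_low hρ1
    rw [← hρ] at hlow
    have hgx := cuspY_eq x
    have hxρ : |x| ≤ ρ := by rw [hρ, Prod.norm_def]; exact le_max_left _ _
    have hyρ : |y| ≤ ρ := by rw [hρ, Prod.norm_def]; exact le_max_right _ _
    have hg3 : |cuspY x| ^ 3 ≤ ρ ^ 2 := by
      have : |cuspY x| ^ 3 = x ^ 2 / 4 := by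
        rw [← abs_pow, show cuspY x ^ 3 = - (x ^ 2 / 4) by linarith, abs_neg, abs_of_nonneg (by positivity)]
      rw [this]
      have : x ^ 2 ≤ ρ ^ 2 := by rw [← sq_abs]; gcongr
      nlinarith [sq_nonneg x]
    -- bounds on the segment
    have hseg : ∀ ξ ∈ Set.uIcc (cuspY x) y, ‖w' (x, ξ)‖ ≤ C * ρ ^ (2 * (n + 4)) := by
      intro ξ hξ
      have hξ' : |ξ| ≤ max |y| |cuspY x| := by
        rw [Set.mem_uIcc] at hξ
        rcases hξ with ⟨h1, h2⟩ | ⟨h1, h2⟩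
        · rw [max_comm]; exact abs_le_max_abs_abs h1 h2
        · exact abs_le_max_abs_abs h1 h2
      have hn3 : ‖((x, ξ) : ℝ × ℝ)‖ ^ 3 ≤ ρ ^ 2 := by
        have hρ3 : ρ ^ 3 ≤ ρ ^ 2 := pow_le_pow_of_le_one hρ0.le hρ1 (by norm_num)
        have : ‖((x, ξ) : ℝ × ℝ)‖ ≤ max ρ |cuspY x| := by
          rw [Prod.norm_def]
          refine max_le (le_max_of_le_left hxρ) (hξ'.trans (max_le_max_right _ hyρ))
        rcases le_total ρ |cuspY x| with hc | hc
        · rw [max_eq_right hc] at this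
          exact (pow_le_pow_left₀ (norm_nonneg _) this 3).trans hg3
        · rw [max_eq_left hc] at this
          exact (pow_le_pow_left₀ (norm_nonneg _) this 3).trans hρ3
      have hnr : ‖((x, ξ) : ℝ × ℝ)‖ ≤ r := by
        by_contra hcon
        push Not at hcon
        have h1 : r ^ 3 < ‖((x, ξ) : ℝ × ℝ)‖ ^ 3 := pow_lt_pow_left₀ hcon hr.le (by norm_num)
        have h2 : ρ ^ 2 ≤ r ^ 3 := by
          calc ρ ^ 2 = ρ * ρ := by ring
            _ ≤ r ^ 2 * r := by gcongr
            _ = r ^ 3 := by ring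
        linarith
      calc _ ≤ C * ‖((x, ξ) : ℝ × ℝ)‖ ^ (3 * (n + 4)) := hb _ hnr
        _ = C * (‖((x, ξ) : ℝ × ℝ)‖ ^ 3) ^ (n + 4) := by rw [pow_mul]
        _ ≤ C * (ρ ^ 2) ^ (n + 4) := by gcongr
        _ = _ := by rw [pow_mul]
    have hfin : ρ ^ (2 * (n + 4)) ≤ ρ ^ n * ρ ^ 4 := by
      rw [← pow_add]; exact pow_le_pow_of_le_one hρ0.le hρ1 (by omega)
    have hfin' : C * ρ ^ (2 * (n + 4)) ≤ C * (ρ ^ n * ρ ^ 4) := by gcongr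
    have hρ4 : 0 < ρ ^ 4 := by positivity
    rcases eq_or_ne y (cuspY x) with hy | hy
    · have h1 := hseg y Set.right_mem_uIcc
      have hP : cuspP (x, y) = 0 := by rw [cuspP_eq, hy]; ring
      simp only [w', hP, zero_smul, add_zero, norm_smul, Real.norm_eq_abs] at h1
      have h2 : ρ ^ 4 / 32 ≤ y ^ 2 := by rw [← hy] at hlow; linarith
      have h3 : ρ ^ 4 / 32 ≤ |((j + 1 : ℕ) : ℝ) * (12 * y ^ 2)| := by
        rw [abs_of_nonneg (by positivity)]
        have : (1 : ℝ) ≤ ((j + 1 : ℕ) : ℝ) := by exact_mod_cast Nat.succ_pos j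
        nlinarith [sq_nonneg y]
      have h4 : ρ ^ 4 / 32 * ‖w (x, y)‖ ≤ C * (ρ ^ n * ρ ^ 4) :=
        (mul_le_mul_of_nonneg_right h3 (norm_nonneg _)).trans (h1.trans hfin')
      have h5 : ρ ^ 4 * ‖w (x, y)‖ ≤ ρ ^ 4 * (32 * C * ρ ^ n) := by nlinarith
      exact le_of_mul_le_mul_left h5 hρ4
    · have hmono : ∀ ξ ∈ Set.uIcc (cuspY x) y, |cuspP (x, ξ)| ≤ |cuspP (x, y)| := by
        intro ξ hξ
        have e1 : ∀ z, cuspP (x, z) = 4 * (z ^ 3 - cuspY x ^ 3) := by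
          intro z; simp only [cuspP]; linarith
        have hm : StrictMono (fun z : ℝ => z ^ 3) := Odd.strictMono_pow (by decide)
        rw [e1, e1, abs_mul, abs_mul]
        refine mul_le_mul_of_nonneg_left ?_ (abs_nonneg _)
        rw [Set.mem_uIcc] at hξ
        rcases hξ with ⟨h1, h2⟩ | ⟨h1, h2⟩
        · have a1 := hm.monotone h1
          have a2 := hm.monotone h2
          change _ ^ 3 ≤ _ ^ 3 at a1 a2
          rw [abs_of_nonneg (by linarith), abs_of_nonneg (by linarith)]; linarith
        · have a1 := hm.monotone h1
          have a2 := hm.monotone h2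
          change _ ^ 3 ≤ _ ^ 3 at a1 a2
          rw [abs_of_nonpos (by linarith), abs_of_nonpos (by linarith)]; linarith
      have hmv : ‖h (x, y) - h (x, cuspY x)‖ ≤
          (|cuspP (x, y)| ^ j * (C * ρ ^ (2 * (n + 4)))) * ‖y - cuspY x‖ := by
        refine (convex_uIcc (cuspY x) y).norm_image_sub_le_of_norm_hasDerivWithin_le
          (f := fun ξ => h (x, ξ)) (f' := fun ξ => fderiv ℝ h (x, ξ) (0, 1)) ?_ ?_
          Set.left_mem_uIcc Set.right_mem_uIcc
        · intro ξ _
          have h1 : HasFDerivAt h (fderiv ℝ h (x, ξ)) (x, ξ) :=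
            (hh.1.differentiable (by simp) _).hasFDerivAt
          have h2 : HasDerivAt (fun y : ℝ => (x, y)) ((0 : ℝ), (1 : ℝ)) ξ :=
            (hasDerivAt_const ξ x).prodMk (hasDerivAt_id ξ)
          exact (h1.comp_hasDerivAt ξ h2).hasDerivWithinAt
        · intro ξ hξ
          rw [← hw', norm_smul, norm_pow, Real.norm_eq_abs]
          have := hmono ξ hξ
          have := hseg ξ hξ
          gcongr
      have hg0 : h (x, cuspY x) = 0 := by
        rw [← he, cuspP_eq]; simp
      rw [hg0, sub_zero, ← he, norm_smul, norm_pow, Real.norm_eq_abs, Real.norm_eq_abs] at hmv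
      have hyg : 0 < |y - cuspY x| := abs_pos.2 (sub_ne_zero.2 hy)
      have hq : ρ ^ 4 / 32 ≤ |4 * (y ^ 2 + y * cuspY x + cuspY x ^ 2)| := by
        rw [abs_of_nonneg (by nlinarith [sq_nonneg (y + cuspY x), sq_nonneg y, sq_nonneg (cuspY x)])]
        nlinarith [sq_nonneg (y + cuspY x), sq_nonneg y, sq_nonneg (cuspY x)]
      have hPlow : |y - cuspY x| * (ρ ^ 4 / 32) ≤ |cuspP (x, y)| := by
        rw [cuspP_eq, abs_mul]; gcongr
      have hPpos : 0 < |cuspP (x, y)| := lt_of_lt_of_le (by positivity) hPlow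
      have h1 : |cuspP (x, y)| * ‖w (x, y)‖ ≤ C * ρ ^ (2 * (n + 4)) * |y - cuspY x| := by
        have : |cuspP (x, y)| ^ j * (|cuspP (x, y)| * ‖w (x, y)‖) ≤
            |cuspP (x, y)| ^ j * (C * ρ ^ (2 * (n + 4)) * |y - cuspY x|) := by
          calc _ = |cuspP (x, y)| ^ (j + 1) * ‖w (x, y)‖ := by ring
            _ ≤ _ := hmv
            _ = _ := by ring
        exact le_of_mul_le_mul_left this (by positivity)
      have h2 : |y - cuspY x| * (ρ ^ 4 / 32) * ‖w (x, y)‖ ≤ C * (ρ ^ n * ρ ^ 4) * |y - cuspY x| :=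
        (mul_le_mul_of_nonneg_right hPlow (norm_nonneg _)).trans
          (h1.trans (mul_le_mul_of_nonneg_right hfin' hyg.le))
      have h3 : (|y - cuspY x| * ρ ^ 4) * ‖w (x, y)‖ ≤ (|y - cuspY x| * ρ ^ 4) * (32 * C * ρ ^ n) := by
        linarith
      exact le_of_mul_le_mul_left h3 (by positivity)

/-- division by the square of the cusp equation -/
lemma cusp_div {k : ℝ × ℝ → ℝ} (hk : Flat k) (h0 : ∀ x, k (x, cuspY x) = 0)
    (h1 : ∀ x, pdy k (x, cuspY x) = 0) :
    ∃ w : ℝ × ℝ → ℝ, Flat w ∧ ∀ p, k p = cuspP p ^ 2 * w p := by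
  obtain ⟨Q, hQ, hQe⟩ := taylor2 hk.1
  let q : ℝ × ℝ → ℝ := fun p => 4 * (p.2 ^ 2 + p.2 * cuspY p.1 + cuspY p.1 ^ 2)
  let w : ℝ × ℝ → ℝ := fun p =>
    if p.1 = 0 then k p / cuspP p ^ 2 else Q (p.1, p.2, cuspY p.1) / q p ^ 2
  have hq0 : ∀ p : ℝ × ℝ, p.1 ≠ 0 → q p ≠ 0 := by
    rintro ⟨x, y⟩ hx
    have hx' : x ≠ 0 := hx
    have hc : cuspY x ≠ 0 := by
      intro h
      have := cuspY_eq x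
      rw [h] at this
      have : x ^ 2 = 0 := by linarith
      exact hx' (by simpa using this)
    have : 0 < cuspY x ^ 2 := by positivity
    have : 0 < q (x, y) := by
      simp only [q]; nlinarith [sq_nonneg (2 * y + cuspY x)]
    exact this.ne'
  have hkw : ∀ p, cuspP p ≠ 0 → w p = k p / cuspP p ^ 2 := by
    rintro ⟨x, y⟩ hp
    by_cases hx : x = 0
    · simp [w, hx]
    · simp only [w, hx, if_false]
      rw [div_eq_div_iff (pow_ne_zero 2 (hq0 _ hx)) (pow_ne_zero 2 hp), cuspP_eq, hQe x y (cuspY x), h0, h1]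
      simp only [q]; ring
  have hwk : ∀ p, cuspP p ^ 2 • w p = k p := by
    rintro ⟨x, y⟩
    by_cases hP : cuspP (x, y) = 0
    · have : y = cuspY x := by
        apply pow3_inj
        have := cuspY_eq x
        simp only [cuspP] at hP
        linarith
      rw [hP, this, h0]; simp
    · rw [hkw _ hP, smul_eq_mul]; field_simp
  have hcY : ∀ x : ℝ, x ≠ 0 → ContDiffAt ℝ (⊤ : ℕ∞) cuspY x := by
    intro x hx
    have : ContDiffAt ℝ (⊤ : ℕ∞) (fun x : ℝ => cb (x / 2)) x :=
      (cb_smoothAt (by simpa using hx)).comp x (by fun_prop)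
    exact (this.pow 2).neg
  have hKK : KK cuspP w := by
    refine ⟨by simp [w, cuspP], ?_, 2, k, hk, hwk⟩
    rintro ⟨x, y⟩ hp
    by_cases hx : x = 0
    · have hy : y ≠ 0 := by
        rintro rfl; exact hp (by simp [hx])
      have hP : cuspP (x, y) ≠ 0 := by simp [cuspP, hx, hy]
      have : w =ᶠ[𝓝 (x, y)] fun p => k p / cuspP p ^ 2 := by
        filter_upwards [cuspP_smooth.continuous.continuousAt.eventually_ne hP] with p hp
        exact hkw p hp
      refine ContDiffAt.congr_of_eventuallyEq ?_ this
      exact hk.1.contDiffAt.div (cuspP_smooth.contDiffAt.pow 2) (pow_ne_zero 2 hP)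
    · have : w =ᶠ[𝓝 (x, y)] fun p => Q (p.1, p.2, cuspY p.1) / q p ^ 2 := by
        filter_upwards [continuous_fst.continuousAt.eventually_ne hx] with p hp
        simp only [w]; rw [if_neg hp]
      refine ContDiffAt.congr_of_eventuallyEq ?_ this
      have hc : ContDiffAt ℝ (⊤ : ℕ∞) (fun p : ℝ × ℝ => cuspY p.1) (x, y) :=
        ContDiffAt.comp (g := cuspY) (f := Prod.fst) (x, y) (hcY x hx) contDiffAt_fst
      refine ContDiffAt.div ?_ (ContDiffAt.pow ?_ 2) (pow_ne_zero 2 (hq0 _ hx))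
      · exact hQ.contDiffAt.comp (x, y) (contDiffAt_fst.prodMk (contDiffAt_snd.prodMk hc))
      · exact contDiffAt_const.mul (((contDiffAt_snd.pow 2).add (contDiffAt_snd.mul hc)).add (hc.pow 2))
  refine ⟨w, KK.smooth cuspP_smooth ?_ hKK, fun p => (hwk p).symm⟩
  intro F _ _ w ⟨w0, ws, j, h, hh, he⟩ n
  exact cusp_bd_aux F j w h w0 ws hh he n

lemma bij_lower {E : Type} [NormedAddCommGroup E] [NormedSpace ℝ E] {F : E × ℝ → ℝ}
    (hF : ContDiff ℝ (⊤ : ℕ∞) F) (hd : fderiv ℝ F 0 (0, 1) ≠ 0) :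
    Function.Bijective (⇑(fderiv ℝ (fun p : E × ℝ => (p.1, F p)) 0)) := by
  have h : HasFDerivAt (fun p : E × ℝ => (p.1, F p))
      ((ContinuousLinearMap.fst ℝ E ℝ).prod (fderiv ℝ F 0)) 0 :=
    hasFDerivAt_fst.prodMk (hF.differentiable (by simp) 0).hasFDerivAt
  rw [h.fderiv]
  have key : ∀ (a : E) (b : ℝ), fderiv ℝ F 0 (a, b) = fderiv ℝ F 0 (a, 0) + b * fderiv ℝ F 0 (0, 1) := by
    intro a b
    have : ((a, b) : E × ℝ) = (a, 0) + b • (0, 1) := by simp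
    rw [this, map_add, map_smul, smul_eq_mul]
  constructor
  · rintro ⟨a, b⟩ ⟨c, d⟩ hh
    simp only [ContinuousLinearMap.prod_apply, ContinuousLinearMap.coe_fst', Prod.mk.injEq] at hh
    obtain ⟨rfl, h2⟩ := hh
    rw [key a b, key a d] at h2
    have := mul_right_cancel₀ hd (add_left_cancel h2)
    rw [this]
  · rintro ⟨a, b⟩
    refine ⟨(a, (b - fderiv ℝ F 0 (a, 0)) / fderiv ℝ F 0 (0, 1)), ?_⟩
    simp only [ContinuousLinearMap.prod_apply, ContinuousLinearMap.coe_fst']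
    rw [key]
    field_simp
    simp

lemma impl {E : Type} [NormedAddCommGroup E] [NormedSpace ℝ E] [FiniteDimensional ℝ E]
    {F : E × ℝ → ℝ} (hF : ContDiff ℝ (⊤ : ℕ∞) F) (F0 : F 0 = 0)
    (hd : fderiv ℝ F 0 (0, 1) ≠ 0) :
    ∃ W : E → ℝ, ContDiff ℝ (⊤ : ℕ∞) W ∧ W 0 = 0 ∧ ∀ᶠ p in 𝓝 (0 : E), F (p, W p) = 0 := by
  obtain ⟨K, hK, K0, -, -, h2⟩ := inv_germ (fun p : E × ℝ => (p.1, F p)) (contDiff_fst.prodMk hF)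
    (by simp [F0]) (bij_lower hF hd)
  refine ⟨fun p => (K (p, 0)).2, (hK.comp (contDiff_id.prodMk contDiff_const)).snd, ?_, ?_⟩
  · have : ((0 : E), (0 : ℝ)) = 0 := rfl
    simp [this, K0]
  · have ht : Tendsto (fun p : E => (p, (0 : ℝ))) (𝓝 0) (𝓝 0) :=
      (by fun_prop : Continuous (fun p : E => (p, (0 : ℝ)))).tendsto' 0 0 rfl
    filter_upwards [ht.eventually h2] with p hp
    have h1 := congrArg Prod.fst hp
    have h2 := congrArg Prod.snd hp
    simp only at h1 h2
    have : K (p, 0) = (p, (K (p, 0)).2) := Prod.ext h1 rfl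
    rw [← this]; exact h2

lemma fderiv_01 {E : Type} [NormedAddCommGroup E] [NormedSpace ℝ E] {F : E × ℝ → ℝ}
    (hF : ContDiff ℝ (⊤ : ℕ∞) F) {m : ℝ} (h : HasDerivAt (fun y => F (0, y)) m 0) :
    fderiv ℝ F 0 (0, 1) = m := by
  have h1 : HasFDerivAt F (fderiv ℝ F 0) ((0 : E), (0 : ℝ)) :=
    (hF.differentiable (by simp) _).hasFDerivAt
  have h2 : HasDerivAt (fun y : ℝ => ((0 : E), y)) ((0 : E), (1 : ℝ)) 0 :=
    (hasDerivAt_const _ _).prodMk (hasDerivAt_id _)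
  exact (h1.comp_hasDerivAt (0 : ℝ) h2).unique h

lemma cb_abs (x : ℝ) : |cb x| ^ 3 = |x| := by rw [← abs_pow, cb_pow]

lemma flat_cb_OO {E : ℝ → ℝ} (hE : Flat E) (n : ℕ) : OO n (fun x => E (cb x)) := by
  obtain ⟨C, hC, r, hr, hb⟩ := hE.2 (3 * n)
  refine ⟨C, hC, r ^ 3, by positivity, fun x hx => ?_⟩
  have h1 : |cb x| ≤ r := by
    rw [Real.norm_eq_abs, ← cb_abs] at hx
    exact le_of_pow_le_pow_left₀ (by norm_num) hr.le hx
  refine (hb _ h1).trans (le_of_eq ?_)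
  rw [Real.norm_eq_abs, Real.norm_eq_abs, pow_mul, cb_abs]

lemma flat_cb {E : ℝ → ℝ} (hE : Flat E) : Flat (fun x => E (cb x)) := by
  refine ⟨?_, flat_cb_OO hE⟩
  have : ∀ n : ℕ, ∀ E : ℝ → ℝ, Flat E → ContDiff ℝ n (fun x => E (cb x)) := by
    intro n
    induction n with
    | zero =>
      intro E hE
      rw [Nat.cast_zero, contDiff_zero, continuous_iff_continuousAt]
      intro x
      rcases eq_or_ne x 0 with rfl | hx
      · exact ((flat_cb_OO hE 2).hasFDerivAt le_rfl).continuousAt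
      · exact ContinuousAt.comp (g := E) (f := cb) hE.1.continuous.continuousAt (cb_smoothAt hx).continuousAt
    | succ n ih =>
      intro E hE
      have hE' : Flat (deriv E) := by
        refine ⟨(hE.1.fderiv_right (m := (⊤ : ℕ∞)) (by simp)).clm_apply contDiff_const, fun n => (hE.fd.2 n).of_le 1 1 one_pos fun p _ => ?_⟩
        rw [← norm_deriv_eq_norm_fderiv, one_mul]
      have hE1 : Flat (fun t : ℝ => (3 * t ^ 2)⁻¹ • deriv E t) := by
        refine hE'.div (q := fun t : ℝ => 3 * t ^ 2) (by fun_prop) 2 1 1 one_pos one_pos ?_ ?_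
        · intro p _
          rw [abs_of_nonneg (by positivity), Real.norm_eq_abs, sq_abs]; nlinarith [sq_nonneg p]
        · intro p hp; positivity
      have hd : ∀ x, HasDerivAt (fun x => E (cb x)) ((3 * (cb x) ^ 2)⁻¹ • deriv E (cb x)) x := by
        intro x
        rcases eq_or_ne x 0 with rfl | hx
        · have := ((flat_cb_OO hE 2).hasFDerivAt le_rfl).hasDerivAt
          refine this.congr_deriv ?_
          have : cb 0 = 0 := by have := cb_pow 0; simpa using this
          simp [this]
        · have hc : HasDerivAt cb (deriv cb x) x :=
            ((cb_smoothAt hx).differentiableAt (by simp)).hasDerivAt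
          have h3 := hc.pow 3
          have h4 : HasDerivAt (fun x => cb x ^ 3) 1 x := by
            have : (fun x => cb x ^ 3) = id := by funext x; simp [cb_pow]
            rw [this]; exact hasDerivAt_id x
          have h5 := h3.unique h4
          have hne : cb x ≠ 0 := by intro h; apply hx; rw [← cb_pow x, h]; simp
          have hEd : HasDerivAt E (deriv E (cb x)) (cb x) :=
            (hE.1.differentiable (by simp) _).hasDerivAt
          refine (hEd.comp x hc).congr_deriv ?_
          have : deriv cb x = (3 * (cb x) ^ 2)⁻¹ := by
            refine eq_inv_of_mul_eq_one_right ?_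
            simpa using h5
          rw [this, smul_eq_mul, mul_comm]
      rw [Nat.cast_succ, contDiff_succ_iff_deriv]
      refine ⟨fun x => (hd x).differentiableAt, by simp, ?_⟩
      have : deriv (fun x => E (cb x)) = fun x => (3 * (cb x) ^ 2)⁻¹ • deriv E (cb x) := by
        funext x; exact (hd x).deriv
      rw [this]
      exact ih _ hE1
  exact contDiff_infty.2 fun n => this n E hE

/-- the intermediate normal form -/
def Gk (κ : ℝ) (p : ℝ × ℝ) : ℝ :=
  p.1 ^ 2 * p.2 + p.2 ^ 4 + κ * (p.1 ^ 2 * p.2 ^ 2 / 2 + 4 * p.2 ^ 5 / 5)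

lemma Gk_smooth (κ : ℝ) : ContDiff ℝ (⊤ : ℕ∞) (Gk κ) := by unfold Gk; fun_prop

/-- second order remainder of `Gk` -/
def Rk (κ x y δ : ℝ) : ℝ :=
  6 * y ^ 2 + 4 * y * δ + δ ^ 2 +
    κ * (x ^ 2 / 2 + 8 * y ^ 3 + 8 * y ^ 2 * δ + 4 * y * δ ^ 2 + 4 * δ ^ 3 / 5)

lemma Gk_add (κ x y δ : ℝ) : Gk κ (x, y + δ) =
    Gk κ (x, y) + δ * (cuspP (x, y) * (1 + κ * y)) + δ ^ 2 * Rk κ x y δ := by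
  simp only [Gk, Rk, cuspP]; ring

lemma pdy_Gk (κ x y : ℝ) : pdy (Gk κ) (x, y) = cuspP (x, y) * (1 + κ * y) := by
  refine (hasDerivAt_pdy (Gk_smooth κ) x y).unique ?_
  simp only [Gk, cuspP]
  have h1 := (hasDerivAt_id y).const_mul (x ^ 2)
  have h2 := hasDerivAt_pow 4 y
  have h3 := ((hasDerivAt_pow 2 y).const_mul (x ^ 2)).div_const 2
  have h4 := ((hasDerivAt_pow 5 y).const_mul 4).div_const 5
  refine ((h1.add h2).add ((h3.add h4).const_mul κ)).congr_deriv ?_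
  simp; ring

lemma Flat.pdy' {h : ℝ × ℝ → ℝ} (H : Flat h) : Flat (pdy h) := by
  refine ⟨pdy_smooth H.1, fun n => (H.fd.2 n).of_le 1 1 one_pos fun p _ => ?_⟩
  calc _ ≤ ‖fderiv ℝ h p‖ * ‖((0, 1) : ℝ × ℝ)‖ := ContinuousLinearMap.le_opNorm _ _
    _ = _ := by simp [Prod.norm_def]

/-- the critical curve of the perturbed function -/
lemma crit_curve (κ : ℝ) {h : ℝ × ℝ → ℝ} (hh : Flat h) :
    ∃ E : ℝ → ℝ, Flat E ∧ ∀ᶠ t in 𝓝 (0 : ℝ),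
      pdy (Gk κ) (2 * t ^ 3, -t ^ 2 + E t) + pdy h (2 * t ^ 3, -t ^ 2 + E t) = 0 := by
  obtain ⟨h₂, hh₂, he₂⟩ : ∃ h₂ : ℝ × ℝ → ℝ, Flat h₂ ∧ ∀ p, pdy h p = (p.1 ^ 2 + p.2 ^ 2) ^ 2 * h₂ p := by
    have hne : ∀ p : ℝ × ℝ, p ≠ 0 → (p.1 ^ 2 + p.2 ^ 2) ^ 2 ≠ 0 := by
      rintro ⟨x, y⟩ hp
      apply pow_ne_zero
      intro h0
      apply hp
      have hx : x = 0 := by simp only at h0; nlinarith [sq_nonneg x, sq_nonneg y]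
      have hy : y = 0 := by simp only at h0; nlinarith [sq_nonneg x, sq_nonneg y]
      simp [hx, hy]
    refine ⟨_, hh.pdy'.div (q := fun p : ℝ × ℝ => (p.1 ^ 2 + p.2 ^ 2) ^ 2) (by fun_prop) 4 1 1
      one_pos one_pos ?_ hne, ?_⟩
    · rintro ⟨x, y⟩ _
      rw [abs_of_nonneg (by positivity), one_mul, show (4 : ℕ) = 2 * 2 from rfl, pow_mul]
      refine pow_le_pow_left₀ (by positivity) ?_ 2
      rw [Prod.norm_def]
      simp only [Real.norm_eq_abs]
      rcases max_cases |x| |y| with ⟨h, -⟩ | ⟨h, -⟩ <;> rw [h, sq_abs] <;>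
        nlinarith [sq_nonneg x, sq_nonneg y]
    · intro p
      rcases eq_or_ne p 0 with rfl | hp
      · simp [hh.pdy'.zero]
      · rw [smul_eq_mul, ← mul_assoc, mul_inv_cancel₀ (hne p hp), one_mul]
  let γ : ℝ × ℝ → ℝ × ℝ := fun p => (2 * p.1 ^ 3, -p.1 ^ 2 + p.1 ^ 4 * p.2)
  have hγ : ContDiff ℝ (⊤ : ℕ∞) γ := by fun_prop
  let U : ℝ × ℝ → ℝ := fun p => 4 * (3 - 3 * p.1 ^ 2 * p.2 + p.1 ^ 4 * p.2 ^ 2) *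
    (1 + κ * (-p.1 ^ 2 + p.1 ^ 4 * p.2))
  let V : ℝ × ℝ → ℝ := fun p => (4 * p.1 ^ 2 + (1 - p.1 ^ 2 * p.2) ^ 2) ^ 2
  have hU : ContDiff ℝ (⊤ : ℕ∞) U := by fun_prop
  have hV : ContDiff ℝ (⊤ : ℕ∞) V := by fun_prop
  let L : ℝ × ℝ → ℝ := fun p => p.2 * U p + V p * h₂ (γ p)
  have hL : ContDiff ℝ (⊤ : ℕ∞) L :=
    (contDiff_snd.mul hU).add (hV.mul (hh₂.1.comp hγ))
  have hL0 : fderiv ℝ L 0 (0, 1) = 12 := by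
    refine fderiv_01 hL ?_
    have : (fun y : ℝ => L (0, y)) = fun y => y * 12 := by
      funext y
      have := hh₂.zero
      simp only [L, U, V, γ]
      norm_num [this, show ((0 : ℝ), (0 : ℝ)) = 0 from rfl]
    rw [this]
    simpa using (hasDerivAt_id (0 : ℝ)).mul_const 12
  obtain ⟨W, hW, W0, hWe⟩ := impl hL (by
    have h0 : h₂ (0, 0) = 0 := hh₂.zero
    simp [L, γ, h0]) (by rw [hL0]; norm_num)
  have hpair : ContDiff ℝ (⊤ : ℕ∞) (fun t : ℝ => (t, W t)) := contDiff_id.prodMk hW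
  have hfl : Flat (fun t => V (t, W t) * h₂ (γ (t, W t))) := by
    refine (hh₂.comp (hγ.comp hpair) (by simp [γ])).mul (hV.comp hpair)
  have hUW : ∀ᶠ t in 𝓝 (0 : ℝ), 1 < |U (t, W t)| := by
    have : ContinuousAt (fun t => |U (t, W t)|) 0 := (hU.comp hpair).continuous.abs.continuousAt
    refine this.eventually (lt_mem_nhds ?_)
    simp [U, W0]; norm_num
  have hWf : Flat W := by
    refine ⟨hW, fun n => ?_⟩
    obtain ⟨r, hr, hrU⟩ := Metric.nhds_basis_closedBall.mem_iff.1 (hWe.and hUW)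
    refine (hfl.2 n).of_le 1 r hr fun t ht => ?_
    obtain ⟨h1, h2⟩ := hrU (mem_closedBall_zero_iff.2 ht)
    have h3 : V (t, W t) * h₂ (γ (t, W t)) = - (W t * U (t, W t)) := by
      simp only [L] at h1; linarith
    rw [h3, norm_neg, norm_mul, one_mul]
    have h2' : 1 ≤ ‖U (t, W t)‖ := h2.le
    nlinarith [norm_nonneg (W t)]
  refine ⟨fun t => t ^ 4 * W t, hWf.mul (a := fun t => t ^ 4) (by fun_prop), ?_⟩
  filter_upwards [hWe] with t ht
  rw [pdy_Gk, he₂]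
  simp only [L, U, V, γ] at ht
  simp only [cuspP]
  linear_combination (t ^ 8) * ht

theorem flat_stage (κ : ℝ) {h : ℝ × ℝ → ℝ} (hh : Flat h) :
    Eqv (fun p => (p.1, Gk κ p + h p)) (fun p => (p.1, Gk κ p)) := by
  obtain ⟨E, hE, hEc⟩ := crit_curve κ hh
  let e : ℝ → ℝ := fun x => E (cb (x / 2))
  have he : Flat e := (flat_cb hE).comp (T := fun x : ℝ => x / 2) (by fun_prop) (by simp)
  let Cc : ℝ → ℝ := fun t => h (2 * t ^ 3, -t ^ 2 + E t) +
    (cuspP (2 * t ^ 3, -t ^ 2) * (1 + κ * (-t ^ 2)) + E t * Rk κ (2 * t ^ 3) (-t ^ 2) (E t)) * E t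
  have hEs : ContDiff ℝ (⊤ : ℕ∞) E := hE.1
  have hCc : Flat Cc := by
    refine Flat.add (hh.comp (T := fun t : ℝ => (2 * t ^ 3, -t ^ 2 + E t)) (by fun_prop) (by simp [hE.zero])) ?_
    refine hE.mul ?_
    unfold cuspP Rk
    fun_prop
  let c : ℝ → ℝ := fun x => Cc (cb (x / 2))
  have hc : Flat c := (flat_cb hCc).comp (T := fun x : ℝ => x / 2) (by fun_prop) (by simp)
  have hxt : ∀ x : ℝ, 2 * cb (x / 2) ^ 3 = x := by intro x; rw [cb_pow]; ring
  have hcx : ∀ x, c x = Gk κ (x, cuspY x + e x) + h (x, cuspY x + e x) - Gk κ (x, cuspY x) := by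
    intro x
    simp only [c, Cc, e, cuspY, hxt]
    rw [Gk_add]; ring
  have hcr : ∀ᶠ x in 𝓝 (0 : ℝ), pdy (Gk κ) (x, cuspY x + e x) + pdy h (x, cuspY x + e x) = 0 := by
    have ht : Tendsto (fun x => cb (x / 2)) (𝓝 0) (𝓝 0) := by
      rw [Metric.tendsto_nhds_nhds]
      intro ε hε
      refine ⟨2 * ε ^ 3, by positivity, fun {x} hx => ?_⟩
      rw [dist_zero_right, Real.norm_eq_abs] at hx ⊢
      refine lt_of_pow_lt_pow_left₀ 3 hε.le ?_
      rw [cb_abs, abs_div, abs_two]; linarith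
    filter_upwards [ht.eventually hEc] with x hx
    rw [hxt] at hx
    exact hx
  have hes : ContDiff ℝ (⊤ : ℕ∞) e := he.1
  have hcs : ContDiff ℝ (⊤ : ℕ∞) c := hc.1
  have hGs := Gk_smooth κ
  have hhs := hh.1
  let k : ℝ × ℝ → ℝ := fun p => Gk κ (p.1, p.2 + e p.1) + h (p.1, p.2 + e p.1) - c p.1 - Gk κ p
  have hk : Flat k := by
    have h1 : Flat (fun p : ℝ × ℝ => h (p.1, p.2 + e p.1)) :=
      hh.comp (T := fun p : ℝ × ℝ => (p.1, p.2 + e p.1)) (by fun_prop) (by simp [he.zero])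
    have h2 : Flat (fun p : ℝ × ℝ => c p.1) := hc.comp (T := Prod.fst) (by fun_prop) (by simp)
    have h3 : Flat (fun p : ℝ × ℝ => e p.1) := he.comp (T := Prod.fst) (by fun_prop) (by simp)
    have h4 : Flat (fun p : ℝ × ℝ =>
        (cuspP p * (1 + κ * p.2) + e p.1 * Rk κ p.1 p.2 (e p.1)) * e p.1) := by
      refine h3.mul (a := fun p : ℝ × ℝ => cuspP p * (1 + κ * p.2) + e p.1 * Rk κ p.1 p.2 (e p.1)) ?_
      unfold cuspP Rk
      fun_prop
    have := (h4.add h1).sub h2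
    convert this using 1
    funext ⟨x, y⟩
    simp only [k]
    rw [Gk_add]; ring
  obtain ⟨r, hr, hrU⟩ := Metric.nhds_basis_closedBall.mem_iff.1 hcr
  let χ : ContDiffBump (0 : ℝ) := ⟨r / 2, r, by linarith, by linarith⟩
  have hχ : ContDiff ℝ (⊤ : ℕ∞) χ := χ.contDiff
  have hk' : Flat (fun p : ℝ × ℝ => χ p.1 * k p) :=
    hk.mul (a := fun p : ℝ × ℝ => χ p.1) (by exact hχ.comp contDiff_fst)
  obtain ⟨w, hw, hwe⟩ := cusp_div hk' (by
    intro x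
    simp only [k, hcx]; ring) (by
    intro x
    have h1 := hasDerivAt_pdy hk'.1 x (cuspY x)
    have h2 := (hasDerivAt_pdy hk.1 x (cuspY x)).const_mul (χ x)
    have h3 := h1.unique h2
    rw [h3]
    by_cases hx : |x| ≤ r
    · have h4 := hrU (mem_closedBall_zero_iff.2 hx)
      simp only [Set.mem_ofPred_eq] at h4
      have hsh : HasDerivAt (fun y => y + e x) 1 (cuspY x) := (hasDerivAt_id _).add_const _
      have g1 := (hasDerivAt_pdy hGs x (cuspY x + e x)).comp (cuspY x) hsh
      have g2 := (hasDerivAt_pdy hhs x (cuspY x + e x)).comp (cuspY x) hsh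
      have g3 := hasDerivAt_pdy hGs x (cuspY x)
      have g4 := ((g1.add g2).sub_const (c x)).sub g3
      have g5 := (hasDerivAt_pdy hk.1 x (cuspY x)).unique g4
      rw [g5, mul_one, mul_one, h4, pdy_Gk, cuspP_eq]; ring
    · have : χ x = 0 := by
        apply χ.zero_of_le_dist
        rw [dist_zero_right]; exact (not_le.1 hx).le
      rw [this, zero_mul])
  have hws := hw.1
  -- solve for `η`
  let F : (ℝ × ℝ) × ℝ → ℝ := fun q => q.2 * (1 + κ * q.1.2) +
    q.2 ^ 2 * Rk κ q.1.1 q.1.2 (cuspP q.1 * q.2) - w q.1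
  have hF : ContDiff ℝ (⊤ : ℕ∞) F := by
    unfold F Rk cuspP
    fun_prop
  have hF1 : fderiv ℝ F 0 (0, 1) = 1 := by
    refine fderiv_01 hF ?_
    have : (fun y : ℝ => F (0, y)) = fun y => y := by
      funext y
      simp [F, Rk, cuspP, hw.zero]
    rw [this]
    exact hasDerivAt_id _
  obtain ⟨η, hη, η0, hηe⟩ := impl hF (by simp [F, hw.zero]) (by rw [hF1]; norm_num)
  have hP := cuspP_smooth
  have hYs : ContDiff ℝ (⊤ : ℕ∞) (fun p : ℝ × ℝ =>
      p.2 - e p.1 + cuspP (p.1, p.2 - e p.1) * η (p.1, p.2 - e p.1)) := by fun_prop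
  refine ⟨fun p => (p.1, p.2 - e p.1 + cuspP (p.1, p.2 - e p.1) * η (p.1, p.2 - e p.1)),
    fun p => (p.1, p.2 - c p.1), contDiff_fst.prodMk hYs, by fun_prop, ?_, ?_, ?_, ?_, ?_⟩
  · simp [he.zero, cuspP]
  · simp [hc.zero]
  · refine bij_lower hYs ?_
    rw [fderiv_01 hYs (m := 1)]
    · norm_num
    · simp only [he.zero, sub_zero]
      have hg : HasDerivAt (fun y : ℝ => η (0, y)) (pdy η (0, 0)) 0 := hasDerivAt_pdy hη 0 0
      have hp : HasDerivAt (fun y : ℝ => cuspP (0, y)) (pdy cuspP (0, 0)) 0 := hasDerivAt_pdy hP 0 0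
      refine ((hasDerivAt_id (0 : ℝ)).add (hp.mul hg)).congr_deriv ?_
      have : pdy cuspP (0, 0) = 0 := by simp [pdy, dop, pdy_cuspP]
      rw [this]; simp [cuspP]
  · have hSs : ContDiff ℝ (⊤ : ℕ∞) (fun p : ℝ × ℝ => p.2 - c p.1) := by fun_prop
    refine bij_lower hSs ?_
    rw [fderiv_01 hSs (m := 1)]
    · norm_num
    · exact (hasDerivAt_id (0 : ℝ)).sub_const (c 0)
  · have hT : Tendsto (fun p : ℝ × ℝ => (p.1, p.2 - e p.1)) (𝓝 0) (𝓝 0) :=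
      tendsto_zero_of_smooth (T := fun p : ℝ × ℝ => (p.1, p.2 - e p.1)) (by fun_prop) (by simp [he.zero])
    have hχ1 : ∀ᶠ p : ℝ × ℝ in 𝓝 0, χ p.1 = 1 := by
      have : Tendsto (fun p : ℝ × ℝ => p.1) (𝓝 0) (𝓝 0) := continuous_fst.tendsto' _ _ rfl
      exact this.eventually χ.eventuallyEq_one
    filter_upwards [hT.eventually hηe, hχ1] with p h1 h2
    obtain ⟨x, y⟩ := p
    simp only at h1 h2 ⊢
    have h3 := hwe (x, y - e x)
    simp only [h2, k, sub_add_cancel] at h3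
    rw [Gk_add]
    simp only [F] at h1
    refine Prod.ext rfl ?_
    simp only
    linear_combination h3 - cuspP (x, y - e x) ^ 2 * h1

/-- weighted order estimate -/
def Ow (w1 w2 k : ℕ) (u : ℝ × ℝ → ℝ) : Prop :=
  ∃ C : ℝ, 0 ≤ C ∧ ∃ s0 : ℝ, 0 < s0 ∧ ∀ s, 0 < s → s ≤ s0 → ∀ x y : ℝ,
    |x| ≤ s ^ w1 → |y| ≤ s ^ w2 → |u (x, y)| ≤ C * s ^ k

section ow
variable {w1 w2 k l : ℕ} {u v : ℝ × ℝ → ℝ}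

lemma Ow.add (hu : Ow w1 w2 k u) (hv : Ow w1 w2 k v) : Ow w1 w2 k (fun p => u p + v p) := by
  obtain ⟨C, hC, s0, hs0, h⟩ := hu
  obtain ⟨C', hC', s0', hs0', h'⟩ := hv
  refine ⟨C + C', by positivity, min s0 s0', by positivity, fun s hs hs' x y hx hy => ?_⟩
  have h1 := h s hs (hs'.trans (min_le_left _ _)) x y hx hy
  have h2 := h' s hs (hs'.trans (min_le_right _ _)) x y hx hy
  exact (abs_add_le _ _).trans (by linarith)

lemma Ow.neg (hu : Ow w1 w2 k u) : Ow w1 w2 k (fun p => - u p) := by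
  simpa only [Ow, abs_neg] using hu

lemma Ow.sub (hu : Ow w1 w2 k u) (hv : Ow w1 w2 k v) : Ow w1 w2 k (fun p => u p - v p) := by
  simpa only [sub_eq_add_neg] using hu.add hv.neg

lemma Ow.congr (hu : Ow w1 w2 k u) (h : ∀ p, v p = u p) : Ow w1 w2 k v := by
  have : v = u := funext h
  rwa [this]

lemma Ow.mul (hu : Ow w1 w2 k u) (hv : Ow w1 w2 l v) : Ow w1 w2 (k + l) (fun p => u p * v p) := by
  obtain ⟨C, hC, s0, hs0, h⟩ := hu
  obtain ⟨C', hC', s0', hs0', h'⟩ := hv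
  refine ⟨C * C', by positivity, min s0 s0', by positivity, fun s hs hs' x y hx hy => ?_⟩
  have h1 := h s hs (hs'.trans (min_le_left _ _)) x y hx hy
  have h2 := h' s hs (hs'.trans (min_le_right _ _)) x y hx hy
  calc _ = |u (x, y)| * |v (x, y)| := abs_mul _ _
    _ ≤ (C * s ^ k) * (C' * s ^ l) := mul_le_mul h1 h2 (abs_nonneg _) (by positivity)
    _ = _ := by ring

lemma Ow.mono (hu : Ow w1 w2 l u) (hkl : k ≤ l) : Ow w1 w2 k u := by
  obtain ⟨C, hC, s0, hs0, h⟩ := hu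
  refine ⟨C, hC, min s0 1, by positivity, fun s hs hs' x y hx hy => ?_⟩
  refine (h s hs (hs'.trans (min_le_left _ _)) x y hx hy).trans ?_
  exact mul_le_mul_of_nonneg_left
    (pow_le_pow_of_le_one hs.le (hs'.trans (min_le_right _ _)) hkl) hC

lemma Ow.const (c : ℝ) : Ow w1 w2 0 (fun _ => c) :=
  ⟨|c|, abs_nonneg _, 1, one_pos, fun s _ _ x y _ _ => by simp⟩

lemma Ow.zero_fun : Ow w1 w2 k (fun _ => 0) :=
  ⟨0, le_rfl, 1, one_pos, fun s _ _ x y _ _ => by simp⟩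

lemma Ow.fst : Ow w1 w2 w1 (fun p => p.1) :=
  ⟨1, by norm_num, 1, one_pos, fun s _ _ x y hx _ => by simpa using hx⟩

lemma Ow.snd : Ow w1 w2 w2 (fun p => p.2) :=
  ⟨1, by norm_num, 1, one_pos, fun s _ _ x y _ hy => by simpa using hy⟩

lemma Ow.const_mul (c : ℝ) (hu : Ow w1 w2 k u) : Ow w1 w2 k (fun p => c * u p) := by
  simpa using (Ow.const c).mul hu

lemma Ow.pow (hu : Ow w1 w2 k u) (n : ℕ) : Ow w1 w2 (k * n) (fun p => u p ^ n) := by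
  induction n with
  | zero => simpa using Ow.const 1
  | succ n ih => simpa only [pow_succ, Nat.mul_succ] using ih.mul hu

lemma Ow.sum {ι : Type} (S : Finset ι) {U : ι → ℝ × ℝ → ℝ} (h : ∀ i ∈ S, Ow w1 w2 k (U i)) :
    Ow w1 w2 k (fun p => ∑ i ∈ S, U i p) := by
  classical
  induction S using Finset.induction_on with
  | empty => simpa using Ow.zero_fun
  | insert a S ha ih =>
    have h1 := (h a (Finset.mem_insert_self _ _)).add (ih fun i hi => h i (Finset.mem_insert_of_mem hi))
    exact h1.congr fun p => by rw [Finset.sum_insert ha]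

lemma Ow.monomial (c : ℝ) (i j : ℕ) : Ow w1 w2 (w1 * i + w2 * j) (fun p => c * p.1 ^ i * p.2 ^ j) :=
  ((Ow.const_mul c (Ow.fst.pow i)).mul (Ow.snd.pow j))

lemma small_pow (w : ℕ) (hw : 1 ≤ w) {r : ℝ} {s : ℝ} (hs : 0 < s) (h : s ≤ min 1 r) :
    s ^ w ≤ r := by
  calc s ^ w ≤ s ^ 1 := pow_le_pow_of_le_one hs.le (h.trans (min_le_left _ _)) hw
    _ ≤ r := by simpa using h.trans (min_le_right _ _)

lemma Ow.of_cont (h1 : 1 ≤ w1) (h2 : 1 ≤ w2) (hu : Continuous u) : Ow w1 w2 0 u := by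
  obtain ⟨M, r, hr, hM, hb⟩ := cont_bound hu
  refine ⟨M, hM, min 1 r, by positivity, fun s hs hs' x y hx hy => ?_⟩
  simpa using hb (x, y) (by
    rw [Prod.norm_def]
    exact max_le (hx.trans (small_pow w1 h1 hs hs')) (hy.trans (small_pow w2 h2 hs hs')))

lemma Ow.eq_zero (hk : 1 ≤ k) (hu : Ow w1 w2 k u) : u 0 = 0 := by
  obtain ⟨C, hC, s0, hs0, h⟩ := hu.mono hk
  have h1 : ∀ᶠ s in 𝓝[>] (0 : ℝ), |u 0| ≤ C * s ^ 1 := by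
    filter_upwards [Ioc_mem_nhdsGT hs0] with s hs
    exact h s hs.1 hs.2 0 0 (by simpa using pow_nonneg hs.1.le _) (by simpa using pow_nonneg hs.1.le _)
  have h2 : Tendsto (fun s : ℝ => C * s ^ 1) (𝓝[>] 0) (𝓝 0) :=
    ((by fun_prop : Continuous fun s : ℝ => C * s ^ 1).tendsto' 0 0 (by simp)).mono_left inf_le_left
  have := ge_of_tendsto h2 h1
  exact abs_eq_zero.1 (le_antisymm this (abs_nonneg _))

lemma deriv_zero_of_bound {φ : ℝ → ℝ} {m C s0 : ℝ} {w k : ℕ} (hw : 1 ≤ w) (hk : w < k) (hs0 : 0 < s0)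
    (hφ : HasDerivAt φ m 0)
    (φ0 : φ 0 = 0) (h : ∀ s, 0 < s → s ≤ s0 → |φ (s ^ w)| ≤ C * s ^ k) : m = 0 := by
  have h1 : Tendsto (fun s : ℝ => s ^ w) (𝓝[>] 0) (𝓝[≠] 0) := by
    refine tendsto_nhdsWithin_iff.2 ⟨?_, ?_⟩
    · exact ((by fun_prop : Continuous fun s : ℝ => s ^ w).tendsto' 0 0
        (by simp; omega)).mono_left inf_le_left
    · filter_upwards [self_mem_nhdsWithin] with s hs
      exact (pow_pos hs w).ne'
  have h2 := (hφ.tendsto_slope_zero.comp h1).abs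
  have h3 : Tendsto (fun s : ℝ => C * s ^ (k - w)) (𝓝[>] 0) (𝓝 0) :=
    ((by fun_prop : Continuous fun s : ℝ => C * s ^ (k - w)).tendsto' 0 0
      (by simp; right; omega)).mono_left inf_le_left
  have h4 := le_of_tendsto_of_tendsto h2 h3 (by
    filter_upwards [Ioc_mem_nhdsGT hs0] with s hs
    have hp := pow_pos hs.1 w
    simp only [Function.comp, zero_add, φ0, sub_zero, smul_eq_mul, abs_mul, abs_inv]
    rw [abs_of_pos hp, inv_mul_le_iff₀ hp]
    refine (h s hs.1 hs.2).trans (le_of_eq ?_)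
    rw [mul_left_comm, ← pow_add]; congr 2; omega)
  exact abs_eq_zero.1 (le_antisymm h4 (abs_nonneg _))

lemma Ow.pdx_zero (h1 : 1 ≤ w1) (hk : w1 < k) (hs : ContDiff ℝ (⊤ : ℕ∞) u) (hu : Ow w1 w2 k u) :
    pdx u 0 = 0 := by
  have u0 := hu.eq_zero (by omega)
  obtain ⟨C, hC, s0, hs0, h⟩ := hu
  refine deriv_zero_of_bound h1 hk hs0 (hasDerivAt_pdx hs 0 0) u0 (C := C) fun s hs hs' => ?_
  exact h s hs hs' _ _ (by rw [abs_of_pos (by positivity)]) (by simp; positivity)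

lemma Ow.pdy_zero (h1 : 1 ≤ w2) (hk : w2 < k) (hs : ContDiff ℝ (⊤ : ℕ∞) u) (hu : Ow w1 w2 k u) :
    pdy u 0 = 0 := by
  have u0 := hu.eq_zero (by omega)
  obtain ⟨C, hC, s0, hs0, h⟩ := hu
  refine deriv_zero_of_bound h1 hk hs0 (hasDerivAt_pdy hs 0 0) u0 (C := C) fun s hs hs' => ?_
  exact h s hs hs' _ _ (by simp; positivity) (by rw [abs_of_pos (by positivity)])

lemma Ow.flat (hs : ContDiff ℝ (⊤ : ℕ∞) u) (hu : ∀ k, Ow 3 2 k u) : Flat u := by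
  refine ⟨hs, fun n => ?_⟩
  obtain ⟨C, hC, s0, hs0, h⟩ := hu (3 * n)
  refine ⟨C, hC, min 1 (s0 ^ 3), by positivity, ?_⟩
  rintro ⟨x, y⟩ hp
  rcases eq_or_ne ((x, y) : ℝ × ℝ) 0 with h0 | h0
  · rw [h0, (hu 1).eq_zero le_rfl]; simp; positivity
  have hn : 0 < ‖((x, y) : ℝ × ℝ)‖ := norm_pos_iff.2 h0
  have hx : |x| ≤ ‖((x, y) : ℝ × ℝ)‖ := norm_fst_le (x, y)
  have hy : |y| ≤ ‖((x, y) : ℝ × ℝ)‖ := norm_snd_le (x, y)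
  set ρ := ‖((x, y) : ℝ × ℝ)‖ with hρ
  have h3 : |cb ρ| ^ 3 = ρ := by rw [cb_abs, abs_of_pos hn]
  have hc0 : 0 < |cb ρ| := by
    rcases (abs_nonneg (cb ρ)).eq_or_lt with h | h
    · rw [← h] at h3; norm_num at h3; linarith
    · exact h
  have hc1 : |cb ρ| ≤ 1 := by
    refine le_of_pow_le_pow_left₀ (n := 3) (by norm_num) (by norm_num) ?_
    rw [h3]; simpa using hp.trans (min_le_left _ _)
  have hc2 : |cb ρ| ≤ s0 := by
    refine le_of_pow_le_pow_left₀ (n := 3) (by norm_num) hs0.le ?_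
    rw [h3]; exact hp.trans (min_le_right _ _)
  have := h _ hc0 hc2 x y (by rw [h3]; exact hx)
    (hy.trans (h3.symm.le.trans (pow_le_pow_of_le_one hc0.le hc1 (by norm_num))))
  rw [pow_mul, h3] at this
  exact this

lemma Ow.comp {F g : ℝ × ℝ → ℝ} {m : ℕ} (hF : Ow 3 8 m F) (hg : Ow 3 2 8 g) :
    Ow 3 2 m (fun p => F (p.1, g p)) := by
  obtain ⟨C, hC, s0, hs0, h⟩ := hF
  obtain ⟨C', hC', s0', hs0', h'⟩ := hg
  set R := max 1 C' with hR
  have hR1 : 1 ≤ R := le_max_left _ _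
  have hR0 : 0 < R := by linarith
  refine ⟨C * R ^ m, by positivity, min s0' (s0 / R), by positivity, fun s hs hs' x y hx hy => ?_⟩
  have h1 := h' s hs (hs'.trans (min_le_left _ _)) x y hx hy
  have h2 : R * s ≤ s0 := by
    have := hs'.trans (min_le_right _ _)
    rw [le_div_iff₀ hR0] at this; linarith
  have h3 := h (R * s) (by positivity) h2 x (g (x, y))
    (hx.trans (by
      rw [mul_pow]
      exact le_mul_of_one_le_left (by positivity) (one_le_pow₀ hR1)))
    (h1.trans (by
      rw [mul_pow]
      refine mul_le_mul_of_nonneg_right ?_ (by positivity)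
      exact (le_max_right 1 C').trans (le_self_pow₀ hR1 (by norm_num))))
  refine h3.trans (le_of_eq ?_)
  rw [mul_pow]; ring

/-- weighted homogeneous smooth functions -/
def WH (w1 w2 k : ℕ) (F : ℝ × ℝ → ℝ) : Prop :=
  ContDiff ℝ (⊤ : ℕ∞) F ∧ ∀ s x y : ℝ, F (s ^ w1 * x, s ^ w2 * y) = s ^ k * F (x, y)

lemma WH.add (hu : WH w1 w2 k u) (hv : WH w1 w2 k v) : WH w1 w2 k (fun p => u p + v p) :=
  ⟨hu.1.add hv.1, fun s x y => by simp only [hu.2, hv.2]; ring⟩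

lemma WH.const_mul (c : ℝ) (hu : WH w1 w2 k u) : WH w1 w2 k (fun p => c * u p) :=
  ⟨contDiff_const.mul hu.1, fun s x y => by simp only [hu.2]; ring⟩

lemma WH.zero_fun : WH w1 w2 k (fun _ => 0) := ⟨contDiff_const, fun s x y => by simp⟩

lemma WH.sum {ι : Type} (S : Finset ι) {U : ι → ℝ × ℝ → ℝ} (h : ∀ i ∈ S, WH w1 w2 k (U i)) :
    WH w1 w2 k (fun p => ∑ i ∈ S, U i p) := by
  refine ⟨ContDiff.sum fun i hi => (h i hi).1, fun s x y => ?_⟩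
  rw [Finset.mul_sum]
  exact Finset.sum_congr rfl fun i hi => (h i hi).2 s x y

lemma WH.monomial (c : ℝ) (i j : ℕ) (h : w1 * i + w2 * j = k) :
    WH w1 w2 k (fun p => c * p.1 ^ i * p.2 ^ j) := by
  refine ⟨by fun_prop, fun s x y => ?_⟩
  subst h
  simp only [mul_pow, pow_add, ← pow_mul]; ring

lemma WH.bound (hu : WH w1 w2 k u) : ∃ M, 0 ≤ M ∧ ∀ s, 0 < s → ∀ x y : ℝ,
    |x| ≤ s ^ w1 → |y| ≤ s ^ w2 → |u (x, y)| ≤ M * s ^ k := by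
  obtain ⟨M, hM⟩ := (isCompact_closedBall (0 : ℝ × ℝ) 1).exists_bound_of_continuousOn
    hu.1.continuous.continuousOn
  have hM0 : 0 ≤ M := (norm_nonneg _).trans (hM 0 (by simp))
  refine ⟨M, hM0, fun s hs x y hx hy => ?_⟩
  have h1 := pow_pos hs w1
  have h2 := pow_pos hs w2
  have h3 := hu.2 s (x / s ^ w1) (y / s ^ w2)
  rw [mul_div_cancel₀ _ h1.ne', mul_div_cancel₀ _ h2.ne'] at h3
  have h4 := hM (x / s ^ w1, y / s ^ w2) (by
    rw [mem_closedBall_zero_iff, Prod.norm_def]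
    refine max_le ?_ ?_
    · rw [Real.norm_eq_abs, abs_div, abs_of_pos h1]; exact div_le_one_of_le₀ hx h1.le
    · rw [Real.norm_eq_abs, abs_div, abs_of_pos h2]; exact div_le_one_of_le₀ hy h2.le)
  rw [h3, abs_mul, abs_of_pos (pow_pos hs k), mul_comm]
  exact mul_le_mul_of_nonneg_right h4 (by positivity)

lemma WH.ow (hu : WH w1 w2 k u) : Ow w1 w2 k u := by
  obtain ⟨M, hM0, hM⟩ := hu.bound
  exact ⟨M, hM0, 1, one_pos, fun s hs _ => hM s hs⟩

lemma WH.peel (h1 : 1 ≤ w1) (h2 : 1 ≤ w2) (hu : WH w1 w2 k u) (ho : Ow w1 w2 (k + 1) u) :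
    ∀ p, u p = 0 := by
  obtain ⟨C, hC, s0, hs0, h⟩ := ho
  rintro ⟨x, y⟩
  -- rescale
  set R := max 1 (max |x| |y|) with hR
  have hR1 : 1 ≤ R := le_max_left _ _
  have hR0 : 0 < R := by linarith
  have hb : ∀ᶠ s in 𝓝[>] (0 : ℝ), |u (x, y)| ≤ C * R ^ (k + 1) * s := by
    filter_upwards [Ioc_mem_nhdsGT (show 0 < s0 / R by positivity)] with s hs
    have hs1 : R * s ≤ s0 := by have := hs.2; rw [le_div_iff₀ hR0] at this; linarith
    have hs0 : 0 < s := hs.1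
    have key : ∀ (w : ℕ) (z : ℝ), 1 ≤ w → |z| ≤ R → |s ^ w * z| ≤ (R * s) ^ w := by
      intro w z hw hz
      rw [abs_mul, abs_of_pos (by positivity), mul_pow, mul_comm]
      exact mul_le_mul_of_nonneg_right (hz.trans (le_self_pow₀ hR1 (by omega))) (by positivity)
    have := h (R * s) (by positivity) hs1 (s ^ w1 * x) (s ^ w2 * y)
      (key w1 x h1 ((le_max_left _ _).trans (le_max_right _ _)))
      (key w2 y h2 ((le_max_right _ _).trans (le_max_right _ _)))
    rw [hu.2, abs_mul, abs_of_pos (by positivity)] at this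
    have hp : 0 < s ^ k := by positivity
    refine le_of_mul_le_mul_left (this.trans (le_of_eq ?_)) hp
    rw [mul_pow]; ring
  have h2 : Tendsto (fun s : ℝ => C * R ^ (k + 1) * s) (𝓝[>] 0) (𝓝 0) :=
    ((by fun_prop : Continuous fun s : ℝ => C * R ^ (k + 1) * s).tendsto' 0 0 (by simp)).mono_left inf_le_left
  have := ge_of_tendsto h2 hb
  exact abs_eq_zero.1 (le_antisymm this (abs_nonneg _))

lemma WH.peel_sum (h1 : 1 ≤ w1) (h2 : 1 ≤ w2) {F : ℕ → ℝ × ℝ → ℝ} {K : ℕ}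
    (hF : ∀ m, WH w1 w2 m (F m)) (ho : Ow w1 w2 K (fun p => ∑ m ∈ Finset.range K, F m p)) :
    ∀ m < K, ∀ p, F m p = 0 := by
  intro m
  induction m using Nat.strong_induction_on with
  | _ m ih =>
    intro hm
    refine (hF m).peel h1 h2 ?_
    have hr : Ow w1 w2 (m + 1) (fun p => ∑ i ∈ Finset.Ico (m + 1) K, F i p) :=
      Ow.sum _ fun i hi => (hF i).ow.mono (Finset.mem_Ico.1 hi).1
    refine ((ho.mono (by omega : m + 1 ≤ K)).sub hr).congr fun p => ?_
    rw [Finset.range_eq_Ico, ← Finset.sum_Ico_consecutive _ (Nat.zero_le m) hm.le,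
      ← Finset.sum_Ico_consecutive _ (Nat.le_succ m) hm, Finset.sum_eq_zero
        (s := Finset.Ico 0 m) (fun i hi => ih i (Finset.mem_Ico.1 hi).2 ((Finset.mem_Ico.1 hi).2.trans hm) p)]
    simp

end ow

lemma taylor_1d (n : ℕ) : ∀ (φ : ℕ → ℝ → ℝ) (M : ℝ), (∀ j y, HasDerivAt (φ j) (φ (j + 1) y) y) →
    (∀ ξ, |ξ| ≤ 1 → |φ n ξ| ≤ M) → ∀ y, |y| ≤ 1 →
    |φ 0 y - ∑ j ∈ Finset.range n, φ j 0 * y ^ j / (Nat.factorial j)| ≤ M * |y| ^ n := by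
  induction n with
  | zero => intro φ M _ hM y hy; simpa using hM y hy
  | succ n ih =>
    intro φ M hd hM y hy
    have hd' : ∀ ξ, HasDerivAt (fun y => φ 0 y - ∑ j ∈ Finset.range (n + 1), φ j 0 * y ^ j / (Nat.factorial j))
        (φ 1 ξ - ∑ j ∈ Finset.range n, φ (j + 1) 0 * ξ ^ j / (Nat.factorial j)) ξ := by
      intro ξ
      refine (hd 0 ξ).sub ?_
      have : ∀ j ∈ Finset.range (n + 1), HasDerivAt (fun y => φ j 0 * y ^ j / (Nat.factorial j))
          (φ j 0 * (j * ξ ^ (j - 1)) / (Nat.factorial j)) ξ :=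
        fun j _ => ((hasDerivAt_pow j ξ).const_mul _).div_const _
      refine (HasDerivAt.fun_sum this).congr_deriv ?_
      rw [Finset.sum_range_succ']
      simp only [Nat.cast_zero, zero_mul, mul_zero, zero_div, add_zero]
      refine Finset.sum_congr rfl fun j _ => ?_
      rw [Nat.factorial_succ]; push_cast
      have : (Nat.factorial j : ℝ) ≠ 0 := by positivity
      field_simp
      try simp
    have hb := ih (fun j => φ (j + 1)) M (fun j y => hd (j + 1) y) hM
    have hmv := (convex_uIcc 0 y).norm_image_sub_le_of_norm_hasDerivWithin_le (C := M * |y| ^ n)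
      (fun ξ _ => (hd' ξ).hasDerivWithinAt) (fun ξ hξ => by
        have hxi : |ξ| ≤ |y| := by simpa using Set.abs_sub_left_of_mem_uIcc hξ
        refine (hb ξ (hxi.trans hy)).trans ?_
        have hM0 : 0 ≤ M := (abs_nonneg _).trans (hM 0 (by simp))
        exact mul_le_mul_of_nonneg_left (pow_le_pow_left₀ (abs_nonneg _) hxi n) hM0)
      Set.left_mem_uIcc Set.right_mem_uIcc
    have h0 : φ 0 0 - ∑ j ∈ Finset.range (n + 1), φ j 0 * (0 : ℝ) ^ j / (Nat.factorial j) = 0 := by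
      rw [Finset.sum_range_succ']; simp
    simp only [Real.norm_eq_abs, sub_zero] at hmv
    rw [h0, sub_zero] at hmv
    refine hmv.trans (le_of_eq ?_)
    ring

lemma pdx_iter_smooth {u : ℝ × ℝ → ℝ} (hu : ContDiff ℝ (⊤ : ℕ∞) u) (i : ℕ) :
    ContDiff ℝ (⊤ : ℕ∞) (pdx^[i] u) := by
  induction i with
  | zero => exact hu
  | succ i ih => rw [Function.iterate_succ_apply']; exact pdx_smooth ih

lemma pdy_iter_smooth {u : ℝ × ℝ → ℝ} (hu : ContDiff ℝ (⊤ : ℕ∞) u) (i : ℕ) :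
    ContDiff ℝ (⊤ : ℕ∞) (pdy^[i] u) := by
  induction i with
  | zero => exact hu
  | succ i ih => rw [Function.iterate_succ_apply']; exact pdy_smooth ih

lemma box_bound {u : ℝ × ℝ → ℝ} (hu : ContDiff ℝ (⊤ : ℕ∞) u) :
    ∃ M, 0 ≤ M ∧ ∀ x y : ℝ, |x| ≤ 1 → |y| ≤ 1 → |u (x, y)| ≤ M := by
  obtain ⟨M, hM⟩ := (isCompact_closedBall (0 : ℝ × ℝ) 1).exists_bound_of_continuousOn
    hu.continuous.continuousOn
  refine ⟨M, (norm_nonneg _).trans (hM 0 (by simp)), fun x y hx hy => hM (x, y) ?_⟩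
  rw [mem_closedBall_zero_iff, Prod.norm_def]
  exact max_le hx hy

lemma taylor_2d {u : ℝ × ℝ → ℝ} (hu : ContDiff ℝ (⊤ : ℕ∞) u) (n : ℕ) :
    ∃ M, 0 ≤ M ∧ ∀ x y : ℝ, |x| ≤ 1 → |y| ≤ 1 →
      |u (x, y) - ∑ j ∈ Finset.range n, ∑ i ∈ Finset.range n, tcoeff u i j * x ^ i * y ^ j| ≤
        M * (|x| ^ n + |y| ^ n) := by
  obtain ⟨M, hM0, hM⟩ := box_bound (pdy_iter_smooth hu n)
  choose N hN0 hN using fun j => box_bound (pdx_iter_smooth (pdy_iter_smooth hu j) n)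
  refine ⟨M + ∑ j ∈ Finset.range n, N j, add_nonneg hM0 (Finset.sum_nonneg fun j _ => hN0 j),
    fun x y hx hy => ?_⟩
  have h1 := taylor_1d n (fun j y => (pdy^[j] u) (x, y)) M (fun j y => by
    simp only [Function.iterate_succ_apply']
    exact hasDerivAt_pdy (pdy_iter_smooth hu j) x y) (fun ξ hξ => hM x ξ hx hξ) y hy
  have h2 : ∀ j, |(pdy^[j] u) (x, 0) - ∑ i ∈ Finset.range n,
      (pdx^[i] (pdy^[j] u)) (0, 0) * x ^ i / (Nat.factorial i)| ≤ N j * |x| ^ n := fun j =>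
    taylor_1d n (fun i x => (pdx^[i] (pdy^[j] u)) (x, 0)) (N j) (fun i x => by
      simp only [Function.iterate_succ_apply']
      exact hasDerivAt_pdx (pdx_iter_smooth (pdy_iter_smooth hu j) i) x 0)
      (fun ξ hξ => hN j ξ 0 hξ (by simp)) x hx
  have h3 : ∀ j ∈ Finset.range n, |(pdy^[j] u) (x, 0) * y ^ j / (Nat.factorial j) -
      ∑ i ∈ Finset.range n, tcoeff u i j * x ^ i * y ^ j| ≤ N j * |x| ^ n := by
    intro j _
    have e : (pdy^[j] u) (x, 0) * y ^ j / (Nat.factorial j) -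
      ∑ i ∈ Finset.range n, tcoeff u i j * x ^ i * y ^ j = ((pdy^[j] u) (x, 0) - ∑ i ∈ Finset.range n,
      (pdx^[i] (pdy^[j] u)) (0, 0) * x ^ i / (Nat.factorial i)) * (y ^ j / (Nat.factorial j)) := by
      rw [sub_mul, Finset.sum_mul]
      congr 1
      · ring
      · refine Finset.sum_congr rfl fun i _ => ?_
        simp only [tcoeff, show (0 : ℝ × ℝ) = (0, 0) from rfl]
        have : (Nat.factorial j : ℝ) ≠ 0 := by positivity
        have : (Nat.factorial i : ℝ) ≠ 0 := by positivity
        field_simp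
    rw [e, abs_mul]
    have hy1 : |y ^ j / (Nat.factorial j : ℝ)| ≤ 1 := by
      rw [abs_div, abs_pow, abs_of_nonneg (by positivity : (0 : ℝ) ≤ Nat.factorial j)]
      refine div_le_one_of_le₀ ((pow_le_one₀ (abs_nonneg _) hy).trans ?_) (by positivity)
      exact_mod_cast Nat.factorial_pos j
    calc _ ≤ (N j * |x| ^ n) * 1 := mul_le_mul (h2 j) hy1 (abs_nonneg _)
          (mul_nonneg (hN0 j) (by positivity))
      _ = _ := mul_one _
  have h4 := (Finset.abs_sum_le_sum_abs _ _).trans (Finset.sum_le_sum h3)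
  rw [Finset.sum_sub_distrib, ← Finset.sum_mul] at h4
  simp only [Function.iterate_zero, id] at h1
  have hS := Finset.sum_nonneg (s := Finset.range n) fun j _ => hN0 j
  have hxn : 0 ≤ |x| ^ n := by positivity
  have hyn : 0 ≤ |y| ^ n := by positivity
  refine (abs_sub_le _ (∑ j ∈ Finset.range n, (pdy^[j] u) (x, 0) * y ^ j / (Nat.factorial j)) _).trans ?_
  nlinarith [mul_nonneg hS hyn, mul_nonneg hM0 hxn]

/-- weighted dilation -/
def dil (w1 w2 : ℕ) (s : ℝ) : ℝ × ℝ →L[ℝ] ℝ × ℝ :=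
  (s ^ w1 • ContinuousLinearMap.fst ℝ ℝ ℝ).prod (s ^ w2 • ContinuousLinearMap.snd ℝ ℝ ℝ)

lemma dil_apply (w1 w2 : ℕ) (s x y : ℝ) : dil w1 w2 s (x, y) = (s ^ w1 * x, s ^ w2 * y) := by
  simp [dil]

lemma dil_norm (w1 w2 : ℕ) {s : ℝ} (hs : 1 ≤ s) : ‖dil w1 w2 s‖ ≤ s ^ (w1 + w2) := by
  have h0 : 0 < s := by linarith
  refine ContinuousLinearMap.opNorm_le_bound _ (by positivity) ?_
  rintro ⟨x, y⟩
  rw [dil_apply, Prod.norm_def]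
  have hx : ‖x‖ ≤ ‖((x, y) : ℝ × ℝ)‖ := norm_fst_le (x, y)
  have hy : ‖y‖ ≤ ‖((x, y) : ℝ × ℝ)‖ := norm_snd_le (x, y)
  refine max_le ?_ ?_ <;> simp only [norm_mul, norm_pow, Real.norm_of_nonneg h0.le]
  · exact mul_le_mul (pow_le_pow_right₀ hs (by omega)) hx (norm_nonneg _) (by positivity)
  · exact mul_le_mul (pow_le_pow_right₀ hs (by omega)) hy (norm_nonneg _) (by positivity)

theorem borel_weighted (w1 w2 σ : ℕ) (h1 : 1 ≤ w1) (h2 : 1 ≤ w2) (F : ℕ → ℝ × ℝ → ℝ)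
    (hF : ∀ n, WH w1 w2 (n + σ) (F n)) :
    ∃ f : ℝ × ℝ → ℝ, ContDiff ℝ (⊤ : ℕ∞) f ∧
      ∀ n, Ow w1 w2 (n + σ) (fun p => f p - ∑ k ∈ Finset.range n, F k p) := by
  let χ : ContDiffBump (0 : ℝ × ℝ) := ⟨1, 2, by norm_num, by norm_num⟩
  have hχ : ContDiff ℝ (⊤ : ℕ∞) χ := χ.contDiff
  let H : ℕ → ℝ × ℝ → ℝ := fun k p => F k p * χ p
  have hH : ∀ k, ContDiff ℝ (⊤ : ℕ∞) (H k) := fun k => (hF k).1.mul hχ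
  have hHc : ∀ k, HasCompactSupport (H k) := fun k => χ.hasCompactSupport.mul_left
  have hB : ∀ k j, ∃ B, 0 ≤ B ∧ ∀ p, ‖iteratedFDeriv ℝ j (H k) p‖ ≤ B := by
    intro k j
    have hc : Continuous (iteratedFDeriv ℝ j (H k)) := (hH k).continuous_iteratedFDeriv (by exact_mod_cast le_top)
    obtain ⟨B, hB⟩ := ((hHc k).iteratedFDeriv j).exists_bound_of_continuous hc
    exact ⟨B, (norm_nonneg _).trans (hB 0), hB⟩
  choose B hB0 hB using hB
  choose M hM0 hM using fun k => (hF k).bound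
  let S : ℕ → ℝ := fun k => 1 + (∑ j ∈ Finset.range (k + 1), B k j) + M k
  have hSB : ∀ k, 0 ≤ ∑ j ∈ Finset.range (k + 1), B k j := fun k => Finset.sum_nonneg fun j _ => hB0 k j
  have hSj : ∀ k j, j ≤ k → B k j ≤ S k := by
    intro k j hj
    have := Finset.single_le_sum (s := Finset.range (k + 1)) (f := fun j => B k j) (fun j _ => hB0 k j)
      (Finset.mem_range.2 (by omega : j < k + 1))
    have := hM0 k
    simp only [S]; linarith
  have hSM : ∀ k, M k ≤ S k := by intro k; have := hSB k; simp only [S]; linarith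
  have hS1 : ∀ k, 1 ≤ S k := by intro k; have := hSB k; have := hM0 k; simp only [S]; linarith
  let lam : ℕ → ℝ := fun k => 2 ^ k * S k
  have hl1 : ∀ k, 1 ≤ lam k := fun k => one_le_mul_of_one_le_of_one_le (one_le_pow₀ (by norm_num)) (hS1 k)
  have hl0 : ∀ k, 0 < lam k := fun k => lt_of_lt_of_le one_pos (hl1 k)
  have hlS : ∀ k b, b ≤ S k → (lam k)⁻¹ * b ≤ (1 / 2) ^ k := by
    intro k b hb
    rw [inv_mul_le_iff₀ (hl0 k)]
    have : lam k * (1 / 2) ^ k = S k := by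
      simp only [lam]
      rw [mul_right_comm, ← mul_pow]; norm_num
    rw [this]; exact hb
  let T : ℕ → ℝ × ℝ → ℝ := fun k p => F k p * χ (dil w1 w2 (lam k) p)
  have hT : ∀ k, T k = fun p => ((lam k)⁻¹ ^ (k + σ)) • (H k ∘ dil w1 w2 (lam k)) p := by
    intro k
    funext ⟨x, y⟩
    simp only [T, H, Function.comp, smul_eq_mul, dil_apply]
    rw [(hF k).2, inv_pow]
    have := (pow_pos (hl0 k) (k + σ)).ne'
    field_simp
  have hTs : ∀ k, ContDiff ℝ (⊤ : ℕ∞) (T k) := fun k =>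
    (hF k).1.mul (hχ.comp (dil w1 w2 (lam k)).contDiff)
  have hinv1 : ∀ k, (lam k)⁻¹ ≤ 1 := fun k => inv_le_one_of_one_le₀ (hl1 k)
  have hTb : ∀ k j p, (w1 + w2) * j + 1 ≤ k → ‖iteratedFDeriv ℝ j (T k) p‖ ≤ (1 / 2) ^ k := by
    intro k j p hjk
    have hjk' : j ≤ k := by nlinarith
    have hc : ContDiff ℝ (⊤ : ℕ∞) (H k ∘ dil w1 w2 (lam k)) := (hH k).comp (dil w1 w2 (lam k)).contDiff
    rw [hT k]
    have e1 := iteratedFDeriv_const_smul_apply (𝕜 := ℝ) (a := (lam k)⁻¹ ^ (k + σ)) (x := p) (i := j)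
      (hc.contDiffAt.of_le (by exact_mod_cast le_top))
    have e1' : iteratedFDeriv ℝ j (fun p => ((lam k)⁻¹ ^ (k + σ)) • (H k ∘ dil w1 w2 (lam k)) p) p =
      ((lam k)⁻¹ ^ (k + σ)) • iteratedFDeriv ℝ j (H k ∘ dil w1 w2 (lam k)) p := e1
    rw [e1', norm_smul, (dil w1 w2 (lam k)).iteratedFDeriv_comp_right (hH k) p (by exact_mod_cast le_top)]
    have hn : ‖(iteratedFDeriv ℝ j (H k) (dil w1 w2 (lam k) p)).compContinuousLinearMap
        fun _ => dil w1 w2 (lam k)‖ ≤ B k j * (lam k ^ (w1 + w2)) ^ j := by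
      refine (ContinuousMultilinearMap.norm_compContinuousLinearMap_le _ _).trans ?_
      simp only [Finset.prod_const, Finset.card_univ, Fintype.card_fin]
      exact mul_le_mul (hB k j _) (pow_le_pow_left₀ (norm_nonneg _) (dil_norm w1 w2 (hl1 k)) j)
        (by positivity) (hB0 k j)
    have hli : 0 < (lam k)⁻¹ := inv_pos.2 (hl0 k)
    rw [Real.norm_of_nonneg (by positivity)]
    have hpow : (lam k)⁻¹ ^ (k + σ) ≤ (lam k)⁻¹ ^ ((w1 + w2) * j + 1) :=
      pow_le_pow_of_le_one hli.le (hinv1 k) (by omega)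
    calc _ ≤ (lam k)⁻¹ ^ ((w1 + w2) * j + 1) * (B k j * (lam k ^ (w1 + w2)) ^ j) :=
          mul_le_mul hpow hn (norm_nonneg _) (by positivity)
      _ = (lam k)⁻¹ * B k j := by
          rw [← pow_mul, pow_succ, inv_pow]
          have := (pow_pos (hl0 k) ((w1 + w2) * j)).ne'
          have := (hl0 k).ne'
          field_simp
      _ ≤ _ := hlS k _ (hSj k j hjk')
  refine ⟨fun p => ∑' k, T k p, ?_, ?_⟩
  · refine contDiff_tsum_of_eventually (v := fun _ k => (1 / 2) ^ k) hTs
      (fun _ _ => summable_geometric_two) fun j _ => ?_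
    rw [Nat.cofinite_eq_atTop]
    filter_upwards [eventually_ge_atTop ((w1 + w2) * j + 1)] with k hk p
    exact hTb k j p hk
  intro n
  -- the tail
  have htail : ∀ k s x y, 0 < s → s ≤ 1 → |x| ≤ s ^ w1 → |y| ≤ s ^ w2 → n + 1 ≤ k →
      |T k (x, y)| ≤ (1 / 2) ^ k * s ^ (n + σ) := by
    intro k s x y hs hs1 hx hy hk
    have hsn : 0 ≤ s ^ (n + σ) := by positivity
    by_cases hls : lam k * s ≤ 1
    · have hχ1 : |χ (dil w1 w2 (lam k) (x, y))| ≤ 1 := by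
        rw [abs_of_nonneg χ.nonneg]; exact χ.le_one
      have hF1 := hM k s hs x y hx hy
      have hF2 : M k * s ^ (k + σ) ≤ M k * (s * s ^ (n + σ)) := by
        refine mul_le_mul_of_nonneg_left ?_ (hM0 k)
        rw [← pow_succ']
        exact pow_le_pow_of_le_one hs.le hs1 (by omega)
      have hF3 : s ≤ (lam k)⁻¹ := by rw [← one_div, le_div_iff₀ (hl0 k)]; linarith
      calc |T k (x, y)| = |F k (x, y)| * |χ (dil w1 w2 (lam k) (x, y))| := abs_mul _ _
        _ ≤ |F k (x, y)| * 1 := mul_le_mul_of_nonneg_left hχ1 (abs_nonneg _)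
        _ ≤ M k * (s * s ^ (n + σ)) := by rw [mul_one]; exact hF1.trans hF2
        _ ≤ M k * ((lam k)⁻¹ * s ^ (n + σ)) :=
          mul_le_mul_of_nonneg_left (mul_le_mul_of_nonneg_right hF3 hsn) (hM0 k)
        _ = ((lam k)⁻¹ * M k) * s ^ (n + σ) := by ring
        _ ≤ _ := mul_le_mul_of_nonneg_right (hlS k _ (hSM k)) hsn
    · have hH1 : |H k (dil w1 w2 (lam k) (x, y))| ≤ B k 0 := by
        have := hB k 0 (dil w1 w2 (lam k) (x, y))
        rwa [norm_iteratedFDeriv_zero] at this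
      have hli : 0 < (lam k)⁻¹ := inv_pos.2 (hl0 k)
      have hF3 : (lam k)⁻¹ ≤ s := by
        rw [← one_div, div_le_iff₀ (hl0 k)]; linarith
      rw [hT k]
      simp only [Function.comp, smul_eq_mul]
      rw [abs_mul, abs_of_nonneg (by positivity)]
      calc _ ≤ ((lam k)⁻¹ * (lam k)⁻¹ ^ (n + σ)) * B k 0 := by
            refine mul_le_mul ?_ hH1 (abs_nonneg _) (by positivity)
            rw [← pow_succ']
            exact pow_le_pow_of_le_one hli.le (hinv1 k) (by omega)
        _ = ((lam k)⁻¹ * B k 0) * (lam k)⁻¹ ^ (n + σ) := by ring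
        _ ≤ _ := mul_le_mul (hlS k _ (hSj k 0 (Nat.zero_le _))) (pow_le_pow_left₀ hli.le hF3 _)
            (by positivity) (by positivity)
  have hsum : Ow w1 w2 (n + σ) (fun p => ∑ k ∈ Finset.range n, (T k p - F k p)) := by
    refine Ow.sum _ fun k _ => ?_
    refine ⟨0, le_rfl, (lam k)⁻¹, inv_pos.2 (hl0 k), fun s hs hs' x y hx hy => ?_⟩
    have hls : lam k * s ≤ 1 := by
      have := mul_le_mul_of_nonneg_left hs' (hl0 k).le
      rwa [mul_inv_cancel₀ (hl0 k).ne'] at this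
    have : χ (dil w1 w2 (lam k) (x, y)) = 1 := by
      apply χ.one_of_mem_closedBall
      rw [dil_apply, mem_closedBall_zero_iff, Prod.norm_def]
      have key : ∀ (w : ℕ) (z : ℝ), |z| ≤ s ^ w → ‖lam k ^ w * z‖ ≤ 1 := by
        intro w z hz
        rw [norm_mul, norm_pow, Real.norm_of_nonneg (hl0 k).le]
        calc _ ≤ lam k ^ w * s ^ w := mul_le_mul_of_nonneg_left hz (pow_nonneg (hl0 k).le _)
          _ = (lam k * s) ^ w := (mul_pow _ _ _).symm
          _ ≤ 1 := pow_le_one₀ (mul_nonneg (hl0 k).le hs.le) hls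
      exact max_le (key w1 x hx) (key w2 y hy)
    simp [T, this]
  have hTn : Ow w1 w2 (n + σ) (T n) := by
    have h0 : Ow w1 w2 0 (fun p => χ (dil w1 w2 (lam n) p)) :=
      Ow.of_cont h1 h2 (hχ.continuous.comp (dil w1 w2 (lam n)).continuous)
    exact (hF n).ow.mul h0
  have hrest : Ow w1 w2 (n + σ) (fun p => ∑' k, T (k + (n + 1)) p) := by
    refine ⟨2, by norm_num, 1, one_pos, fun s hs hs1 x y hx hy => ?_⟩
    rw [← Real.norm_eq_abs]
    refine tsum_of_norm_bounded (f := fun k => T (k + (n + 1)) (x, y))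
      (hasSum_geometric_two.mul_right (s ^ (n + σ))) fun k => ?_
    refine (htail (k + (n + 1)) s x y hs hs1 hx hy (by omega)).trans ?_
    refine mul_le_mul_of_nonneg_right ?_ (by positivity)
    exact pow_le_pow_of_le_one (by norm_num) (by norm_num) (by omega)
  refine ((hsum.add hTn).add hrest).congr fun p => ?_
  have hsm : Summable (fun k => T k p) := by
    rw [← summable_nat_add_iff 1]
    refine Summable.of_norm_bounded (g := fun k => (1 / 2 : ℝ) ^ (k + 1)) ?_ fun k => ?_
    · exact (summable_nat_add_iff 1).2 summable_geometric_two
    · have := hTb (k + 1) 0 p (by omega)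
      rwa [norm_iteratedFDeriv_zero] at this
  show (∑' k, T k p) - _ = _
  rw [← hsm.sum_add_tsum_nat_add (n + 1), Finset.sum_range_succ, Finset.sum_sub_distrib]
  ring

lemma taylorW {u : ℝ × ℝ → ℝ} (hu : ContDiff ℝ (⊤ : ℕ∞) u) (k : ℕ) :
    Ow 3 2 k (fun p => u p - ∑ j ∈ Finset.range k, ∑ i ∈ Finset.range k,
      if 3 * i + 2 * j < k then tcoeff u i j * p.1 ^ i * p.2 ^ j else 0) := by
  obtain ⟨M, hM0, hM⟩ := taylor_2d hu k
  have h1 : Ow 3 2 k (fun p => u p - ∑ j ∈ Finset.range k, ∑ i ∈ Finset.range k,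
      tcoeff u i j * p.1 ^ i * p.2 ^ j) := by
    refine ⟨M * 2, by positivity, 1, one_pos, fun s hs hs1 x y hx hy => ?_⟩
    refine (hM x y (hx.trans (pow_le_one₀ hs.le hs1)) (hy.trans (pow_le_one₀ hs.le hs1))).trans ?_
    rw [mul_assoc]
    refine mul_le_mul_of_nonneg_left ?_ hM0
    have e1 : |x| ^ k ≤ s ^ k := by
      refine pow_le_pow_left₀ (abs_nonneg _) (hx.trans ?_) _
      exact pow_le_of_le_one hs.le hs1 (by norm_num)
    have e2 : |y| ^ k ≤ s ^ k := by
      refine pow_le_pow_left₀ (abs_nonneg _) (hy.trans ?_) _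
      exact pow_le_of_le_one hs.le hs1 (by norm_num)
    linarith
  have h2 : Ow 3 2 k (fun p => ∑ j ∈ Finset.range k, ∑ i ∈ Finset.range k,
      if 3 * i + 2 * j < k then 0 else tcoeff u i j * p.1 ^ i * p.2 ^ j) := by
    refine Ow.sum _ fun j _ => Ow.sum _ fun i _ => ?_
    by_cases h : 3 * i + 2 * j < k
    · simp only [h, if_true]; exact Ow.zero_fun
    · simp only [h, if_false]
      exact (Ow.monomial _ i j).mono (by omega)
  refine (h1.add h2).congr fun p => ?_
  rw [sub_add, ← Finset.sum_sub_distrib]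
  congr 1
  refine Finset.sum_congr rfl fun j _ => ?_
  rw [← Finset.sum_sub_distrib]
  refine Finset.sum_congr rfl fun i _ => ?_
  split_ifs <;> simp

lemma lead {u : ℝ × ℝ → ℝ} {k : ℕ} (hu : ContDiff ℝ (⊤ : ℕ∞) u) (ho : Ow 3 2 k u) :
    ∃ c : ℕ → ℕ → ℝ, Ow 3 2 (k + 1) (fun p => u p - ∑ j ∈ Finset.range (k + 1),
      ∑ i ∈ Finset.range (k + 1), if 3 * i + 2 * j = k then c i j * p.1 ^ i * p.2 ^ j else 0) := by
  refine ⟨tcoeff u, ?_⟩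
  set F : ℕ → ℝ × ℝ → ℝ := fun m p => ∑ j ∈ Finset.range (k + 1),
      ∑ i ∈ Finset.range (k + 1), if 3 * i + 2 * j = m then tcoeff u i j * p.1 ^ i * p.2 ^ j else 0
    with hF
  have hW : ∀ m, WH 3 2 m (F m) := by
    intro m
    refine WH.sum _ fun j _ => WH.sum _ fun i _ => ?_
    by_cases h : 3 * i + 2 * j = m
    · simp only [h, if_true]; exact WH.monomial _ i j h
    · simp only [h, if_false]; exact WH.zero_fun
  have hT := taylorW hu (k + 1)
  have hs : ∀ p, (∑ j ∈ Finset.range (k + 1), ∑ i ∈ Finset.range (k + 1),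
      if 3 * i + 2 * j < k + 1 then tcoeff u i j * p.1 ^ i * p.2 ^ j else 0)
      = ∑ m ∈ Finset.range (k + 1), F m p := by
    intro p
    simp only [hF]
    symm
    rw [Finset.sum_comm]
    refine Finset.sum_congr rfl fun j _ => ?_
    rw [Finset.sum_comm]
    refine Finset.sum_congr rfl fun i _ => ?_
    rw [Finset.sum_ite_eq]
    simp
  have h0 : ∀ m < k, ∀ p, F m p = 0 := by
    refine WH.peel_sum (by norm_num) (by norm_num) hW ?_
    refine ((ho.sub (hT.mono (Nat.le_succ k))).sub (hW k).ow).congr fun p => ?_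
    rw [hs, Finset.sum_range_succ]; ring
  refine hT.congr fun p => ?_
  have e : ∑ m ∈ Finset.range (k + 1), F m p = F k p := by
    rw [Finset.sum_range_succ, Finset.sum_eq_zero fun m hm => h0 m (Finset.mem_range.1 hm) p,
      zero_add]
  rw [hs, e]

/-- the quasi-homogeneous principal part -/
def v0 (p : ℝ × ℝ) : ℝ := p.1 ^ 2 * p.2 + p.2 ^ 4

/-- weighted homogeneous functions on the target, of a tame kind -/
def WHc (m : ℕ) (F : ℝ × ℝ → ℝ) : Prop :=
  WH 3 8 m F ∧ ∀ g : ℝ × ℝ → ℝ, Ow 3 2 9 (fun p => g p - v0 p) →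
    Ow 3 2 (m + 1) (fun p => F (p.1, g p) - F (p.1, v0 p))

lemma WHc.add {m : ℕ} {F G : ℝ × ℝ → ℝ} (hF : WHc m F) (hG : WHc m G) :
    WHc m (fun p => F p + G p) :=
  ⟨hF.1.add hG.1, fun g hg => ((hF.2 g hg).add (hG.2 g hg)).congr fun p => by ring⟩

lemma WHc.const_mul {m : ℕ} {F : ℝ × ℝ → ℝ} (c : ℝ) (hF : WHc m F) :
    WHc m (fun p => c * F p) :=
  ⟨hF.1.const_mul c, fun g hg => ((hF.2 g hg).const_mul c).congr fun p => by ring⟩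

lemma WHc.zero {m : ℕ} : WHc m (fun _ => 0) :=
  ⟨WH.zero_fun, fun g _ => by simpa using Ow.zero_fun⟩

lemma WHc.mono0 {m : ℕ} (c : ℝ) (i : ℕ) (h : 3 * i = m) : WHc m (fun p => c * p.1 ^ i) := by
  refine ⟨by simpa using WH.monomial (w1 := 3) (w2 := 8) c i 0 (k := m) (by omega), fun g hg => ?_⟩
  simpa using Ow.zero_fun

lemma WHc.mono1 {m : ℕ} (c : ℝ) (i : ℕ) (h : 3 * i + 8 = m) :
    WHc m (fun p => c * p.1 ^ i * p.2) := by
  refine ⟨by simpa using WH.monomial (w1 := 3) (w2 := 8) c i 1 (k := m) (by omega), fun g hg => ?_⟩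
  have h1 : Ow 3 2 (3 * i) (fun p => c * p.1 ^ i) := Ow.const_mul c (Ow.fst.pow i)
  have h2 := h1.mul hg
  refine (h2.mono (k := m + 1) (by omega)).congr fun p => ?_
  ring

/-- solvability of the homological equation -/
def Sol (n : ℕ) (u : ℝ × ℝ → ℝ) : Prop :=
  ∃ δA δB δD : ℝ × ℝ → ℝ, WHc (n + 6) δA ∧ WHc (n + 11) δB ∧ WH 3 2 (n + 5) δD ∧
    ∀ p : ℝ × ℝ, u p + 2 * p.1 * p.2 * δA (p.1, v0 p) + cuspP p * δD p - δB (p.1, v0 p) = 0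

lemma Sol.add {n : ℕ} {u v : ℝ × ℝ → ℝ} (hu : Sol n u) (hv : Sol n v) :
    Sol n (fun p => u p + v p) := by
  obtain ⟨A, B, D, hA, hB, hD, h⟩ := hu
  obtain ⟨A', B', D', hA', hB', hD', h'⟩ := hv
  refine ⟨_, _, _, hA.add hA', hB.add hB', hD.add hD', fun p => ?_⟩
  have := h p
  have := h' p
  linarith

lemma Sol.const_mul {n : ℕ} {u : ℝ × ℝ → ℝ} (c : ℝ) (hu : Sol n u) :
    Sol n (fun p => c * u p) := by
  obtain ⟨A, B, D, hA, hB, hD, h⟩ := hu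
  refine ⟨_, _, _, hA.const_mul c, hB.const_mul c, hD.const_mul c, fun p => ?_⟩
  have := h p
  linear_combination c * this

lemma Sol.zero {n : ℕ} : Sol n (fun _ => 0) :=
  ⟨_, _, _, WHc.zero, WHc.zero, WH.zero_fun, fun p => by simp⟩

lemma Sol.congr {n : ℕ} {u v : ℝ × ℝ → ℝ} (hu : Sol n u) (h : ∀ p, v p = u p) : Sol n v := by
  have : v = u := funext h
  rwa [this]

lemma Sol.sum {n : ℕ} {ι : Type} (S : Finset ι) {U : ι → ℝ × ℝ → ℝ} (h : ∀ i ∈ S, Sol n (U i)) :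
    Sol n (fun p => ∑ i ∈ S, U i p) := by
  classical
  induction S using Finset.induction_on with
  | empty => simpa using Sol.zero
  | insert a S ha ih =>
    have h1 := (h a (Finset.mem_insert_self _ _)).add (ih fun i hi => h i (Finset.mem_insert_of_mem hi))
    exact h1.congr fun p => by rw [Finset.sum_insert ha]

lemma Sol.monomial {n : ℕ} : ∀ j i : ℕ, 3 * i + 2 * j = n + 11 →
    Sol n (fun p => p.1 ^ i * p.2 ^ j) := by
  intro j
  induction j using Nat.strong_induction_on with
  | _ j ih =>
    intro i h
    match j, ih, h with
    | 0, _, h =>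
      refine ⟨_, _, _, WHc.zero, WHc.mono0 1 i (by omega), WH.zero_fun, fun p => ?_⟩
      ring
    | 1, _, h =>
      obtain ⟨i, rfl⟩ : ∃ i', i = i' + 1 := ⟨i - 1, by omega⟩
      refine ⟨_, _, _, WHc.mono0 (-1 / 2) i (by omega), WHc.zero, WH.zero_fun, fun p => ?_⟩
      ring
    | 2, _, h =>
      obtain ⟨i, rfl⟩ : ∃ i', i = i' + 3 := ⟨i - 3, by omega⟩
      refine ⟨_, _, _, WHc.mono1 (-2 / 3) i (by omega), WHc.zero,
        WH.monomial (1 / 3) (i + 1) 2 (by omega), fun p => ?_⟩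
      simp only [v0, cuspP]
      ring
    | j + 3, ih, h =>
      have h1 := (ih j (by omega) (i + 2) (by omega)).const_mul (-1 / 4)
      have h2 : Sol n (fun p => cuspP p * (1 / 4 * p.1 ^ i * p.2 ^ j)) := by
        refine ⟨_, _, _, WHc.zero, WHc.zero,
          WH.monomial (-1 / 4) i j (by omega), fun p => ?_⟩
        ring
      refine (h1.add h2).congr fun p => ?_
      simp only [cuspP]
      ring

lemma Sol.lead {n : ℕ} (c : ℕ → ℕ → ℝ) (N : ℕ) :
    Sol n (fun p => ∑ j ∈ Finset.range N, ∑ i ∈ Finset.range N,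
      if 3 * i + 2 * j = n + 11 then c i j * p.1 ^ i * p.2 ^ j else 0) := by
  refine Sol.sum _ fun j _ => Sol.sum _ fun i _ => ?_
  by_cases h : 3 * i + 2 * j = n + 11
  · simp only [h, if_true]
    exact ((Sol.monomial j i h).const_mul (c i j)).congr fun p => by ring
  · simp only [h, if_false]; exact Sol.zero

/-- stability / linearisation of `Gk` -/
lemma gk_lin (κ : ℝ) {n : ℕ} {A D a b : ℝ × ℝ → ℝ} (hA : Ow 3 2 6 (fun p => A p - p.1))
    (hD : Ow 3 2 4 (fun p => D p - p.2)) (ha : Ow 3 2 (n + 6) a) (hb : Ow 3 2 (n + 5) b) :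
    Ow 3 2 (n + 12) (fun p => Gk κ (A p + a p, D p + b p) - Gk κ (A p, D p)
      - (2 * p.1 * p.2 * a p + cuspP p * b p)) := by
  have x3 : Ow 3 2 3 (fun p => p.1) := Ow.fst
  have y2 : Ow 3 2 2 (fun p => p.2) := Ow.snd
  have A3 : Ow 3 2 3 A := ((hA.mono (k := 3) (by omega)).add x3).congr fun p => by ring
  have D2 : Ow 3 2 2 D := ((hD.mono (k := 2) (by omega)).add y2).congr fun p => by ring
  have a3 : Ow 3 2 3 a := ha.mono (by omega)
  have b2 : Ow 3 2 2 b := hb.mono (by omega)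
  have T1 : Ow 3 2 (n + 12) (fun p => (2 * (A p * (D p - p.2) + (A p - p.1) * p.2)) * a p) := by
    have e1 : Ow 3 2 7 (fun p => A p * (D p - p.2)) := A3.mul hD
    have e2 : Ow 3 2 7 (fun p => (A p - p.1) * p.2) := (hA.mul y2).mono (by omega)
    exact (((e1.add e2).const_mul 2).mul ha).mono (by omega)
  have T2 : Ow 3 2 (n + 12) (fun p => ((A p - p.1) * (A p + p.1)) * b p) :=
    ((hA.mul (A3.add x3)).mul hb).mono (by omega)
  have T3 : Ow 3 2 (n + 12) (fun p => (a p * (D p + b p)) * a p + (2 * (A p * b p)) * a p) := by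
    have e1 : Ow 3 2 8 (fun p => a p * (D p + b p)) :=
      ((ha.mono (k := 6) (by omega)).mul (D2.add b2))
    have e2 : Ow 3 2 8 (fun p => 2 * (A p * b p)) :=
      (A3.mul (hb.mono (k := 5) (by omega))).const_mul 2
    exact ((e1.mul ha).mono (by omega)).add ((e2.mul ha).mono (by omega))
  have T4 : Ow 3 2 (n + 12) (fun p =>
      (4 * ((D p - p.2) * (D p * D p + D p * p.2 + p.2 * p.2))) * b p) := by
    have e1 : Ow 3 2 4 (fun p => D p * D p + D p * p.2 + p.2 * p.2) :=
      ((D2.mul D2).add (D2.mul y2)).add (y2.mul y2)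
    exact (((hD.mul e1).const_mul 4).mul hb).mono (by omega)
  have b5 : Ow 3 2 5 b := hb.mono (by omega)
  have T5 : Ow 3 2 (n + 12) (fun p =>
      (b p * (6 * (D p * D p) + 4 * (D p * b p) + b p * b p)) * b p) := by
    have e1 : Ow 3 2 4 (fun p => 6 * (D p * D p) + 4 * (D p * b p) + b p * b p) :=
      (((D2.mul D2).const_mul 6).add ((D2.mul b2).const_mul 4)).add (b2.mul b2)
    exact ((b5.mul e1).mul hb).mono (by omega)
  have T6 : Ow 3 2 (n + 12) (fun p => κ / 2 * (((2 * A p + a p) * ((D p + b p) * (D p + b p))) * a p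
      + (A p * A p * (2 * D p + b p)) * b p)) := by
    have e1 : Ow 3 2 7 (fun p => (2 * A p + a p) * ((D p + b p) * (D p + b p))) :=
      ((A3.const_mul 2).add a3).mul ((D2.add b2).mul (D2.add b2))
    have e2 : Ow 3 2 8 (fun p => A p * A p * (2 * D p + b p)) :=
      (A3.mul A3).mul ((D2.const_mul 2).add b2)
    exact Ow.const_mul _ (((e1.mul ha).mono (by omega)).add ((e2.mul hb).mono (by omega)))
  have T7 : Ow 3 2 (n + 12) (fun p => κ * 4 / 5 * ((5 * D p ^ 4 + 10 * (D p ^ 3 * b p)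
      + 10 * (D p ^ 2 * b p ^ 2) + 5 * (D p * b p ^ 3) + b p ^ 4) * b p)) := by
    have e1 : Ow 3 2 8 (fun p => 5 * D p ^ 4 + 10 * (D p ^ 3 * b p)
      + 10 * (D p ^ 2 * b p ^ 2) + 5 * (D p * b p ^ 3) + b p ^ 4) :=
      (((((D2.pow 4).const_mul 5).add (((D2.pow 3).mul b2).const_mul 10)).add
        (((D2.pow 2).mul (b2.pow 2)).const_mul 10)).add ((D2.mul (b2.pow 3)).const_mul 5)).add
        (b2.pow 4)
    exact Ow.const_mul _ ((e1.mul hb).mono (by omega))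
  refine ((((((T1.add T2).add T3).add T4).add T5).add T6).add T7).congr fun p => ?_
  simp only [Gk, cuspP]
  ring

/-- error of an approximate conjugation -/
def Err (κ : ℝ) (g : ℝ × ℝ → ℝ) (S : (ℝ × ℝ → ℝ) × (ℝ × ℝ → ℝ) × (ℝ × ℝ → ℝ)) (p : ℝ × ℝ) : ℝ :=
  Gk κ (S.1 (p.1, g p), S.2.2 p) - S.2.1 (p.1, g p)

/-- invariant of the iteration -/
def IterInv (κ : ℝ) (g : ℝ × ℝ → ℝ) (n : ℕ) (S : (ℝ × ℝ → ℝ) × (ℝ × ℝ → ℝ) × (ℝ × ℝ → ℝ)) : Prop :=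
  ContDiff ℝ (⊤ : ℕ∞) S.1 ∧ ContDiff ℝ (⊤ : ℕ∞) S.2.1 ∧ ContDiff ℝ (⊤ : ℕ∞) S.2.2 ∧
  Ow 3 8 6 (fun p => S.1 p - p.1) ∧ Ow 3 2 4 (fun p => S.2.2 p - p.2) ∧
  Ow 3 2 (n + 11) (Err κ g S)

lemma v0_ow : Ow 3 2 8 v0 := by
  have h1 : Ow 3 2 8 (fun p => p.1 ^ 2 * p.2) := (Ow.fst.pow 2).mul Ow.snd
  have h2 : Ow 3 2 8 (fun p => p.2 ^ 4) := Ow.snd.pow 4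
  exact h1.add h2

lemma ow_g {g : ℝ × ℝ → ℝ} (hg : Ow 3 2 9 (fun p => g p - v0 p)) : Ow 3 2 8 g :=
  ((hg.mono (k := 8) (by norm_num)).add v0_ow).congr fun p => by ring

lemma IterInv.step {κ : ℝ} {g : ℝ × ℝ → ℝ} (hgs : ContDiff ℝ (⊤ : ℕ∞) g)
    (hg : Ow 3 2 9 (fun p => g p - v0 p)) (n : ℕ)
    (S : (ℝ × ℝ → ℝ) × (ℝ × ℝ → ℝ) × (ℝ × ℝ → ℝ)) (h : IterInv κ g n S) :
    ∃ S' : (ℝ × ℝ → ℝ) × (ℝ × ℝ → ℝ) × (ℝ × ℝ → ℝ), IterInv κ g (n + 1) S' ∧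
      WH 3 8 (n + 6) (fun p => S'.1 p - S.1 p) ∧ WH 3 8 (n + 11) (fun p => S'.2.1 p - S.2.1 p) ∧
      WH 3 2 (n + 5) (fun p => S'.2.2 p - S.2.2 p) := by
  obtain ⟨A, B, D⟩ := S
  obtain ⟨hAs, hBs, hDs, hA, hD, hE⟩ := h
  simp only at hAs hBs hDs hA hD
  have hEs : ContDiff ℝ (⊤ : ℕ∞) (Err κ g (A, B, D)) := by
    have h1 : ContDiff ℝ (⊤ : ℕ∞) (fun p : ℝ × ℝ => (p.1, g p)) := contDiff_fst.prodMk hgs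
    exact ((Gk_smooth κ).comp ((hAs.comp h1).prodMk hDs)).sub (hBs.comp h1)
  obtain ⟨c, hc⟩ := lead hEs hE
  obtain ⟨a, b, d, ha, hb, hd, heq⟩ := Sol.lead (n := n) c (n + 11 + 1)
  have hg8 := ow_g hg
  refine ⟨(fun p => A p + a p, fun p => B p + b p, fun p => D p + d p),
    ⟨hAs.add ha.1.1, hBs.add hb.1.1, hDs.add hd.1, ?_, ?_, ?_⟩, ?_, ?_, ?_⟩
  · exact (hA.add (ha.1.ow.mono (by omega))).congr fun p => by ring
  · exact (hD.add (hd.ow.mono (by omega))).congr fun p => by ring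
  · have h1 := gk_lin κ (n := n) (A := fun p => A (p.1, g p)) (hA.comp hg8) hD (ha.1.ow.comp hg8) hd.ow
    have h2 : Ow 3 2 (n + 12) (fun p => 2 * p.1 * p.2 * (a (p.1, g p) - a (p.1, v0 p))) :=
      (((Ow.fst.const_mul 2).mul Ow.snd).mul (ha.2 g hg)).mono (by omega)
    have h3 := hb.2 g hg
    refine ((((h1.add h2).add hc).sub h3).mono (k := n + 1 + 11) (by omega)).congr fun p => ?_
    have := heq p
    simp only [Err] at this ⊢
    linear_combination this
  · simpa using ha.1
  · simpa using hb.1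
  · simpa using hd

lemma IterInv.zero {g : ℝ × ℝ → ℝ} {a : ℝ}
    (hg : Ow 3 2 11 (fun p => g p - (v0 p + a * p.2 ^ 5))) :
    IterInv (-5 * a / 6) g 0 (fun p => p.1, fun p => p.2, fun p => p.2 + 5 * a / 12 * p.2 ^ 2) := by
  refine ⟨by fun_prop, by fun_prop, by fun_prop, ?_, ?_, ?_⟩
  · simpa using Ow.zero_fun
  · simpa using (Ow.snd.pow 2).const_mul (5 * a / 12)
  · obtain ⟨d, hd⟩ : ∃ d, d = 5 * a / 12 := ⟨_, rfl⟩
    have ha : a = 12 * d / 5 := by rw [hd]; ring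
    have y2 : Ow 3 2 2 (fun p => p.2) := Ow.snd
    have h1 : Ow 3 2 11 (fun p : ℝ × ℝ => p.2 ^ 6 * (6 * d ^ 2 + 4 * d ^ 3 * p.2 + d ^ 4 * p.2 ^ 2
      - 2 * d * 4 / 5 * (5 * d + 10 * d ^ 2 * p.2 + 10 * d ^ 3 * p.2 ^ 2 + 5 * d ^ 4 * p.2 ^ 3
        + d ^ 5 * p.2 ^ 4))) :=
      ((Ow.snd.pow 6).mul (Ow.of_cont (by norm_num) (by norm_num) (by fun_prop))).mono (by omega)
    have h2 : Ow 3 2 11 (fun p : ℝ × ℝ => (p.1 ^ 2 * p.2 ^ 3) * (-d * (2 * d + d ^ 2 * p.2))) :=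
      (((Ow.fst.pow 2).mul (Ow.snd.pow 3)).mul
        (Ow.of_cont (by norm_num) (by norm_num) (by fun_prop))).mono (by omega)
    refine ((h1.add h2).sub hg).congr fun p => ?_
    simp only [Err, Gk, v0]
    rw [ha]
    ring

theorem formal_stage {g : ℝ × ℝ → ℝ} {a : ℝ} (hgs : ContDiff ℝ (⊤ : ℕ∞) g)
    (hg : Ow 3 2 11 (fun p => g p - (v0 p + a * p.2 ^ 5))) :
    ∃ A B D : ℝ × ℝ → ℝ, ContDiff ℝ (⊤ : ℕ∞) A ∧ ContDiff ℝ (⊤ : ℕ∞) B ∧ ContDiff ℝ (⊤ : ℕ∞) D ∧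
      Ow 3 8 6 (fun p => A p - p.1) ∧ Ow 3 8 11 (fun p => B p - p.2) ∧
      Ow 3 2 4 (fun p => D p - p.2) ∧
      Flat (fun p => Gk (-5 * a / 6) (A (p.1, g p), D p) - B (p.1, g p)) := by
  have hg9 : Ow 3 2 9 (fun p => g p - v0 p) := by
    have : Ow 3 2 10 (fun p => a * p.2 ^ 5) := (Ow.snd.pow 5).const_mul a
    exact ((hg.mono (by norm_num)).add (this.mono (by norm_num))).congr fun p => by ring
  have hg8 := ow_g hg9
  set κ := -5 * a / 6 with hκ
  choose st hst using IterInv.step (κ := κ) hgs hg9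
  let seq : (n : ℕ) → {S // IterInv κ g n S} := fun n =>
    Nat.rec ⟨_, IterInv.zero hg⟩ (fun n s => ⟨st n s.1 s.2, (hst n s.1 s.2).1⟩) n
  have hseq : ∀ n, (seq (n + 1)).1 = st n (seq n).1 (seq n).2 := fun n => rfl
  have h0 : (seq 0).1 = (fun p => p.1, fun p => p.2, fun p => p.2 + 5 * a / 12 * p.2 ^ 2) := rfl
  have hW : ∀ n, WH 3 8 (n + 6) (fun p => (seq (n + 1)).1.1 p - (seq n).1.1 p) ∧
      WH 3 8 (n + 11) (fun p => (seq (n + 1)).1.2.1 p - (seq n).1.2.1 p) ∧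
      WH 3 2 (n + 5) (fun p => (seq (n + 1)).1.2.2 p - (seq n).1.2.2 p) := fun n => by
    rw [hseq]; exact (hst n _ _).2
  obtain ⟨A', hA's, hA'⟩ := borel_weighted 3 8 6 (by norm_num) (by norm_num) _ fun n => (hW n).1
  obtain ⟨B', hB's, hB'⟩ := borel_weighted 3 8 11 (by norm_num) (by norm_num) _ fun n => (hW n).2.1
  obtain ⟨D', hD's, hD'⟩ := borel_weighted 3 2 5 (by norm_num) (by norm_num) _ fun n => (hW n).2.2
  have hA : ∀ n, Ow 3 8 (n + 6) (fun p => p.1 + A' p - (seq n).1.1 p) := fun n =>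
    (hA' n).congr fun p => by
      rw [Finset.sum_range_sub (fun k => (seq k).1.1 p), h0]; ring
  have hB : ∀ n, Ow 3 8 (n + 11) (fun p => p.2 + B' p - (seq n).1.2.1 p) := fun n =>
    (hB' n).congr fun p => by
      rw [Finset.sum_range_sub (fun k => (seq k).1.2.1 p), h0]; ring
  have hD : ∀ n, Ow 3 2 (n + 5)
      (fun p => p.2 + 5 * a / 12 * p.2 ^ 2 + D' p - (seq n).1.2.2 p) := fun n =>
    (hD' n).congr fun p => by
      rw [Finset.sum_range_sub (fun k => (seq k).1.2.2 p), h0]; ring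
  have hAs : ContDiff ℝ (⊤ : ℕ∞) (fun p : ℝ × ℝ => p.1 + A' p) := contDiff_fst.add hA's
  have hBs : ContDiff ℝ (⊤ : ℕ∞) (fun p : ℝ × ℝ => p.2 + B' p) := contDiff_snd.add hB's
  have hDs : ContDiff ℝ (⊤ : ℕ∞) (fun p : ℝ × ℝ => p.2 + 5 * a / 12 * p.2 ^ 2 + D' p) :=
    (by fun_prop : ContDiff ℝ (⊤ : ℕ∞) (fun p : ℝ × ℝ => p.2 + 5 * a / 12 * p.2 ^ 2)).add hD's
  refine ⟨_, _, _, hAs, hBs, hDs, ?_, ?_, ?_, ?_⟩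
  · exact (hA 0).congr fun p => by rw [h0]
  · exact (hB 0).congr fun p => by rw [h0]
  · have h1 : Ow 3 2 4 (fun p => 5 * a / 12 * p.2 ^ 2) := (Ow.snd.pow 2).const_mul (5 * a / 12)
    exact (((hD 0).mono (k := 4) (by norm_num)).add h1).congr fun p => by rw [h0]; ring
  · have h1 : ContDiff ℝ (⊤ : ℕ∞) (fun p : ℝ × ℝ => (p.1, g p)) := contDiff_fst.prodMk hgs
    refine Ow.flat (((Gk_smooth κ).comp ((hAs.comp h1).prodMk hDs)).sub (hBs.comp h1)) fun n => ?_
    obtain ⟨-, -, -, iA, iD, iE⟩ := (seq n).2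
    have e1 := gk_lin κ (n := n) (A := fun p => (seq n).1.1 (p.1, g p)) (iA.comp hg8) iD ((hA n).comp hg8) (hD n)
    have e2 : Ow 3 2 (n + 11) (fun p => 2 * p.1 * p.2 *
        (p.1 + A' (p.1, g p) - (seq n).1.1 (p.1, g p))) :=
      (((Ow.fst.const_mul 2).mul Ow.snd).mul ((hA n).comp hg8)).mono (by omega)
    have hP : Ow 3 2 6 cuspP := by
      have h1 : Ow 3 2 6 (fun p => p.1 ^ 2) := Ow.fst.pow 2
      have h2 : Ow 3 2 6 (fun p => 4 * p.2 ^ 3) := (Ow.snd.pow 3).const_mul 4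
      exact h1.add h2
    have e3 := (hP.mul (hD n)).mono (k := n + 11) (by omega)
    have e4 := (hB n).comp hg8
    refine (((((e1.mono (k := n + 11) (by omega)).add e2).add e3).add (iE)).sub e4).mono
      (k := n) (by omega) |>.congr fun p => ?_
    simp only [Err, Function.comp, add_sub_cancel]
    ring

lemma fderiv_pair {U V : ℝ × ℝ → ℝ} (hU : ContDiff ℝ (⊤ : ℕ∞) U) (hV : ContDiff ℝ (⊤ : ℕ∞) V)
    (a b : ℝ) : fderiv ℝ (fun p => (U p, V p)) 0 (a, b) =
      (a * pdx U 0 + b * pdy U 0, a * pdx V 0 + b * pdy V 0) := by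
  have h1 := (hU.differentiable (by simp) 0)
  have h2 := (hV.differentiable (by simp) 0)
  rw [(h1.hasFDerivAt.prodMk h2.hasFDerivAt).fderiv]
  have e : ((a, b) : ℝ × ℝ) = a • ((1, 0) : ℝ × ℝ) + b • ((0, 1) : ℝ × ℝ) := by simp
  rw [e]
  simp only [map_add, map_smul, ContinuousLinearMap.prod_apply, pdx, pdy, dop]
  simp

lemma bij_det {U V : ℝ × ℝ → ℝ} (hU : ContDiff ℝ (⊤ : ℕ∞) U) (hV : ContDiff ℝ (⊤ : ℕ∞) V)
    (h : pdx U 0 * pdy V 0 - pdy U 0 * pdx V 0 ≠ 0) :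
    Function.Bijective (⇑(fderiv ℝ (fun p => (U p, V p)) 0)) := by
  have hi : Function.Injective (⇑(fderiv ℝ (fun p => (U p, V p)) 0).toLinearMap) := by
    rw [injective_iff_map_eq_zero]
    rintro ⟨a, b⟩ h0
    have h1 : fderiv ℝ (fun p => (U p, V p)) 0 (a, b) = 0 := h0
    rw [fderiv_pair hU hV, Prod.mk_eq_zero] at h1
    obtain ⟨e1, e2⟩ := h1
    have ha : a * (pdx U 0 * pdy V 0 - pdy U 0 * pdx V 0) = 0 := by
      linear_combination pdy V 0 * e1 - pdy U 0 * e2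
    have hb : b * (pdx U 0 * pdy V 0 - pdy U 0 * pdx V 0) = 0 := by
      linear_combination pdx U 0 * e2 - pdx V 0 * e1
    simp only [mul_eq_zero, h, or_false] at ha hb
    rw [ha, hb]; rfl
  exact ⟨hi, LinearMap.injective_iff_surjective.1 hi⟩

lemma pd_of_sub {u : ℝ × ℝ → ℝ} (hu : ContDiff ℝ (⊤ : ℕ∞) u) (a b : ℝ) :
    pdx (fun p => u p - (a * p.1 + b * p.2)) 0 = pdx u 0 - a ∧
    pdy (fun p => u p - (a * p.1 + b * p.2)) 0 = pdy u 0 - b := by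
  have h1 := (hu.differentiable (by simp) 0).hasFDerivAt
  have h2 : HasFDerivAt (fun p : ℝ × ℝ => a * p.1 + b * p.2)
      (a • ContinuousLinearMap.fst ℝ ℝ ℝ + b • ContinuousLinearMap.snd ℝ ℝ ℝ) 0 :=
    (hasFDerivAt_fst.const_mul a).add (hasFDerivAt_snd.const_mul b)
  simp only [pdx, pdy, dop]
  have h3 : fderiv ℝ (fun p : ℝ × ℝ => u p - (a * p.1 + b * p.2)) 0 = _ := (h1.sub h2).fderiv
  rw [h3]
  simp

lemma pdx_of_ow {w1 w2 k : ℕ} {u : ℝ × ℝ → ℝ} (hu : ContDiff ℝ (⊤ : ℕ∞) u) (a b : ℝ)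
    (h1 : 1 ≤ w1) (hk : w1 < k) (h : Ow w1 w2 k (fun p => u p - (a * p.1 + b * p.2))) :
    pdx u 0 = a := by
  have h2 := h.pdx_zero h1 hk (hu.sub (by fun_prop))
  rw [(pd_of_sub hu a b).1] at h2
  linarith

lemma pdy_of_ow {w1 w2 k : ℕ} {u : ℝ × ℝ → ℝ} (hu : ContDiff ℝ (⊤ : ℕ∞) u) (a b : ℝ)
    (h1 : 1 ≤ w2) (hk : w2 < k) (h : Ow w1 w2 k (fun p => u p - (a * p.1 + b * p.2))) :
    pdy u 0 = b := by
  have h2 := h.pdy_zero h1 hk (hu.sub (by fun_prop))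
  rw [(pd_of_sub hu a b).2] at h2
  linarith

theorem main_eqv {g : ℝ × ℝ → ℝ} {a : ℝ} (hgs : ContDiff ℝ (⊤ : ℕ∞) g)
    (hg : Ow 3 2 11 (fun p => g p - (v0 p + a * p.2 ^ 5))) :
    Eqv (fun p => (p.1, g p)) (fun p => (p.1, Gk (-5 * a / 6) p)) := by
  obtain ⟨A, B, D, hAs, hBs, hDs, hA, hB, hD, hH⟩ := formal_stage hgs hg
  have hg9 : Ow 3 2 9 (fun p => g p - v0 p) := by
    have : Ow 3 2 10 (fun p => a * p.2 ^ 5) := (Ow.snd.pow 5).const_mul a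
    exact ((hg.mono (by norm_num)).add (this.mono (by norm_num))).congr fun p => by ring
  have hg8 := ow_g hg9
  have hf : ContDiff ℝ (⊤ : ℕ∞) (fun p : ℝ × ℝ => (p.1, g p)) := contDiff_fst.prodMk hgs
  have g0 : g 0 = 0 := hg8.eq_zero (by norm_num)
  have hUs : ContDiff ℝ (⊤ : ℕ∞) (fun p : ℝ × ℝ => A (p.1, g p)) := hAs.comp hf
  have hU : Ow 3 2 6 (fun p => A (p.1, g p) - p.1) := hA.comp hg8
  have A0 : A 0 = 0 := by simpa using hA.eq_zero (by norm_num)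
  have B0 : B 0 = 0 := by simpa using hB.eq_zero (by norm_num)
  have D0 : D 0 = 0 := by simpa using hD.eq_zero (by norm_num)
  have hA' : Ow 3 8 6 (fun p => A p - (1 * p.1 + 0 * p.2)) := hA.congr fun p => by ring
  have hB' : Ow 3 8 11 (fun p => B p - (0 * p.1 + 1 * p.2)) := hB.congr fun p => by ring
  have hD' : Ow 3 2 4 (fun p => D p - (0 * p.1 + 1 * p.2)) := hD.congr fun p => by ring
  have hU' : Ow 3 2 6 (fun p => A (p.1, g p) - (1 * p.1 + 0 * p.2)) := hU.congr fun p => by ring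
  have bΘ : Function.Bijective (⇑(fderiv ℝ (fun p => (A (p.1, g p), D p)) 0)) := by
    refine bij_det hUs hDs ?_
    rw [pdx_of_ow hUs 1 0 (by norm_num) (by norm_num) hU',
      pdy_of_ow hUs 1 0 (by norm_num) (by norm_num) hU',
      pdy_of_ow hDs 0 1 (by norm_num) (by norm_num) hD']
    norm_num
  have bΨ : Function.Bijective (⇑(fderiv ℝ (fun p => (A p, B p)) 0)) := by
    refine bij_det hAs hBs ?_
    rw [pdx_of_ow hAs 1 0 (by norm_num) (by norm_num) hA',
      pdx_of_ow hBs 0 1 (by norm_num) (by norm_num) hB',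
      pdy_of_ow hBs 0 1 (by norm_num) (by norm_num) hB']
    norm_num
  have hΘs : ContDiff ℝ (⊤ : ℕ∞) (fun p : ℝ × ℝ => (A (p.1, g p), D p)) := hUs.prodMk hDs
  have Θ0 : (fun p : ℝ × ℝ => (A (p.1, g p), D p)) 0 = 0 := by
    simp only [g0, D0, Prod.fst_zero]
    rw [show ((0 : ℝ), (0 : ℝ)) = 0 from rfl, A0]
    rfl
  obtain ⟨K, hK, K0, bK, i1, i2⟩ := inv_germ _ hΘs Θ0 bΘ
  have hfl := (hH.comp hK K0).neg
  refine Eqv.trans ?_ (flat_stage (-5 * a / 6) hfl)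
  refine ⟨_, fun p => (A p, B p), hΘs, hAs.prodMk hBs, Θ0, ?_, bΘ, bΨ, ?_⟩
  · simp [A0, B0]
  · filter_upwards [i1] with p hp
    rw [hp]
    ext
    · rfl
    · ring

theorem eqv_fa {g : ℝ × ℝ → ℝ} {a : ℝ} (hgs : ContDiff ℝ (⊤ : ℕ∞) g)
    (hg : Ow 3 2 11 (fun p => g p - (v0 p + a * p.2 ^ 5))) :
    Eqv (fun p => (p.1, g p)) (fun p => (p.1, p.1 ^ 2 * p.2 + p.2 ^ 4 + a * p.2 ^ 5)) := by
  have h1 := main_eqv hgs hg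
  have h2 := main_eqv (g := fun p => p.1 ^ 2 * p.2 + p.2 ^ 4 + a * p.2 ^ 5) (a := a)
    (by fun_prop) (Ow.zero_fun.congr fun p => by simp [v0])
  exact h1.trans (h2.symm (by fun_prop) (by simp))

theorem eqv_scale {a : ℝ} (ha : a ≠ 0) :
    Eqv (fun p => (p.1, p.1 ^ 2 * p.2 + p.2 ^ 4 + a * p.2 ^ 5))
      (fun p => (p.1, p.1 ^ 2 * p.2 + p.2 ^ 4 + (a / |a|) * p.2 ^ 5)) := by
  have hβ : 0 < |a| := abs_pos.2 ha
  set β := |a| with hβd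
  set α := Real.sqrt (β ^ 3) with hα
  have hα2 : α ^ 2 = β ^ 3 := Real.sq_sqrt (by positivity)
  have hα0 : 0 < α := Real.sqrt_pos.2 (by positivity)
  have key : ∀ c d : ℝ, c ≠ 0 → d ≠ 0 →
      Function.Bijective (⇑(fderiv ℝ (fun p : ℝ × ℝ => (c * p.1, d * p.2)) 0)) := by
    intro c d hc hd
    have e1 : ContDiff ℝ (⊤ : ℕ∞) (fun p : ℝ × ℝ => c * p.1) := by fun_prop
    have e2 : ContDiff ℝ (⊤ : ℕ∞) (fun p : ℝ × ℝ => d * p.2) := by fun_prop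
    refine bij_det e1 e2 ?_
    rw [pdx_of_ow (w1 := 1) (w2 := 1) (k := 2) e1 c 0 (by norm_num) (by norm_num)
        (Ow.zero_fun.congr fun p => by ring),
      pdy_of_ow (w1 := 1) (w2 := 1) (k := 2) e1 c 0 (by norm_num) (by norm_num)
        (Ow.zero_fun.congr fun p => by ring),
      pdy_of_ow (w1 := 1) (w2 := 1) (k := 2) e2 0 d (by norm_num) (by norm_num)
        (Ow.zero_fun.congr fun p => by ring)]
    simp [hc, hd]
  refine ⟨fun p => (α * p.1, β * p.2), fun p => (α * p.1, β ^ 4 * p.2), by fun_prop, by fun_prop,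
    by simp, by simp, key _ _ hα0.ne' hβ.ne', key _ _ hα0.ne' (by positivity), ?_⟩
  refine Eventually.of_forall fun p => ?_
  ext
  · rfl
  · show β ^ 4 * _ = (α * p.1) ^ 2 * (β * p.2) + (β * p.2) ^ 4 + a / β * (β * p.2) ^ 5
    rw [mul_pow α, hα2]
    field_simp

lemma Ow.congr_ev {w1 w2 k : ℕ} {u v : ℝ × ℝ → ℝ} (h1 : 1 ≤ w1) (h2 : 1 ≤ w2) (hu : Ow w1 w2 k u)
    (h : ∀ᶠ p in 𝓝 (0 : ℝ × ℝ), v p = u p) : Ow w1 w2 k v := by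
  obtain ⟨C, hC, s0, hs0, hb⟩ := hu
  obtain ⟨r, hr, hrU⟩ := Metric.nhds_basis_closedBall.mem_iff.1 h
  refine ⟨C, hC, min s0 (min 1 r), by positivity, fun s hs hs' x y hx hy => ?_⟩
  have hs1 := hs'.trans (min_le_right _ _)
  have e : v (x, y) = u (x, y) := by
    refine hrU (mem_closedBall_zero_iff.2 ?_)
    rw [Prod.norm_def]
    exact max_le (hx.trans (small_pow w1 h1 hs hs1)) (hy.trans (small_pow w2 h2 hs hs1))
  rw [e]
  exact hb s hs (hs'.trans (min_le_left _ _)) x y hx hy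

lemma taylorG {w1 w2 : ℕ} (h1 : 1 ≤ w1) (h2 : 1 ≤ w2) {u : ℝ × ℝ → ℝ}
    (hu : ContDiff ℝ (⊤ : ℕ∞) u) (k n : ℕ) (hk1 : k ≤ w1 * n) (hk2 : k ≤ w2 * n) :
    Ow w1 w2 k (fun p => u p - ∑ j ∈ Finset.range n, ∑ i ∈ Finset.range n,
      if w1 * i + w2 * j < k then tcoeff u i j * p.1 ^ i * p.2 ^ j else 0) := by
  obtain ⟨M, hM0, hM⟩ := taylor_2d hu n
  have h1 : Ow w1 w2 k (fun p => u p - ∑ j ∈ Finset.range n, ∑ i ∈ Finset.range n,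
      tcoeff u i j * p.1 ^ i * p.2 ^ j) := by
    refine ⟨M * 2, by positivity, 1, one_pos, fun s hs hs1 x y hx hy => ?_⟩
    refine (hM x y (hx.trans (pow_le_one₀ hs.le hs1)) (hy.trans (pow_le_one₀ hs.le hs1))).trans ?_
    rw [mul_assoc]
    refine mul_le_mul_of_nonneg_left ?_ hM0
    have e1 : |x| ^ n ≤ s ^ k := by
      refine (pow_le_pow_left₀ (abs_nonneg _) hx _).trans ?_
      rw [← pow_mul]
      exact pow_le_pow_of_le_one hs.le hs1 hk1
    have e2 : |y| ^ n ≤ s ^ k := by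
      refine (pow_le_pow_left₀ (abs_nonneg _) hy _).trans ?_
      rw [← pow_mul]
      exact pow_le_pow_of_le_one hs.le hs1 hk2
    linarith
  have h2 : Ow w1 w2 k (fun p => ∑ j ∈ Finset.range n, ∑ i ∈ Finset.range n,
      if w1 * i + w2 * j < k then 0 else tcoeff u i j * p.1 ^ i * p.2 ^ j) := by
    refine Ow.sum _ fun j _ => Ow.sum _ fun i _ => ?_
    by_cases h : w1 * i + w2 * j < k
    · simp only [h, if_true]; exact Ow.zero_fun
    · simp only [h, if_false]
      exact (Ow.monomial _ i j).mono (by omega)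
  refine (h1.add h2).congr fun p => ?_
  rw [sub_add, ← Finset.sum_sub_distrib]
  congr 1
  refine Finset.sum_congr rfl fun j _ => ?_
  rw [← Finset.sum_sub_distrib]
  refine Finset.sum_congr rfl fun i _ => ?_
  split_ifs <;> simp

lemma tcoeff_00 (u : ℝ × ℝ → ℝ) : tcoeff u 0 0 = u 0 := by simp [tcoeff]
lemma tcoeff_01 (u : ℝ × ℝ → ℝ) : tcoeff u 0 1 = pdy u 0 := by simp [tcoeff]

theorem converse {g : ℝ × ℝ → ℝ} {a b : ℝ}
    (hg : Ow 3 2 11 (fun p => g p - (v0 p + a * p.2 ^ 5)))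
    (h : Eqv (fun p => (p.1, g p)) (fun p => (p.1, p.1 ^ 2 * p.2 + p.2 ^ 4 + b * p.2 ^ 5))) :
    ∃ d : ℝ, d ≠ 0 ∧ a = b * d := by
  obtain ⟨T, S, hT, hS, T0, S0, bT, bS, e⟩ := h
  have hg9 : Ow 3 2 9 (fun p => g p - v0 p) := by
    have : Ow 3 2 10 (fun p => a * p.2 ^ 5) := (Ow.snd.pow 5).const_mul a
    exact ((hg.mono (by norm_num)).add (this.mono (by norm_num))).congr fun p => by ring
  have hg8 := ow_g hg9
  obtain ⟨T1, hT1d⟩ : ∃ T1 : ℝ × ℝ → ℝ, T1 = fun p => (T p).1 := ⟨_, rfl⟩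
  obtain ⟨T2, hT2d⟩ : ∃ T2 : ℝ × ℝ → ℝ, T2 = fun p => (T p).2 := ⟨_, rfl⟩
  obtain ⟨A, hAd⟩ : ∃ A : ℝ × ℝ → ℝ, A = fun p => (S p).1 := ⟨_, rfl⟩
  obtain ⟨B, hBd⟩ : ∃ B : ℝ × ℝ → ℝ, B = fun p => (S p).2 := ⟨_, rfl⟩
  have hT1 : ContDiff ℝ (⊤ : ℕ∞) T1 := by rw [hT1d]; exact hT.fst
  have hT2 : ContDiff ℝ (⊤ : ℕ∞) T2 := by rw [hT2d]; exact hT.snd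
  have hA : ContDiff ℝ (⊤ : ℕ∞) A := by rw [hAd]; exact hS.fst
  have hB : ContDiff ℝ (⊤ : ℕ∞) B := by rw [hBd]; exact hS.snd
  have A0 : A 0 = 0 := by simp [hAd, S0]
  have B0 : B 0 = 0 := by simp [hBd, S0]
  have T20 : T2 0 = 0 := by simp [hT2d, T0]
  have hTT : T = fun p => (T1 p, T2 p) := by rw [hT1d, hT2d]
  have e1 : ∀ᶠ p in 𝓝 (0 : ℝ × ℝ), T1 p = A (p.1, g p) := by
    filter_upwards [e] with p hp
    rw [hT1d, hAd]
    exact (congrArg Prod.fst hp).symm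
  have e2 : ∀ᶠ p in 𝓝 (0 : ℝ × ℝ),
      B (p.1, g p) = T1 p ^ 2 * T2 p + T2 p ^ 4 + b * T2 p ^ 5 := by
    filter_upwards [e] with p hp
    rw [hT1d, hT2d, hBd]
    exact congrArg Prod.snd hp
  -- expansions
  obtain ⟨a1, hA6⟩ : ∃ a1, Ow 3 8 6 (fun p => A p - a1 * p.1) := by
    refine ⟨tcoeff A 1 0, (taylorG (w1 := 3) (w2 := 8) (by norm_num) (by norm_num) hA 6 2
      (by norm_num) (by norm_num)).congr fun p => ?_⟩
    simp [Finset.sum_range_succ, tcoeff_00, A0]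
  obtain ⟨b1, b11, b111, b2, hB11⟩ : ∃ b1 b11 b111 b2, Ow 3 8 11 (fun p => B p -
      (b1 * p.1 + b11 * p.1 ^ 2 + b111 * p.1 ^ 3 + b2 * p.2)) := by
    refine ⟨tcoeff B 1 0, tcoeff B 2 0, tcoeff B 3 0, tcoeff B 0 1,
      (taylorG (w1 := 3) (w2 := 8) (by norm_num) (by norm_num) hB 11 4
      (by norm_num) (by norm_num)).congr fun p => ?_⟩
    simp [Finset.sum_range_succ, tcoeff_00, B0]
  obtain ⟨d2, hd2⟩ : ∃ d2, d2 = tcoeff T2 0 1 := ⟨_, rfl⟩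
  obtain ⟨d1, d22, hT5⟩ : ∃ d1 d22, Ow 3 2 5 (fun p => T2 p -
      (d2 * p.2 + (d1 * p.1 + d22 * p.2 ^ 2))) := by
    refine ⟨tcoeff T2 1 0, tcoeff T2 0 2,
      (taylorG (w1 := 3) (w2 := 2) (by norm_num) (by norm_num) hT2 5 3
      (by norm_num) (by norm_num)).congr fun p => ?_⟩
    simp [Finset.sum_range_succ, tcoeff_00, T20, hd2]
    ring
  have hT6 : Ow 3 2 6 (fun p => T1 p - a1 * p.1) := by
    refine (hA6.comp hg8).congr_ev (by norm_num) (by norm_num) ?_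
    filter_upwards [e1] with p hp
    rw [hp]
  have hT6' : Ow 3 2 6 (fun p => T1 p - (a1 * p.1 + 0 * p.2)) := hT6.congr fun p => by ring
  have px : pdx T1 0 = a1 := pdx_of_ow hT1 a1 0 (by norm_num) (by norm_num) hT6'
  have py : pdy T1 0 = 0 := pdy_of_ow hT1 a1 0 (by norm_num) (by norm_num) hT6'
  have ha1 : a1 ≠ 0 := by
    rintro rfl
    obtain ⟨⟨x, y⟩, hv⟩ := bT.2 (1, 0)
    rw [hTT, fderiv_pair hT1 hT2, px, py] at hv
    simpa using congrArg Prod.fst hv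
  have hd0 : d2 ≠ 0 := by
    intro h0
    rw [hd2, tcoeff_01] at h0
    have hv : fderiv ℝ T 0 (0, 1) = 0 := by
      rw [hTT, fderiv_pair hT1 hT2, py, h0]; simp
    have := bT.1 (hv.trans (map_zero _).symm)
    simpa using congrArg Prod.snd this
  refine ⟨d2, hd0, ?_⟩
  have x3 : Ow 3 2 3 (fun p => p.1) := Ow.fst
  have y2 : Ow 3 2 2 (fun p => p.2) := Ow.snd
  have yy : Ow 3 2 4 (fun p => p.2 ^ 2) := Ow.snd.pow 2
  have z3 : Ow 3 2 3 (fun p => d1 * p.1 + d22 * p.2 ^ 2) :=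
    (x3.const_mul d1).add ((yy.mono (k := 3) (by norm_num)).const_mul d22)
  have q2 : Ow 3 2 2 (fun p => d2 * p.2 + (d1 * p.1 + d22 * p.2 ^ 2)) :=
    (y2.const_mul d2).add (z3.mono (by norm_num))
  have T22 : Ow 3 2 2 T2 := ((hT5.mono (k := 2) (by norm_num)).add q2).congr fun p => by ring
  obtain ⟨z, hz⟩ : ∃ z : ℝ × ℝ → ℝ, z = fun p => d1 * p.1 + d22 * p.2 ^ 2 := ⟨_, rfl⟩
  obtain ⟨q, hq⟩ : ∃ q : ℝ × ℝ → ℝ, q = fun p => d2 * p.2 + (d1 * p.1 + d22 * p.2 ^ 2) := ⟨_, rfl⟩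
  rw [← hz] at z3
  rw [← hq] at q2
  have r5 : Ow 3 2 5 (fun p => T2 p - q p) := hT5.congr fun p => by rw [hq]
  -- the square term
  have E1 : Ow 3 2 11 (fun p => T1 p ^ 2 * T2 p - a1 ^ 2 * p.1 ^ 2 * q p) := by
    have f1 : Ow 3 2 11 (fun p => (a1 ^ 2 * p.1 ^ 2) * (T2 p - q p)) :=
      ((x3.pow 2).const_mul (a1 ^ 2)).mul r5
    have f2 : Ow 3 2 3 (fun p => (T1 p - a1 * p.1) + 2 * (a1 * p.1)) :=
      (hT6.mono (by norm_num)).add ((x3.const_mul a1).const_mul 2)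
    have f3 : Ow 3 2 11 (fun p => ((T1 p - a1 * p.1) * ((T1 p - a1 * p.1) + 2 * (a1 * p.1))) * T2 p) :=
      (hT6.mul f2).mul T22
    exact (f1.add f3).congr fun p => by ring
  have E2 : Ow 3 2 11 (fun p => T2 p ^ 4 - q p ^ 4) := by
    have f1 : Ow 3 2 6 (fun p => T2 p ^ 3 + T2 p ^ 2 * q p + T2 p * q p ^ 2 + q p ^ 3) :=
      (((T22.pow 3).add ((T22.pow 2).mul q2)).add (T22.mul (q2.pow 2))).add (q2.pow 3)
    exact (r5.mul f1).congr fun p => by ring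
  have E3 : Ow 3 2 11 (fun p => T2 p ^ 5 - q p ^ 5) := by
    have f1 : Ow 3 2 8 (fun p => T2 p ^ 4 + T2 p ^ 3 * q p + T2 p ^ 2 * q p ^ 2 + T2 p * q p ^ 3
        + q p ^ 4) :=
      ((((T22.pow 4).add ((T22.pow 3).mul q2)).add ((T22.pow 2).mul (q2.pow 2))).add
        (T22.mul (q2.pow 3))).add (q2.pow 4)
    exact ((r5.mul f1).mono (by norm_num)).congr fun p => by ring
  have E4 : Ow 3 2 11 (fun p => q p ^ 4 - (d2 ^ 4 * p.2 ^ 4 + 4 * d2 ^ 3 * p.2 ^ 3 * z p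
      + 6 * d2 ^ 2 * d1 ^ 2 * p.1 ^ 2 * p.2 ^ 2)) := by
    have f1 : Ow 3 2 11 (fun p => (4 * (d2 * p.2)) * z p ^ 3) :=
      (((y2.const_mul d2).const_mul 4)).mul (z3.pow 3)
    have f2 : Ow 3 2 11 (fun p => z p ^ 4) := (z3.pow 4).mono (by norm_num)
    have f3 : Ow 3 2 11 (fun p => (6 * d2 ^ 2 * 2 * d1 * d22) * p.1 ^ 1 * p.2 ^ 4) :=
      Ow.monomial _ 1 4
    have f4 : Ow 3 2 11 (fun p => (6 * d2 ^ 2 * d22 ^ 2) * p.1 ^ 0 * p.2 ^ 6) :=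
      (Ow.monomial _ 0 6).mono (by norm_num)
    refine (((f1.add f2).add f3).add f4).congr fun p => ?_
    rw [hq, hz]; ring
  have E5 : Ow 3 2 11 (fun p => q p ^ 5 - d2 ^ 5 * p.2 ^ 5) := by
    have f1 : Ow 3 2 8 (fun p => q p ^ 4 + q p ^ 3 * (d2 * p.2) + q p ^ 2 * (d2 * p.2) ^ 2
        + q p * (d2 * p.2) ^ 3 + (d2 * p.2) ^ 4) :=
      have w := y2.const_mul d2
      ((((q2.pow 4).add ((q2.pow 3).mul w)).add ((q2.pow 2).mul (w.pow 2))).add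
        (q2.mul (w.pow 3))).add (w.pow 4)
    refine (z3.mul f1).congr fun p => ?_
    rw [hq, hz]; ring
  have E6 : Ow 3 2 11 (fun p => B (p.1, g p) -
      (b1 * p.1 + b11 * p.1 ^ 2 + b111 * p.1 ^ 3 + b2 * g p)) := hB11.comp hg8
  have E7 := hg.const_mul b2
  obtain ⟨F, hF⟩ : ∃ F : ℕ → ℝ × ℝ → ℝ, F = fun m p => match m with
    | 3 => b1 * p.1
    | 6 => b11 * p.1 ^ 2
    | 8 => (b2 - a1 ^ 2 * d2) * p.1 ^ 2 * p.2 ^ 1 + (b2 - d2 ^ 4) * p.1 ^ 0 * p.2 ^ 4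
    | 9 => (b111 - a1 ^ 2 * d1) * p.1 ^ 3 * p.2 ^ 0 + (-4 * d2 ^ 3 * d1) * p.1 ^ 1 * p.2 ^ 3
    | 10 => (-a1 ^ 2 * d22 - 6 * d2 ^ 2 * d1 ^ 2) * p.1 ^ 2 * p.2 ^ 2
        + (b2 * a - 4 * d2 ^ 3 * d22 - b * d2 ^ 5) * p.1 ^ 0 * p.2 ^ 5
    | _ => 0 := ⟨_, rfl⟩
  have hW : ∀ m, WH 3 2 m (F m) := by
    intro m
    rw [hF]
    match m with
    | 3 => simpa using WH.monomial (w1 := 3) (w2 := 2) b1 1 0 (k := 3) (by norm_num)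
    | 6 => simpa using WH.monomial (w1 := 3) (w2 := 2) b11 2 0 (k := 6) (by norm_num)
    | 8 => exact (WH.monomial _ 2 1 (by norm_num)).add (WH.monomial _ 0 4 (by norm_num))
    | 9 => exact (WH.monomial _ 3 0 (by norm_num)).add (WH.monomial _ 1 3 (by norm_num))
    | 10 => exact (WH.monomial _ 2 2 (by norm_num)).add (WH.monomial _ 0 5 (by norm_num))
    | 0 => exact WH.zero_fun
    | 1 => exact WH.zero_fun
    | 2 => exact WH.zero_fun
    | 4 => exact WH.zero_fun
    | 5 => exact WH.zero_fun
    | 7 => exact WH.zero_fun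
    | n + 11 => exact WH.zero_fun
  have hz0 := WH.peel_sum (K := 11) (by norm_num) (by norm_num) hW (by
    refine ((((((E1.add E2).add E4).add ((E3.add E5).const_mul b)).sub E6).sub E7)).congr_ev
      (by norm_num) (by norm_num) ?_
    filter_upwards [e2] with p hp
    rw [hp, hq, hz, hF]
    simp only [Finset.sum_range_succ, Finset.sum_range_zero, v0]
    ring)
  have k8a := hz0 8 (by norm_num) (0, 1)
  have k8b := hz0 8 (by norm_num) (1, 1)
  have k9a := hz0 9 (by norm_num) (1, 1)
  have k9b := hz0 9 (by norm_num) (1, -1)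
  have k10a := hz0 10 (by norm_num) (0, 1)
  have k10b := hz0 10 (by norm_num) (1, 1)
  rw [hF] at k8a k8b k9a k9b k10a k10b
  norm_num at k8a k8b k9a k9b k10a k10b
  have hd1 : d1 = 0 := by
    have : d2 ^ 3 * d1 = 0 := by linarith
    exact (mul_eq_zero.1 this).resolve_left (pow_ne_zero _ hd0)
  subst hd1
  have hd22 : d22 = 0 := by
    have : a1 ^ 2 * d22 = 0 := by linarith
    exact (mul_eq_zero.1 this).resolve_left (pow_ne_zero _ ha1)
  subst hd22
  have hfin : d2 ^ 4 * (a - b * d2) = 0 := by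
    have hb2 : b2 = d2 ^ 4 := by linarith
    rw [hb2] at k10a
    linear_combination k10a
  have := (mul_eq_zero.1 hfin).resolve_left (pow_ne_zero _ hd0)
  linarith

lemma form_ow {f : ℝ × ℝ → ℝ × ℝ} {g : ℝ × ℝ → ℝ}
    (hform : HasForm f g 5 (fun i j => if (i, j) = (2, 1) ∨ (i, j) = (0, 4) then 1 else 0)) :
    Ow 3 2 11 (fun p => g p - (v0 p + tcoeff g 0 5 * p.2 ^ 5)) := by
  obtain ⟨hg, -, h⟩ := hform
  refine (taylorG (w1 := 3) (w2 := 2) (by norm_num) (by norm_num) hg 11 6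
      (by norm_num) (by norm_num)).congr fun p => ?_
  have h' : ∀ i j, i + j < 5 →
      tcoeff g i j = if (i, j) = (2, 1) ∨ (i, j) = (0, 4) then 1 else 0 := h
  simp [Finset.sum_range_succ, h', v0]

lemma Eqv.jet {f g : ℝ × ℝ → ℝ × ℝ} (h : Eqv f g) (r : ℕ) : JetEquiv r f g := by
  obtain ⟨φ, ψ, h1, h2, h3, h4, h5, h6, h7⟩ := h.toAEquiv
  refine ⟨φ, ψ, h1, h2, h3, h4, h5, h6, fun i _ => ?_⟩
  have : (ψ ∘ f ∘ φ) =ᶠ[𝓝 0] g := h7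
  exact (this.iteratedFDeriv ℝ i).self_of_nhds

theorem stmt17 (f : ℝ × ℝ → ℝ × ℝ) (g : ℝ × ℝ → ℝ) (hf0 : f 0 = 0)
    (hform : HasForm f g 5 (fun i j => if (i, j) = (2, 1) ∨ (i, j) = (0, 4) then 1 else 0)) :
    (tcoeff g 0 5 ≠ 0 ↔
      ∃ ε : ℝ, (ε = 1 ∨ ε = -1) ∧
        AEquiv f (fun p => (p.1, p.1 ^ 2 * p.2 + p.2 ^ 4 + ε * p.2 ^ 5))) ∧
    (tcoeff g 0 5 = 0 ↔
      AEquiv f (fun p => (p.1, p.1 ^ 2 * p.2 + p.2 ^ 4))) ∧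
    (∀ c d : ℝ,
      JetEquiv 5 (fun p => (p.1, p.1 ^ 2 * p.2 + p.2 ^ 4 + c * p.1 * p.2 ^ 4 + d * p.2 ^ 5))
        (fun p => (p.1, p.1 ^ 2 * p.2 + p.2 ^ 4 + d * p.2 ^ 5))) := by
  obtain ⟨hg, hfe, h⟩ := id hform
  have hfe' : f = fun p => (p.1, g p) := funext hfe
  have ho := form_ow hform
  have hfa := eqv_fa hg ho
  rw [← hfe'] at hfa
  refine ⟨⟨fun ha => ?_, ?_⟩, ⟨fun ha => ?_, fun hA => ?_⟩, fun c d => ?_⟩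
  · refine ⟨tcoeff g 0 5 / |tcoeff g 0 5|, ?_, (hfa.trans (eqv_scale ha)).toAEquiv⟩
    rcases lt_or_gt_of_ne ha with h0 | h0
    · right; rw [abs_of_neg h0, div_neg, div_self ha]
    · left; rw [abs_of_pos h0, div_self ha]
  · rintro ⟨ε, hε, hA⟩
    have hE := hA.toEqv
    rw [hfe'] at hE
    obtain ⟨d, hd, e⟩ := converse ho hE
    rw [e]
    refine mul_ne_zero ?_ hd
    rcases hε with rfl | rfl <;> norm_num
  · have := hfa.toAEquiv
    simpa [ha] using this
  · have hE := hA.toEqv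
    rw [hfe'] at hE
    obtain ⟨d, hd, e⟩ := converse (b := 0) ho (by simpa using hE)
    simpa using e
  · refine Eqv.jet (eqv_fa (a := d) (by fun_prop) ?_) 5
    refine (Ow.monomial (w1 := 3) (w2 := 2) c 1 4).congr fun p => ?_
    simp only [v0]
    ring
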